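/- For every bounded conjugate-linear functional Y on X there exists a unique W ∈ X such that B(W,V) = ⟨Y,V⟩ for all V ∈ X; moreover there is a constant C > 0, independent of Y, such that ‖W‖_X ≤ C ‖Y‖_{X*}. (Well-posedness of the boundary integral equation for the diffraction problem.) -/

import Mathlib

noncomputable section

open MeasureTheory Complex Filter Topology
open scoped Real NNReal ContDiff

/-- The plane `ℝ²`. -/
abbrev R2 : Type := EuclideanSpace ℝ (Fin 2)

/-- Euclidean dot product on `ℝ²`. -/
def rdot (x ξ : R2) : ℝ := x 0 * ξ 0 + x 1 * ξ 1

/-- `testFT φ ξ = ∫ e^{i x·ξ} φ(x) dx`, the (inverse-type) Fourier integral of a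
test function `φ`. -/
def testFT (φ : R2 → ℂ) (ξ : R2) : ℂ :=
  ∫ x : R2, Complex.exp (Complex.I * (rdot x ξ : ℂ)) * φ x

/-- The squared `H^s(ℝ²)` norm of the distribution whose Fourier transform is `F`:
`‖f‖² = (2π)⁻² ∫ (1+|ξ|²)^s |f̂(ξ)|² dξ`. -/
def wnormSq (s : ℝ) (F : R2 → ℂ) : ℝ :=
  ((2 * π) ^ 2)⁻¹ * ∫ ξ : R2, ((1 : ℝ) + ‖ξ‖ ^ 2) ^ s * ‖F ξ‖ ^ 2

/-- The `H^s(ℝ²)` norm (Fourier-side representation). -/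
def wnorm (s : ℝ) (F : R2 → ℂ) : ℝ := Real.sqrt (wnormSq s F)

/-- `F` is the Fourier transform of an element of `H^s(ℝ²)`. -/
def MemHs (s : ℝ) (F : R2 → ℂ) : Prop :=
  AEStronglyMeasurable F (volume : Measure R2) ∧
    Integrable (fun ξ : R2 => ((1 : ℝ) + ‖ξ‖ ^ 2) ^ s * ‖F ξ‖ ^ 2) volume

/-- An element `f` of `H̃^s(Γ)`: a distribution on `ℝ²` of Sobolev regularity `s`
supported in the closure of `Γ`, represented by its Fourier transform `ft`
(a continuous function, `f` being a compactly supported distribution).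
The support condition is expressed by testing against smooth compactly supported
functions `φ` whose support avoids `closure Γ`, via the Parseval pairing
`∫ f φ dx = (2π)⁻² ∫ f̂(ξ) φ̌(ξ) dξ` with `φ̌(ξ) = ∫ e^{ix·ξ} φ(x) dx`. -/
structure HTildeElt (s : ℝ) (Γ : Set R2) where
  ft : R2 → ℂ
  cont : Continuous ft
  mem : Integrable (fun ξ : R2 => ((1 : ℝ) + ‖ξ‖ ^ 2) ^ s * ‖ft ξ‖ ^ 2) volume
  supp : ∀ φ : R2 → ℂ, ContDiff ℝ ∞ φ → HasCompactSupport φ →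
    tsupport φ ∩ closure Γ = ∅ → (∫ ξ : R2, ft ξ * testFT φ ξ) = 0

/-- `Γ` is a bounded Lipschitz domain in `ℝ²`: a nonempty bounded open set whose
boundary is locally, after a rigid motion, the graph of a Lipschitz function with
the domain on one side. -/
def IsLipschitzDomain (Γ : Set R2) : Prop :=
  IsOpen Γ ∧ Bornology.IsBounded Γ ∧ Γ.Nonempty ∧
    ∀ x ∈ frontier Γ, ∃ (e : R2 ≃ₗᵢ[ℝ] R2) (L : ℝ≥0) (f : ℝ → ℝ) (U : Set R2),
      LipschitzWith L f ∧ IsOpen U ∧ x ∈ U ∧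
        ∀ y ∈ U, (y ∈ Γ ↔ f (e y 0) < e y 1)

/-- `ξ·V̂(ξ)`, i.e. `-i` times the Fourier transform of `div V`. -/
def dotFt (F1 F2 : R2 → ℂ) (ξ : R2) : ℂ := (ξ 0 : ℂ) * F1 ξ + (ξ 1 : ℂ) * F2 ξ

/-- `ξ⊥·V̂(ξ)`, i.e. `-i` times the Fourier transform of `curl V`. -/
def curlFt (F1 F2 : R2 → ℂ) (ξ : R2) : ℂ := (ξ 1 : ℂ) * F1 ξ - (ξ 0 : ℂ) * F2 ξ

/-- An element of `X = H̃^{-1/2}_div(Γ)`: a pair of elements of `H̃^{-1/2}(Γ)`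
whose distributional divergence also belongs to `H̃^{-1/2}(Γ)`. -/
structure Xelt (Γ : Set R2) where
  c1 : HTildeElt (-(1/2) : ℝ) Γ
  c2 : HTildeElt (-(1/2) : ℝ) Γ
  divMem : Integrable (fun ξ : R2 =>
    ((1 : ℝ) + ‖ξ‖ ^ 2) ^ (-(1/2) : ℝ) * ‖dotFt c1.ft c2.ft ξ‖ ^ 2) volume

/-- The Fourier transform of `div V`. -/
def divFt {Γ : Set R2} (V : Xelt Γ) (ξ : R2) : ℂ :=
  Complex.I * dotFt V.c1.ft V.c2.ft ξ

/-- The squared `H`-norm `‖V‖²_H` of a vector field. -/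
def HnormSq {Γ : Set R2} (V : Xelt Γ) : ℝ :=
  wnormSq (-(1/2)) V.c1.ft + wnormSq (-(1/2)) V.c2.ft

/-- The squared `X`-norm `‖V‖²_X = ‖V‖²_H + ‖div V‖²_{H̃^{-1/2}}`. -/
def XnormSq {Γ : Set R2} (V : Xelt Γ) : ℝ :=
  HnormSq V + wnormSq (-(1/2)) (divFt V)

/-- The `X`-norm. -/
def Xnorm {Γ : Set R2} (V : Xelt Γ) : ℝ := Real.sqrt (XnormSq V)

/-- `ĝ₀(ξ) = i/√(k²-|ξ|²)`, with the branch `√(k²-|ξ|²) = i√(|ξ|²-k²)` for `|ξ| > k`. -/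
def g0hat (k : ℝ) (ξ : R2) : ℂ :=
  if ‖ξ‖ < k then Complex.I / ((Real.sqrt (k ^ 2 - ‖ξ‖ ^ 2) : ℝ) : ℂ)
  else 1 / ((Real.sqrt (‖ξ‖ ^ 2 - k ^ 2) : ℝ) : ℂ)

/-- The integrand of the sesquilinear form `B`:
`ĝ₀(ξ) [ (|ξ|²-k²) a₁ b̄₁ - k² a₂ b̄₂ ]` with `a₁ = ξ·Ŵ/|ξ|`, `a₂ = ξ⊥·Ŵ/|ξ|`, etc. -/
def Bintegrand (k : ℝ) (F1 F2 G1 G2 : R2 → ℂ) (ξ : R2) : ℂ :=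
  g0hat k ξ *
    (((‖ξ‖ ^ 2 - k ^ 2 : ℝ) : ℂ) * (dotFt F1 F2 ξ * starRingEnd ℂ (dotFt G1 G2 ξ)) -
      ((k ^ 2 : ℝ) : ℂ) * (curlFt F1 F2 ξ * starRingEnd ℂ (curlFt G1 G2 ξ))) /
    ((‖ξ‖ ^ 2 : ℝ) : ℂ)

/-- The sesquilinear form `B(W,V)`. -/
def Bform (k : ℝ) {Γ : Set R2} (W V : Xelt Γ) : ℂ :=
  ∫ ξ : R2, Bintegrand k W.c1.ft W.c2.ft V.c1.ft V.c2.ft ξ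

/-- The sesquilinear form `E(q,V) = B(curl⃗ q, V)`, where
`curl⃗ q = (∂q/∂x₂, -∂q/∂x₁)` has Fourier transform `(iξ₂ q̂, -iξ₁ q̂)`. -/
def Eform (k : ℝ) {Γ : Set R2} (q : HTildeElt (1/2 : ℝ) Γ) (V : Xelt Γ) : ℂ :=
  ∫ ξ : R2, Bintegrand k (fun η => Complex.I * (η 1 : ℂ) * q.ft η)
      (fun η => -(Complex.I * (η 0 : ℂ) * q.ft η)) V.c1.ft V.c2.ft ξ

/-- The inner product of the Hilbert space `X`; by the Riesz representation
theorem, every bounded conjugate-linear functional on `X` is `V ↦ Xinner Y V`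
for a unique `Y ∈ X`, with functional norm `Xnorm Y`. -/
def Xinner {Γ : Set R2} (Y V : Xelt Γ) : ℂ :=
  ((((2 * π) ^ 2)⁻¹ : ℝ) : ℂ) * ∫ ξ : R2, ((((1 : ℝ) + ‖ξ‖ ^ 2) ^ (-(1/2) : ℝ) : ℝ) : ℂ) *
    (Y.c1.ft ξ * starRingEnd ℂ (V.c1.ft ξ) + Y.c2.ft ξ * starRingEnd ℂ (V.c2.ft ξ) +
      divFt Y ξ * starRingEnd ℂ (divFt V ξ))

/-- `√(k²-|ξ|²)`, with the branch `i√(|ξ|²-k²)` for `|ξ| > k`. -/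
def rootk (k : ℝ) (ξ : R2) : ℂ :=
  if ‖ξ‖ < k then ((Real.sqrt (k ^ 2 - ‖ξ‖ ^ 2) : ℝ) : ℂ)
  else Complex.I * ((Real.sqrt (‖ξ‖ ^ 2 - k ^ 2) : ℝ) : ℂ)

/-- The Fourier multiplier `i/(2√(k²-|ξ|²))` of the Helmholtz single-layer
operator `T` with kernel `e^{ik|x-y|}/(4π|x-y|)`. -/
def mT (k : ℝ) (ξ : R2) : ℂ := Complex.I / (2 * rootk k ξ)

/-- The Fourier multiplier `1/(2|ξ|)` of the Laplace single-layer operator `T₀`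
with kernel `1/(4π|x-y|)`. -/
def mT0 (ξ : R2) : ℂ := 1 / (2 * ((‖ξ‖ : ℝ) : ℂ))

/-- The Fourier multiplier of `R = T - T₀`. -/
def mR (k : ℝ) (ξ : R2) : ℂ := mT k ξ - mT0 ξ

/-- The distributions with Fourier data `G` and `E` have the same restriction to
the open set `Γ`: `⟨G - E, φ⟩ = 0` for all smooth `φ` compactly supported in `Γ`
(pairing written on the Fourier side). -/
def AgreeOn (Γ : Set R2) (G E : R2 → ℂ) : Prop :=
  ∀ φ : R2 → ℂ, ContDiff ℝ ∞ φ → HasCompactSupport φ → tsupport φ ⊆ Γ →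
    (∫ ξ : R2, (G ξ - E ξ) * testFT φ ξ) = 0

/-- The duality pairing `⟨f, ψ⟩` between `H^{1/2}(Γ)` and `H̃^{-1/2}(Γ)`, written
on the Fourier side (Plancherel): `(2π)⁻² ∫ f̂(ξ) conj(ψ̂(ξ)) dξ`, where `G = f̂`
is the Fourier data of (an extension of) `f`. -/
def dualPair (G ψ : R2 → ℂ) : ℂ :=
  ((((2 * π) ^ 2)⁻¹ : ℝ) : ℂ) * ∫ ξ : R2, G ξ * starRingEnd ℂ (ψ ξ)

/-!
Boundedness of `B` and the Riesz representation theorem turn the equation into `A W = Y` for a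
bounded operator `A` on the Hilbert space `X`, and everything rests on a Gårding inequality.

The real part of `B(W, V)` has the right sign on the divergence part of `W` and the wrong sign on
its curl part, so one tests with a reflected field. On a bounded Lipschitz domain, a partition of
unity and Bogovskii's integral on the local cones give a bounded operator `S` on `X` with
`div S W = div W` and components of `S W` in `H̃^{1/2}`. Hence `2 S W - W` has the divergence of
`W`, while its curl part is minus that of `W` up to a term of higher regularity, and
`Re B(W, 2 S W - W)` bounds `‖W‖²` from below up to the Fourier transforms of `W` and `S W` on a
ball. Those are compact by the theorem of Arzelà and Ascoli.

If `B(W, W) = 0`, then the imaginary part of `B(W, W)`, which lives on `|ξ| < k` and has a sign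
there, forces `Ŵ` to vanish for `|ξ| < k`, hence everywhere because `Ŵ` is analytic. So `A` is
injective with dense range, and by Peetre's lemma it is bounded from below.
-/

open scoped FourierTransform BoundedContinuousFunction

/-! ### Sobolev weights and Bessel potentials -/

/-- The Sobolev weight `(1 + |ξ|²)^s` of the `H^s` norm. -/
def sobolevWeight (s : ℝ) (ξ : R2) : ℝ := (1 + ‖ξ‖ ^ 2) ^ s

lemma one_le_one_add_norm_sq (ξ : R2) : 1 ≤ 1 + ‖ξ‖ ^ 2 := by
  linarith [sq_nonneg ‖ξ‖]

lemma sobolevWeight_pos (s : ℝ) (ξ : R2) : 0 < sobolevWeight s ξ :=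
  Real.rpow_pos_of_pos (by positivity) s

lemma continuous_sobolevWeight (s : ℝ) : Continuous (sobolevWeight s) :=
  Continuous.rpow_const (by fun_prop) fun _ => Or.inl (by positivity)

lemma sobolevWeight_add (s t : ℝ) (ξ : R2) :
    sobolevWeight (s + t) ξ = sobolevWeight s ξ * sobolevWeight t ξ :=
  Real.rpow_add (by positivity) s t

lemma sobolevWeight_neg (s : ℝ) (ξ : R2) : sobolevWeight (-s) ξ = (sobolevWeight s ξ)⁻¹ :=
  Real.rpow_neg (by positivity) s

lemma sobolevWeight_natCast (n : ℕ) (ξ : R2) : sobolevWeight n ξ = (1 + ‖ξ‖ ^ 2) ^ n :=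
  Real.rpow_natCast _ n

lemma sobolevWeight_half_sq (s : ℝ) (ξ : R2) : sobolevWeight (s / 2) ξ ^ 2 = sobolevWeight s ξ := by
  rw [sq, ← sobolevWeight_add, add_halves]

lemma sobolevWeight_mono {s t : ℝ} (hst : s ≤ t) (ξ : R2) : sobolevWeight s ξ ≤ sobolevWeight t ξ :=
  Real.rpow_le_rpow_of_exponent_le (one_le_one_add_norm_sq ξ) hst

lemma sobolevWeight_zero (ξ : R2) : sobolevWeight 0 ξ = 1 := Real.rpow_zero _

lemma integrable_sobolevWeight {s : ℝ} (hs : s < -1) : Integrable (sobolevWeight s) := by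
  have h := integrable_rpow_neg_one_add_norm_sq (E := R2) (μ := volume) (r := -2 * s)
    (by rw [finrank_euclideanSpace_fin]; push_cast; linarith)
  convert h using 2 with ξ
  rw [sobolevWeight]
  ring_nf

/-- The isometry `F ↦ (2π)⁻¹ (1 + |ξ|²)^{s/2} F` from the Fourier side of `H^s` to `L²`. -/
def besselPotential (s : ℝ) (F : R2 → ℂ) (ξ : R2) : ℂ :=
  (((2 * π)⁻¹ * sobolevWeight (s / 2) ξ : ℝ) : ℂ) * F ξ

lemma norm_sq_besselPotential (s : ℝ) (F : R2 → ℂ) (ξ : R2) :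
    ‖besselPotential s F ξ‖ ^ 2 = ((2 * π) ^ 2)⁻¹ * (sobolevWeight s ξ * ‖F ξ‖ ^ 2) := by
  rw [besselPotential, norm_mul, mul_pow, Complex.norm_real, Real.norm_eq_abs, sq_abs, mul_pow,
    sobolevWeight_half_sq, inv_pow, mul_assoc]

lemma besselPotential_mul_neg (s : ℝ) (F G : R2 → ℂ) (ξ : R2) :
    besselPotential s F ξ * besselPotential (-s) G ξ =
      ((((2 * π) ^ 2)⁻¹ : ℝ) : ℂ) * (F ξ * G ξ) := by
  have hw : sobolevWeight (s / 2) ξ * sobolevWeight (-s / 2) ξ = 1 := by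
    rw [← sobolevWeight_add, show s / 2 + -s / 2 = 0 by ring, sobolevWeight_zero]
  calc besselPotential s F ξ * besselPotential (-s) G ξ
      = (((2 * π)⁻¹ ^ 2 * (sobolevWeight (s / 2) ξ * sobolevWeight (-s / 2) ξ) : ℝ) : ℂ) *
        (F ξ * G ξ) := by
        unfold besselPotential
        push_cast
        ring
    _ = _ := by rw [hw, mul_one, inv_pow]

lemma besselPotential_mul_conj (s : ℝ) (F G : R2 → ℂ) (ξ : R2) :
    besselPotential s F ξ * starRingEnd ℂ (besselPotential s G ξ) =
      ((((2 * π) ^ 2)⁻¹ : ℝ) : ℂ) * ((sobolevWeight s ξ : ℂ) * (F ξ * starRingEnd ℂ (G ξ))) := by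
  rw [← sobolevWeight_half_sq]
  simp only [besselPotential, map_mul, Complex.conj_ofReal]
  push_cast
  ring

lemma continuous_besselPotential {F : R2 → ℂ} (hF : Continuous F) (s : ℝ) :
    Continuous (besselPotential s F) := by
  have := continuous_sobolevWeight (s / 2)
  unfold besselPotential
  fun_prop

lemma aestronglyMeasurable_besselPotential {F : R2 → ℂ} (hF : AEStronglyMeasurable F) (s : ℝ) :
    AEStronglyMeasurable (besselPotential s F) :=
  ((Complex.continuous_ofReal.comp ((continuous_sobolevWeight (s / 2)).const_mul _))
    |>.aestronglyMeasurable).mul hF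

lemma integrable_norm_sq_besselPotential {s : ℝ} {F : R2 → ℂ} :
    Integrable (fun ξ => ‖besselPotential s F ξ‖ ^ 2) ↔
      Integrable fun ξ => sobolevWeight s ξ * ‖F ξ‖ ^ 2 := by
  simp only [norm_sq_besselPotential]
  exact integrable_const_mul_iff (IsUnit.mk0 _ (by positivity)) _

lemma MemHs.memLp {s : ℝ} {F : R2 → ℂ} (hF : MemHs s F) : MemLp (besselPotential s F) 2 :=
  (memLp_two_iff_integrable_sq_norm (aestronglyMeasurable_besselPotential hF.1 s)).2
    (integrable_norm_sq_besselPotential.2 hF.2)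

lemma memHs_of_memLp {s : ℝ} {F : R2 → ℂ} (hm : AEStronglyMeasurable F)
    (hF : MemLp (besselPotential s F) 2) : MemHs s F :=
  ⟨hm, integrable_norm_sq_besselPotential.1
    ((memLp_two_iff_integrable_sq_norm hF.1).1 hF)⟩

lemma wnormSq_eq_integral_besselPotential (s : ℝ) (F : R2 → ℂ) :
    wnormSq s F = ∫ ξ, ‖besselPotential s F ξ‖ ^ 2 := by
  simp only [norm_sq_besselPotential, integral_const_mul]
  rfl

lemma wnormSq_nonneg (s : ℝ) (F : R2 → ℂ) : 0 ≤ wnormSq s F := by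
  rw [wnormSq_eq_integral_besselPotential]
  positivity

lemma wnorm_sq (s : ℝ) (F : R2 → ℂ) : wnorm s F ^ 2 = wnormSq s F :=
  Real.sq_sqrt (wnormSq_nonneg s F)

lemma wnorm_nonneg (s : ℝ) (F : R2 → ℂ) : 0 ≤ wnorm s F := Real.sqrt_nonneg _

lemma MemHs.integrable_mul {s : ℝ} {F G : R2 → ℂ} (hF : MemHs s F) (hG : MemHs (-s) G) :
    Integrable fun ξ => F ξ * G ξ := by
  have h : Integrable fun ξ => besselPotential s F ξ * besselPotential (-s) G ξ :=
    hF.memLp.integrable_mul hG.memLp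
  simp only [besselPotential_mul_neg] at h
  exact (integrable_const_mul_iff (IsUnit.mk0 _ (by simp)) _).1 h

lemma MemHs.integral_norm_mul_le {s : ℝ} {F G : R2 → ℂ} (hF : MemHs s F) (hG : MemHs (-s) G) :
    ∫ ξ, ‖F ξ * G ξ‖ ≤ (2 * π) ^ 2 * (wnorm s F * wnorm (-s) G) := by
  have hpair (ξ : R2) : ‖F ξ * G ξ‖ =
      (2 * π) ^ 2 * (‖besselPotential s F ξ‖ * ‖besselPotential (-s) G ξ‖) := by
    rw [← norm_mul, besselPotential_mul_neg, norm_mul (ofReal _), Complex.norm_real,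
      Real.norm_of_nonneg (by positivity), mul_inv_cancel_left₀ (by positivity)]
  simp only [hpair, integral_const_mul]
  refine mul_le_mul_of_nonneg_left ?_ (by positivity)
  have hholder := integral_mul_norm_le_Lp_mul_Lq (μ := volume) Real.HolderConjugate.two_two
    (f := besselPotential s F) (g := besselPotential (-s) G)
    (by simpa using hF.memLp) (by simpa using hG.memLp)
  simpa only [wnorm, wnormSq_eq_integral_besselPotential, Real.sqrt_eq_rpow, Real.rpow_two]
    using hholder

lemma rdot_eq_inner (x ξ : R2) : rdot x ξ = inner ℝ x ξ := by
  simp [rdot, PiLp.inner_apply, Fin.sum_univ_two, mul_comm]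

lemma abs_rdot_le (x ξ : R2) : |rdot x ξ| ≤ ‖x‖ * ‖ξ‖ := by
  rw [rdot_eq_inner]
  exact abs_real_inner_le_norm x ξ

lemma rdot_comm (x ξ : R2) : rdot x ξ = rdot ξ x := by
  simp only [rdot, mul_comm]

lemma rdot_sub (x ξ η : R2) : rdot x (ξ - η) = rdot x ξ - rdot x η := by
  simp only [rdot_eq_inner, inner_sub_right]

lemma rdot_add_left (x y ξ : R2) : rdot (x + y) ξ = rdot x ξ + rdot y ξ := by
  simp only [rdot_eq_inner, inner_add_left]

lemma rdot_smul (x ξ : R2) (t : ℝ) : rdot x (t • ξ) = t * rdot x ξ := by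
  simp only [rdot_eq_inner, inner_smul_right]

lemma continuous_rdot : Continuous fun p : R2 × R2 => rdot p.1 p.2 := by
  unfold rdot
  fun_prop

lemma continuous_rdot_right (x : R2) : Continuous (rdot x) := by
  unfold rdot
  fun_prop

lemma continuous_rdot_left (ξ : R2) : Continuous fun x => rdot x ξ := by
  unfold rdot
  fun_prop

lemma norm_exp_I_mul_rdot (x ξ : R2) : ‖exp (I * (rdot x ξ : ℂ))‖ = 1 :=
  norm_exp_I_mul_ofReal _

lemma norm_exp_I_mul_rdot_sub_le (x ξ η : R2) :
    ‖exp (I * (rdot x ξ : ℂ)) - exp (I * (rdot x η : ℂ))‖ ≤ ‖x‖ * ‖ξ - η‖ := by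
  have hfactor : exp (I * (rdot x ξ : ℂ)) - exp (I * (rdot x η : ℂ)) =
      exp (I * (rdot x η : ℂ)) * (exp (I * (rdot x (ξ - η) : ℂ)) - 1) := by
    rw [mul_sub, ← exp_add, mul_one, rdot_sub]
    push_cast
    ring_nf
  rw [hfactor, norm_mul, norm_exp_I_mul_rdot, one_mul]
  exact Real.norm_exp_I_mul_ofReal_sub_one_le.trans (abs_rdot_le _ _)

lemma integrable_exp_mul {φ : R2 → ℂ} (hφ : Integrable φ) (ξ : R2) :
    Integrable fun x => exp (I * (rdot x ξ : ℂ)) * φ x := by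
  have := continuous_rdot_left ξ
  exact hφ.bdd_mul (c := 1) (Continuous.aestronglyMeasurable (by fun_prop))
    (Eventually.of_forall fun x => (norm_exp_I_mul_rdot x ξ).le)

lemma continuous_testFT {φ : R2 → ℂ} (hφ : Integrable φ) : Continuous (testFT φ) := by
  refine continuous_of_dominated (bound := fun x => ‖φ x‖)
    (fun ξ => (integrable_exp_mul hφ ξ).1) (fun ξ => Eventually.of_forall fun x => ?_) hφ.norm
    (Eventually.of_forall fun x => ?_)
  · rw [norm_mul, norm_exp_I_mul_rdot, one_mul]
  · have := continuous_rdot_right x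
    fun_prop

lemma norm_testFT_le (φ : R2 → ℂ) (ξ : R2) : ‖testFT φ ξ‖ ≤ ∫ x, ‖φ x‖ := by
  refine (norm_integral_le_integral_norm _).trans_eq (integral_congr_ae (Eventually.of_forall ?_))
  intro x
  simp only [norm_mul, norm_exp_I_mul_rdot, one_mul]

lemma testFT_zero (φ : R2 → ℂ) : testFT φ 0 = ∫ x, φ x := by
  simp [testFT, rdot]

lemma testFT_translate (φ : R2 → ℂ) (x ξ : R2) :
    testFT (fun y => φ (y - x)) ξ = exp (I * (rdot x ξ : ℂ)) * testFT φ ξ := by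
  unfold testFT
  rw [← integral_const_mul, ← integral_add_right_eq_self _ x]
  congr 1
  ext y
  beta_reduce
  rw [add_sub_cancel_right, ← mul_assoc, ← exp_add, rdot_add_left]
  push_cast
  ring_nf

lemma testFT_sub {φ ψ : R2 → ℂ} (hφ : Integrable φ) (hψ : Integrable ψ) (ξ : R2) :
    testFT (fun x => φ x - ψ x) ξ = testFT φ ξ - testFT ψ ξ := by
  unfold testFT
  rw [← integral_sub (integrable_exp_mul hφ ξ) (integrable_exp_mul hψ ξ)]
  simp only [mul_sub]

lemma testFT_finset_sum {ι : Type*} (s : Finset ι) {φ : ι → R2 → ℂ}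
    (hφ : ∀ i ∈ s, Integrable (φ i)) (ξ : R2) :
    testFT (fun x => ∑ i ∈ s, φ i x) ξ = ∑ i ∈ s, testFT (φ i) ξ := by
  unfold testFT
  simp only [Finset.mul_sum]
  exact integral_finsetSum s fun i hi => integrable_exp_mul (hφ i hi) ξ

lemma norm_testFT_sub_le {φ : R2 → ℂ} (hφ : Integrable φ) {r : ℝ}
    (hr : ∀ x, r < ‖x‖ → φ x = 0) (ξ η : R2) :
    ‖testFT φ ξ - testFT φ η‖ ≤ r * (∫ x, ‖φ x‖) * ‖ξ - η‖ := by
  have hbound : r * (∫ x, ‖φ x‖) * ‖ξ - η‖ = ∫ x, r * ‖ξ - η‖ * ‖φ x‖ := by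
    rw [integral_const_mul]
    ring
  unfold testFT
  rw [← integral_sub (integrable_exp_mul hφ ξ) (integrable_exp_mul hφ η), hbound]
  refine norm_integral_le_of_norm_le (hφ.norm.const_mul _) (Eventually.of_forall fun x => ?_)
  rw [← sub_mul, norm_mul]
  rcases lt_or_ge r ‖x‖ with hx | hx
  · simp [hr x hx]
  · gcongr
    exact (norm_exp_I_mul_rdot_sub_le x ξ η).trans (by gcongr)

lemma testFT_eq_fourier (φ : R2 → ℂ) (ξ : R2) : testFT φ ξ = 𝓕 φ (-((2 * π)⁻¹ • ξ)) := by
  rw [Real.fourier_eq', testFT]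
  congr 1
  ext x
  rw [smul_eq_mul, rdot_eq_inner, inner_neg_right, inner_smul_right]
  congr 2
  push_cast
  field_simp

lemma fourier_eq_testFT (φ : R2 → ℂ) (y : R2) : 𝓕 φ y = testFT φ (-((2 * π) • y)) := by
  rw [testFT_eq_fourier, smul_neg, neg_neg, smul_smul, inv_mul_cancel₀ (by positivity), one_smul]

lemma fourierInv_eq_testFT (φ : R2 → ℂ) (y : R2) : 𝓕⁻ φ y = testFT φ ((2 * π) • y) := by
  rw [Real.fourierInv_eq_fourier_neg, fourier_eq_testFT, smul_neg, neg_neg]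

/-- Smooth compactly supported functions on the plane, against which distributions are tested. -/
def IsTestFunction (φ : R2 → ℂ) : Prop := ContDiff ℝ ∞ φ ∧ HasCompactSupport φ

namespace IsTestFunction

variable {φ ψ : R2 → ℂ}

lemma integrable (hφ : IsTestFunction φ) : Integrable φ :=
  hφ.1.continuous.integrable_of_hasCompactSupport hφ.2

lemma mul (hφ : IsTestFunction φ) (hψ : IsTestFunction ψ) : IsTestFunction fun x => φ x * ψ x :=
  ⟨hφ.1.mul hψ.1, hψ.2.mul_left⟩

lemma sub (hφ : IsTestFunction φ) (hψ : IsTestFunction ψ) : IsTestFunction fun x => φ x - ψ x :=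
  ⟨hφ.1.sub hψ.1, hφ.2.sub hψ.2⟩

lemma translate (hφ : IsTestFunction φ) (x : R2) : IsTestFunction fun y => φ (y - x) :=
  ⟨hφ.1.comp (by fun_prop), hφ.2.comp_homeomorph (Homeomorph.subRight x)⟩

end IsTestFunction

lemma sub_mem_tsupport {φ : R2 → ℂ} {x y : R2} (hy : y ∈ tsupport fun y => φ (y - x)) :
    y - x ∈ tsupport φ :=
  tsupport_comp_subset_preimage φ (f := fun y => y - x) (by fun_prop) hy

/-- Continuous functions decaying faster than every power of `|ξ|`; transforms of test functions
are the main example. -/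
def RapidlyDecreasing (m : R2 → ℂ) : Prop :=
  Continuous m ∧ ∀ r : ℝ, ∃ C, ∀ ζ, ‖m ζ‖ ≤ C * sobolevWeight (-r) ζ

lemma exists_one_add_norm_sq_pow_mul_norm_testFT_le {φ : R2 → ℂ} (hφ : IsTestFunction φ) (n : ℕ) :
    ∃ C, ∀ ξ, (1 + ‖ξ‖ ^ 2) ^ n * ‖testFT φ ξ‖ ≤ C := by
  let f := 𝓕 (hφ.2.toSchwartzMap hφ.1)
  have hf (ξ : R2) : f (-((2 * π)⁻¹ • ξ)) = testFT φ ξ := (testFT_eq_fourier φ ξ).symm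
  have hdecay := SchwartzMap.one_add_le_sup_seminorm_apply (𝕜 := ℝ) (m := (2 * n, 0)) (k := 2 * n)
    (n := 0) le_rfl le_rfl f
  refine ⟨(2 * π) ^ (2 * n) * (2 ^ (2 * n) * ((Finset.Iic (2 * n, 0)).sup fun m ↦
    SchwartzMap.seminorm ℝ m.1 m.2) f), fun ξ => ?_⟩
  have hscale : (1 + ‖ξ‖ ^ 2) ^ n ≤ (2 * π) ^ (2 * n) * (1 + ‖-((2 * π)⁻¹ • ξ)‖) ^ (2 * n) := by
    have hnorm : 2 * π * (1 + ‖-((2 * π)⁻¹ • ξ)‖) = 2 * π + ‖ξ‖ := by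
      rw [norm_neg, norm_smul, Real.norm_of_nonneg (by positivity)]
      field_simp
    rw [← mul_pow, pow_mul, hnorm]
    gcongr
    nlinarith [norm_nonneg ξ, Real.pi_gt_three]
  calc (1 + ‖ξ‖ ^ 2) ^ n * ‖testFT φ ξ‖
      ≤ (2 * π) ^ (2 * n) * (1 + ‖-((2 * π)⁻¹ • ξ)‖) ^ (2 * n) * ‖testFT φ ξ‖ := by gcongr
    _ = (2 * π) ^ (2 * n) * ((1 + ‖-((2 * π)⁻¹ • ξ)‖) ^ (2 * n) * ‖testFT φ ξ‖) := by ring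
    _ ≤ _ := by
      refine mul_le_mul_of_nonneg_left ?_ (by positivity)
      simpa only [norm_iteratedFDeriv_zero, hf] using hdecay (-((2 * π)⁻¹ • ξ))

lemma IsTestFunction.rapidlyDecreasing_testFT {φ : R2 → ℂ} (hφ : IsTestFunction φ) :
    RapidlyDecreasing (testFT φ) := by
  refine ⟨continuous_testFT hφ.integrable, fun r => ?_⟩
  obtain ⟨n, hn⟩ := exists_nat_ge r
  obtain ⟨C, hC⟩ := exists_one_add_norm_sq_pow_mul_norm_testFT_le hφ n
  refine ⟨C, fun ξ => ?_⟩
  rw [sobolevWeight_neg, le_mul_inv_iff₀ (sobolevWeight_pos r ξ), mul_comm]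
  refine le_trans ?_ (hC ξ)
  gcongr
  exact (sobolevWeight_mono hn ξ).trans_eq (sobolevWeight_natCast n ξ)

lemma sobolevWeight_le_mul_sobolevWeight_sub {r : ℝ} (hr : 0 ≤ r) (ξ η : R2) :
    sobolevWeight r η ≤ 2 ^ r * sobolevWeight r ξ * sobolevWeight r (η - ξ) := by
  have hbase : 1 + ‖η‖ ^ 2 ≤ 2 * (1 + ‖ξ‖ ^ 2) * (1 + ‖η - ξ‖ ^ 2) := by
    have htri : ‖η‖ ^ 2 ≤ (‖ξ‖ + ‖η - ξ‖) ^ 2 := by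
      gcongr
      exact norm_le_norm_add_norm_sub' η ξ
    nlinarith [sq_nonneg (‖ξ‖ - ‖η - ξ‖), sq_nonneg (‖ξ‖ * ‖η - ξ‖)]
  unfold sobolevWeight
  rw [← Real.mul_rpow (by positivity) (by positivity), ← Real.mul_rpow (by positivity)
    (by positivity)]
  gcongr

lemma sobolevWeight_neg_sub_le {r : ℝ} (hr : 0 ≤ r) (ξ η : R2) :
    sobolevWeight (-r) (η - ξ) ≤ 2 ^ r * sobolevWeight r ξ * sobolevWeight (-r) η := by
  rw [sobolevWeight_neg, sobolevWeight_neg, ← div_eq_mul_inv, le_div_iff₀ (sobolevWeight_pos r η),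
    inv_mul_le_iff₀ (sobolevWeight_pos r _), mul_comm]
  exact sobolevWeight_le_mul_sobolevWeight_sub hr ξ η

namespace RapidlyDecreasing

variable {m : R2 → ℂ}

lemma memHs (hm : RapidlyDecreasing m) (s : ℝ) : MemHs s m := by
  have hc := hm.1
  have hw := continuous_sobolevWeight s
  obtain ⟨C, hC⟩ := hm.2 (s / 2 + 1)
  refine ⟨hc.aestronglyMeasurable, ((integrable_sobolevWeight (s := -2) (by norm_num)).const_mul
    (C ^ 2)).mono' (Continuous.aestronglyMeasurable (hw.mul (by fun_prop)))
    (Eventually.of_forall fun ξ => ?_)⟩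
  have hpow : sobolevWeight s ξ * sobolevWeight (-(s / 2 + 1)) ξ ^ 2 = sobolevWeight (-2) ξ := by
    rw [sq, ← sobolevWeight_add, ← sobolevWeight_add]
    ring_nf
  have hs := sobolevWeight_pos s ξ
  change ‖sobolevWeight s ξ * ‖m ξ‖ ^ 2‖ ≤ _
  rw [Real.norm_of_nonneg (by positivity)]
  calc sobolevWeight s ξ * ‖m ξ‖ ^ 2
      ≤ sobolevWeight s ξ * (C * sobolevWeight (-(s / 2 + 1)) ξ) ^ 2 := by gcongr; exact hC ξ
    _ = C ^ 2 * sobolevWeight (-2) ξ := by rw [← hpow]; ring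

lemma integrable_sobolevWeight_mul_norm (hm : RapidlyDecreasing m) (s : ℝ) :
    Integrable fun ξ => sobolevWeight s ξ * ‖m ξ‖ := by
  have hc := hm.1
  have hw := continuous_sobolevWeight s
  obtain ⟨C, hC⟩ := hm.2 (s + 2)
  refine ((integrable_sobolevWeight (s := -2) (by norm_num)).const_mul C).mono'
    (Continuous.aestronglyMeasurable (by fun_prop)) (Eventually.of_forall fun ξ => ?_)
  have hs := sobolevWeight_pos s ξ
  rw [Real.norm_of_nonneg (by positivity)]
  calc sobolevWeight s ξ * ‖m ξ‖
      ≤ sobolevWeight s ξ * (C * sobolevWeight (-(s + 2)) ξ) := by gcongr; exact hC ξ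
    _ = C * (sobolevWeight s ξ * sobolevWeight (-(s + 2)) ξ) := by ring
    _ = C * sobolevWeight (-2) ξ := by rw [← sobolevWeight_add]; ring_nf

lemma integrable (hm : RapidlyDecreasing m) : Integrable m := by
  rw [← integrable_norm_iff hm.1.aestronglyMeasurable]
  simpa only [sobolevWeight_zero, one_mul] using hm.integrable_sobolevWeight_mul_norm 0

lemma translate (hm : RapidlyDecreasing m) (ξ : R2) : RapidlyDecreasing fun η => m (η - ξ) := by
  refine ⟨hm.1.comp (by fun_prop), fun r => ?_⟩
  obtain ⟨C, hC⟩ := hm.2 |r|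
  have hC0 : 0 ≤ C := nonneg_of_mul_nonneg_left ((norm_nonneg _).trans (hC 0))
    (sobolevWeight_pos _ _)
  refine ⟨C * (2 ^ |r| * sobolevWeight |r| ξ), fun η => (hC (η - ξ)).trans ?_⟩
  have hξ := sobolevWeight_pos |r| ξ
  calc C * sobolevWeight (-|r|) (η - ξ)
      ≤ C * (2 ^ |r| * sobolevWeight |r| ξ * sobolevWeight (-|r|) η) := by
        gcongr
        exact sobolevWeight_neg_sub_le (abs_nonneg r) ξ η
    _ ≤ C * (2 ^ |r| * sobolevWeight |r| ξ * sobolevWeight (-r) η) := by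
        gcongr
        exact sobolevWeight_mono (neg_le_neg (le_abs_self r)) η
    _ = _ := by ring

lemma coord_mul (hm : RapidlyDecreasing m) (i : Fin 2) :
    RapidlyDecreasing fun ξ => (ξ i : ℂ) * m ξ := by
  have hc := hm.1
  refine ⟨by fun_prop, fun r => ?_⟩
  obtain ⟨C, hC⟩ := hm.2 (r + 1)
  refine ⟨C, fun ξ => ?_⟩
  have hcoord : ‖(ξ i : ℂ)‖ ≤ sobolevWeight 1 ξ := by
    have h := PiLp.norm_apply_le ξ i
    rw [Complex.norm_real, sobolevWeight, Real.rpow_one]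
    nlinarith [sq_nonneg (‖ξ‖ - 1), norm_nonneg ξ]
  have hw := sobolevWeight_pos 1 ξ
  calc ‖(ξ i : ℂ) * m ξ‖ ≤ sobolevWeight 1 ξ * (C * sobolevWeight (-(r + 1)) ξ) := by
        rw [norm_mul]
        gcongr
        exact hC ξ
    _ = C * (sobolevWeight 1 ξ * sobolevWeight (-(r + 1)) ξ) := by ring
    _ = C * sobolevWeight (-r) ξ := by rw [← sobolevWeight_add]; ring_nf

end RapidlyDecreasing

lemma IsTestFunction.fourierInversion {φ : R2 → ℂ} (hφ : IsTestFunction φ) (x : R2) :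
    ((((2 * π) ^ 2)⁻¹ : ℝ) : ℂ) * ∫ ξ, exp (-(I * (rdot x ξ : ℂ))) * testFT φ ξ = φ x := by
  have hfourier : Integrable (𝓕 φ) := by
    have heq : 𝓕 φ = fun y => testFT φ (-((2 * π) • y)) := funext (fourier_eq_testFT φ)
    rw [heq]
    exact hφ.rapidlyDecreasing_testFT.integrable.comp_neg.comp_smul (R := 2 * π) (by positivity)
  have hscale (y : R2) : exp (↑(-2 * π * inner ℝ y x) * I) • 𝓕⁻ φ y =
      (fun ξ => exp (-(I * (rdot x ξ : ℂ))) * testFT φ ξ) ((2 * π) • y) := by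
    rw [fourierInv_eq_testFT, smul_eq_mul]
    beta_reduce
    rw [rdot_smul, rdot_comm, rdot_eq_inner]
    congr 2
    push_cast
    ring
  rw [← congrFun (Continuous.fourier_fourierInv_eq hφ.1.continuous hφ.integrable hfourier) x,
    Real.fourier_eq', integral_congr_ae (Eventually.of_forall hscale),
    Measure.integral_comp_smul volume (fun ξ => exp (-(I * (rdot x ξ : ℂ))) * testFT φ ξ) (2 * π),
    abs_of_nonneg (by positivity)]
  simp

/-! ### Compactly supported distributions -/

/-- The distribution with Fourier transform `F` is supported in `K`, expressed through the Parseval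
pairing with test functions as in `HTildeElt.supp`. -/
def FTSupportedIn (F : R2 → ℂ) (K : Set R2) : Prop :=
  ∀ φ : R2 → ℂ, IsTestFunction φ → tsupport φ ∩ K = ∅ → ∫ ξ, F ξ * testFT φ ξ = 0

lemma FTSupportedIn.mono {F : R2 → ℂ} {K L : Set R2} (hF : FTSupportedIn F K) (hKL : K ⊆ L) :
    FTSupportedIn F L := fun φ hφ hL =>
  hF φ hφ (Set.subset_empty_iff.1 ((Set.inter_subset_inter_right _ hKL).trans hL.subset))

lemma MemHs.integrable_mul_testFT {s : ℝ} {F φ : R2 → ℂ} (hF : MemHs s F) (hφ : IsTestFunction φ) :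
    Integrable fun ξ => F ξ * testFT φ ξ :=
  hF.integrable_mul (hφ.rapidlyDecreasing_testFT.memHs _)

lemma exists_testFunction_in_closedBall (θ : R2) {δ : ℝ} (hδ : 0 < δ) :
    ∃ φ : R2 → ℂ, IsTestFunction φ ∧ tsupport φ ⊆ Metric.closedBall θ δ ∧
      ∫ x, φ x = 1 ∧ ∫ x, ‖φ x‖ = 1 := by
  let b : ContDiffBump θ := ⟨δ / 2, δ, half_pos hδ, half_lt_self hδ⟩
  refine ⟨fun x => (b.normed volume x : ℂ), ⟨Complex.ofRealCLM.contDiff.comp b.contDiff_normed,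
    b.hasCompactSupport_normed.comp_left (g := fun r : ℝ => (r : ℂ)) Complex.ofReal_zero⟩,
    ?_, ?_, ?_⟩
  · refine (closure_mono ?_).trans (b.tsupport_normed_eq (μ := volume)).le
    exact fun x hx hx0 => hx (congrArg Complex.ofReal hx0)
  · exact integral_complex_ofReal.trans (congrArg Complex.ofReal b.integral_normed)
  · simp only [Complex.norm_real, Real.norm_of_nonneg (b.nonneg_normed _), b.integral_normed]

lemma eq_zero_of_tsupport_subset_closedBall {φ : R2 → ℂ} {r : ℝ}
    (hφ : tsupport φ ⊆ Metric.closedBall 0 r) (x : R2) (hx : r < ‖x‖) : φ x = 0 := by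
  by_contra hne
  exact hx.not_ge (mem_closedBall_zero_iff.1 (hφ (subset_tsupport φ hne)))

lemma exists_testFunction_half_le_norm_testFT (R : ℝ) : ∃ φ : R2 → ℂ, IsTestFunction φ ∧
    tsupport φ ⊆ Metric.closedBall 0 1 ∧ ∀ ξ, ‖ξ‖ ≤ R → 1 / 2 ≤ ‖testFT φ ξ‖ := by
  obtain ⟨φ, hφ, hsupp, hint, hnorm⟩ :=
    exists_testFunction_in_closedBall 0 (δ := 1 / (2 * (|R| + 1))) (by positivity)
  have hδ : 1 / (2 * (|R| + 1)) ≤ 1 := by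
    rw [div_le_one (by positivity)]
    linarith [abs_nonneg R]
  refine ⟨φ, hφ, hsupp.trans (Metric.closedBall_subset_closedBall hδ), fun ξ hξ => ?_⟩
  have hclose : ‖testFT φ ξ - 1‖ ≤ 1 / 2 := by
    have hlip := norm_testFT_sub_le hφ.integrable (eq_zero_of_tsupport_subset_closedBall hsupp) ξ 0
    rw [testFT_zero, hint, hnorm, sub_zero, mul_one] at hlip
    refine hlip.trans ?_
    rw [div_mul_eq_mul_div, one_mul, div_le_div_iff₀ (by positivity) (by positivity)]
    linarith [le_abs_self R]
  have htri := norm_sub_norm_le (1 : ℂ) (1 - testFT φ ξ)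
  rw [sub_sub_cancel, norm_one, norm_sub_rev] at htri
  linarith

lemma FTSupportedIn.testFT_mul_eq_zero {F j : R2 → ℂ} {K : Set R2} (hF : FTSupportedIn F K)
    (hj : IsTestFunction j) {x : R2} (hx : ∀ y ∈ K, y - x ∉ tsupport j) :
    testFT (fun ξ => F ξ * testFT j ξ) x = 0 := by
  have hzero := hF _ (hj.translate x) (Set.eq_empty_iff_forall_notMem.2 fun y hy =>
    hx y hy.2 (sub_mem_tsupport hy.1))
  rw [← hzero]
  refine integral_congr_ae (Eventually.of_forall fun ξ => ?_)
  beta_reduce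
  rw [testFT_translate, rdot_comm]
  ring

lemma integral_norm_le_of_eq_zero_outside_ball {U : R2 → ℂ} (hU : Continuous U) {ρ A : ℝ}
    (hsupp : ∀ y, ρ < ‖y‖ → U y = 0) (hA : ∀ y, ‖U y‖ ≤ A) :
    Integrable U ∧ ∫ y, ‖U y‖ ≤ A * volume.real (Metric.closedBall (0 : R2) ρ) := by
  have houtside (y : R2) (hy : y ∉ Metric.closedBall (0 : R2) ρ) : U y = 0 :=
    hsupp y (not_le.1 (mt mem_closedBall_zero_iff.2 hy))
  have hint : Integrable U := hU.integrable_of_hasCompactSupport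
    (HasCompactSupport.intro (isCompact_closedBall 0 ρ) houtside)
  refine ⟨hint, ?_⟩
  rw [← setIntegral_eq_integral_of_forall_compl_eq_zero fun y hy => by
    rw [houtside y hy, norm_zero]]
  refine (setIntegral_mono hint.norm.integrableOn
    (integrableOn_const measure_closedBall_lt_top.ne) hA).trans_eq ?_
  rw [setIntegral_const, smul_eq_mul, mul_comm]

/-- `F * testFT j` is the transform of a mollification, hence of an honest function. -/
lemma FTSupportedIn.exists_mul_testFT_eq_testFT {F j : R2 → ℂ} {r : ℝ} (hr : 0 ≤ r)
    (hF : FTSupportedIn F (Metric.closedBall 0 r)) (hFc : Continuous F) (hj : IsTestFunction j)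
    (hjsupp : tsupport j ⊆ Metric.closedBall 0 1) (hint : Integrable fun ξ => F ξ * testFT j ξ) :
    ∃ U : R2 → ℂ, Integrable U ∧ (∀ y, r + 1 < ‖y‖ → U y = 0) ∧
      ∫ y, ‖U y‖ ≤ (∫ ξ, ‖F ξ * testFT j ξ‖) * volume.real (Metric.closedBall (0 : R2) (r + 1)) ∧
      ∀ ξ, F ξ * testFT j ξ = testFT U ((2 * π) • ξ) := by
  set M : R2 → ℂ := fun ξ => F ξ * testFT j ξ
  have houtside (y : R2) (hy : r + 1 < ‖y‖) : 𝓕 M y = 0 := by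
    rw [fourier_eq_testFT]
    refine hF.testFT_mul_eq_zero hj fun z hz hzj => ?_
    have hzj := mem_closedBall_zero_iff.1 (hjsupp hzj)
    have hz := mem_closedBall_zero_iff.1 hz
    have htri := norm_sub_le (z - -((2 * π) • y)) z
    rw [sub_neg_eq_add, add_sub_cancel_left, norm_smul, Real.norm_of_nonneg (by positivity)] at htri
    rw [sub_neg_eq_add] at hzj
    nlinarith [Real.pi_gt_three]
  have hcont : Continuous (𝓕 M) := by
    rw [funext (fourier_eq_testFT M)]
    exact (continuous_testFT hint).comp (by fun_prop)
  have hbound (y : R2) : ‖𝓕 M y‖ ≤ ∫ ξ, ‖M ξ‖ := by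
    rw [fourier_eq_testFT]
    exact norm_testFT_le _ _
  obtain ⟨hUint, hUnorm⟩ := integral_norm_le_of_eq_zero_outside_ball hcont houtside hbound
  refine ⟨𝓕 M, hUint, houtside, hUnorm, fun ξ => ?_⟩
  rw [← fourierInv_eq_testFT, Continuous.fourierInv_fourier_eq _ hint hUint]
  exact hFc.mul (continuous_testFT hj.integrable)

lemma exists_norm_mul_testFT_le {K : Set R2} (hK : Bornology.IsBounded K) (s : ℝ) {j : R2 → ℂ}
    (hj : IsTestFunction j) (hjsupp : tsupport j ⊆ Metric.closedBall 0 1) :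
    ∃ C, 0 ≤ C ∧ ∀ F, Continuous F → MemHs s F → FTSupportedIn F K →
      (∀ ξ, ‖F ξ * testFT j ξ‖ ≤ C * wnorm s F) ∧
      ∀ ξ η, ‖F ξ * testFT j ξ - F η * testFT j η‖ ≤ C * wnorm s F * ‖ξ - η‖ := by
  obtain ⟨r, hr, hKr⟩ := hK.subset_closedBall_lt 0 0
  set v := volume.real (Metric.closedBall (0 : R2) (r + 1))
  set c := (2 * π) ^ 2 * wnorm (-s) (testFT j) * v
  have hc : 0 ≤ c := mul_nonneg (mul_nonneg (sq_nonneg _) (wnorm_nonneg _ _)) measureReal_nonneg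
  have hscale : 1 ≤ (r + 1) * (2 * π) := by nlinarith [Real.pi_gt_three]
  refine ⟨(r + 1) * (2 * π) * c, by positivity, fun F hFc hF hFK => ?_⟩
  obtain ⟨U, hU, hUsupp, hUnorm, hFU⟩ := (hFK.mono hKr).exists_mul_testFT_eq_testFT hr.le hFc hj
    hjsupp (hF.integrable_mul_testFT hj)
  have hn := wnorm_nonneg s F
  have hUc : ∫ y, ‖U y‖ ≤ c * wnorm s F := by
    calc ∫ y, ‖U y‖ ≤ (∫ ξ, ‖F ξ * testFT j ξ‖) * v := hUnorm
      _ ≤ (2 * π) ^ 2 * (wnorm s F * wnorm (-s) (testFT j)) * v := by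
        gcongr
        exact hF.integral_norm_mul_le (hj.rapidlyDecreasing_testFT.memHs _)
      _ = c * wnorm s F := by ring
  refine ⟨fun ξ => ?_, fun ξ η => ?_⟩
  · rw [hFU]
    refine (norm_testFT_le _ _).trans (hUc.trans ?_)
    gcongr
    exact le_mul_of_one_le_left hc hscale
  · rw [hFU, hFU]
    refine (norm_testFT_sub_le hU hUsupp _ _).trans ?_
    rw [← smul_sub, norm_smul, Real.norm_of_nonneg (by positivity)]
    calc (r + 1) * (∫ y, ‖U y‖) * (2 * π * ‖ξ - η‖)
        ≤ (r + 1) * (c * wnorm s F) * (2 * π * ‖ξ - η‖) := by gcongr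
      _ = _ := by ring

lemma exists_norm_le_mul_wnorm {K : Set R2} (hK : Bornology.IsBounded K) (s R : ℝ) :
    ∃ C, 0 ≤ C ∧ ∀ F, Continuous F → MemHs s F → FTSupportedIn F K →
      (∀ ξ, ‖ξ‖ ≤ R → ‖F ξ‖ ≤ C * wnorm s F) ∧
      ∀ ξ η, ‖ξ‖ ≤ R → ‖η‖ ≤ R → ‖F ξ - F η‖ ≤ C * wnorm s F * ‖ξ - η‖ := by
  obtain ⟨j, hj, hjsupp, hjR⟩ := exists_testFunction_half_le_norm_testFT R
  obtain ⟨c, hc, hbound⟩ := exists_norm_mul_testFT_le hK s hj hjsupp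
  set J := ∫ x, ‖j x‖
  have hJ : 0 ≤ J := integral_nonneg fun _ => norm_nonneg _
  refine ⟨2 * c + 4 * c * J, by positivity, fun F hFc hF hFK => ?_⟩
  obtain ⟨hval, hlip⟩ := hbound F hFc hF hFK
  have hn := wnorm_nonneg s F
  have hdiv {z : ℂ} {ξ : R2} (hξ : ‖ξ‖ ≤ R) : ‖z‖ ≤ 2 * ‖z * testFT j ξ‖ := by
    rw [norm_mul]
    nlinarith [hjR ξ hξ, norm_nonneg z]
  have hval' (ξ : R2) (hξ : ‖ξ‖ ≤ R) : ‖F ξ‖ ≤ 2 * (c * wnorm s F) :=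
    (hdiv hξ).trans (by gcongr; exact hval ξ)
  refine ⟨fun ξ hξ => (hval' ξ hξ).trans ?_, fun ξ η hξ hη => ?_⟩
  · nlinarith [mul_nonneg (mul_nonneg hc hJ) hn]
  · have hjlip : ‖testFT j ξ - testFT j η‖ ≤ J * ‖ξ - η‖ := by
      simpa only [one_mul] using norm_testFT_sub_le hj.integrable
        (eq_zero_of_tsupport_subset_closedBall hjsupp) ξ η
    have hsplit : (F ξ - F η) * testFT j ξ =
        (F ξ * testFT j ξ - F η * testFT j η) - F η * (testFT j ξ - testFT j η) := by ring
    calc ‖F ξ - F η‖ ≤ 2 * ‖(F ξ - F η) * testFT j ξ‖ := hdiv hξ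
      _ ≤ 2 * (c * wnorm s F * ‖ξ - η‖ + 2 * (c * wnorm s F) * (J * ‖ξ - η‖)) := by
        rw [hsplit]
        gcongr
        refine (norm_sub_le _ _).trans (add_le_add (hlip ξ η) ?_)
        rw [norm_mul]
        gcongr
        exact hval' η hη
      _ = _ := by ring

lemma FTSupportedIn.eq_zero_of_empty {s : ℝ} {F : R2 → ℂ} (hF : FTSupportedIn F ∅)
    (hFc : Continuous F) (hFs : MemHs s F) : F = 0 := by
  ext ξ
  obtain ⟨j, hj, -, hjξ⟩ := exists_testFunction_half_le_norm_testFT ‖ξ‖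
  have hfourier : 𝓕 (fun ξ => F ξ * testFT j ξ) = 0 := by
    ext y
    rw [fourier_eq_testFT]
    exact hF.testFT_mul_eq_zero hj fun _ hy => hy.elim
  have hinv := Continuous.fourierInv_fourier_eq (f := fun ξ => F ξ * testFT j ξ)
    (hFc.mul (continuous_testFT hj.integrable))
    (hFs.integrable_mul_testFT hj) (by rw [hfourier]; exact integrable_zero _ _ _)
  have hprod : F ξ * testFT j ξ = 0 := by
    refine (congrFun hinv ξ).symm.trans ?_
    rw [hfourier, fourierInv_eq_testFT]
    simp [testFT]
  refine (mul_eq_zero.1 hprod).resolve_right fun h => ?_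
  have := hjξ ξ le_rfl
  rw [h, norm_zero] at this
  norm_num at this

lemma norm_exp_I_mul_mul_le {z : ℂ} {a M Z : ℝ} (hz : ‖z‖ ≤ Z) (ha : |a| ≤ M) :
    ‖exp (I * (z * (a : ℂ)))‖ ≤ Real.exp (Z * M) := by
  refine (norm_exp_le_exp_norm _).trans (Real.exp_le_exp.2 ?_)
  rw [norm_mul, norm_mul, norm_I, one_mul, Complex.norm_real]
  exact mul_le_mul hz ha (abs_nonneg _) ((norm_nonneg z).trans hz)

lemma differentiable_integral_exp_mul {α : Type*} [MeasurableSpace α] {μ : Measure α} {U : α → ℂ}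
    (hU : Integrable U μ) {a : α → ℝ} (ha : AEStronglyMeasurable a μ) {M : ℝ}
    (hM : ∀ y, |a y| ≤ M) :
    Differentiable ℂ fun z : ℂ => ∫ y, exp (I * (z * (a y : ℂ))) * U y ∂μ := by
  intro z₀
  have hac : AEStronglyMeasurable (fun y => (a y : ℂ)) μ :=
    Complex.continuous_ofReal.comp_aestronglyMeasurable ha
  have hexp (z : ℂ) : AEStronglyMeasurable (fun y => exp (I * (z * (a y : ℂ)))) μ :=
    Complex.continuous_exp.comp_aestronglyMeasurable ((hac.const_mul z).const_mul I)
  have hMnonneg (y : α) : 0 ≤ M := (abs_nonneg _).trans (hM y)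
  refine (hasDerivAt_integral_of_dominated_loc_of_deriv_le (𝕜 := ℂ)
    (F' := fun z y => exp (I * (z * (a y : ℂ))) * (I * (a y : ℂ)) * U y)
    (bound := fun y => Real.exp ((‖z₀‖ + 1) * M) * M * ‖U y‖) (Metric.ball_mem_nhds z₀ one_pos)
    (Eventually.of_forall fun z => (hexp z).mul hU.1) ?_
    (((hexp z₀).mul (hac.const_mul I)).mul hU.1) ?_ (hU.norm.const_mul _) ?_).2.differentiableAt
  · refine (hU.norm.const_mul (Real.exp (‖z₀‖ * M))).mono' ((hexp z₀).mul hU.1)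
      (Eventually.of_forall fun y => ?_)
    rw [Pi.mul_apply, norm_mul]
    gcongr
    exact norm_exp_I_mul_mul_le le_rfl (hM y)
  · refine Eventually.of_forall fun y z hz => ?_
    have hz : ‖z‖ ≤ ‖z₀‖ + 1 := by
      rw [Metric.mem_ball, dist_eq_norm] at hz
      linarith [norm_le_norm_add_norm_sub' z z₀]
    rw [norm_mul, norm_mul, norm_mul I, norm_I, one_mul, Complex.norm_real]
    have := hMnonneg y
    gcongr
    exacts [norm_exp_I_mul_mul_le hz (hM y), hM y]
  · refine Eventually.of_forall fun y z _ => ?_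
    have hlin : HasDerivAt (fun z : ℂ => I * (z * (a y : ℂ))) (I * (a y : ℂ)) z := by
      simpa using ((hasDerivAt_id z).mul_const (a y : ℂ)).const_mul I
    exact hlin.cexp.mul_const _

lemma eq_zero_of_differentiable_of_eventually_ofReal {g : ℂ → ℂ} (hg : Differentiable ℂ g)
    (hzero : ∀ᶠ t : ℝ in 𝓝 0, g t = 0) : g = 0 := by
  have hofReal : Tendsto (fun t : ℝ => (t : ℂ)) (𝓝[≠] 0) (𝓝[≠] 0) := by
    refine tendsto_nhdsWithin_of_tendsto_nhds_of_eventually_within _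
      ((Complex.continuous_ofReal.tendsto' 0 0 rfl).mono_left nhdsWithin_le_nhds) ?_
    filter_upwards [self_mem_nhdsWithin] with t ht using Complex.ofReal_ne_zero.2 ht
  have hpunctured : ∀ᶠ t : ℝ in 𝓝[≠] 0, g t = 0 := hzero.filter_mono nhdsWithin_le_nhds
  have hfreq := hofReal.frequently (p := fun z => g z = 0) hpunctured.frequently
  have han := hg.differentiableOn.analyticOnNhd isOpen_univ
  exact funext fun z => han.eqOn_zero_of_preconnected_of_frequently_eq_zero isPreconnected_univ
    (Set.mem_univ 0) hfreq (Set.mem_univ z)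

lemma testFT_eq_zero_of_eventually_smul {U : R2 → ℂ} (hU : Integrable U) {ρ : ℝ}
    (hsupp : ∀ y, ρ < ‖y‖ → U y = 0) {η : R2} (hzero : ∀ᶠ t : ℝ in 𝓝 0, testFT U (t • η) = 0) :
    testFT U η = 0 := by
  let a (y : R2) : ℝ := max (-(|ρ| * ‖η‖)) (min (|ρ| * ‖η‖) (rdot y η))
  have hρη : 0 ≤ |ρ| * ‖η‖ := by positivity
  have ha (y : R2) : |a y| ≤ |ρ| * ‖η‖ :=
    abs_le.2 ⟨le_max_left _ _, max_le (by linarith) (min_le_left _ _)⟩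
  have hac : Continuous a :=
    continuous_const.max (continuous_const.min (continuous_rdot_left η))
  have heq (t : ℝ) : ∫ y, exp (I * ((t : ℂ) * (a y : ℂ))) * U y = testFT U (t • η) := by
    refine integral_congr_ae (Eventually.of_forall fun y => ?_)
    beta_reduce
    rcases lt_or_ge ρ ‖y‖ with hy | hy
    · simp only [hsupp y hy, mul_zero]
    · have hle : |rdot y η| ≤ |ρ| * ‖η‖ := (abs_rdot_le y η).trans
        (mul_le_mul_of_nonneg_right (hy.trans (le_abs_self ρ)) (norm_nonneg η))
      have hay : a y = rdot y η := by
        rw [abs_le] at hle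
        exact (congrArg _ (min_eq_right hle.2)).trans (max_eq_right hle.1)
      rw [hay, rdot_smul]
      push_cast
      rfl
  have hentire := differentiable_integral_exp_mul hU hac.aestronglyMeasurable ha
  have h := congrFun (eq_zero_of_differentiable_of_eventually_ofReal hentire
    (hzero.mono fun t ht => (heq t).trans ht)) ((1 : ℝ) : ℂ)
  simpa only [heq, one_smul, Pi.zero_apply] using h

/-- The transform of a compactly supported distribution extends to an entire function on each line
through the origin, so it is determined by its values near the origin. -/
lemma FTSupportedIn.eq_zero_of_eq_zero_on_ball {s : ℝ} {K : Set R2} (hK : Bornology.IsBounded K)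
    {F : R2 → ℂ} (hFK : FTSupportedIn F K) (hFc : Continuous F) (hF : MemHs s F) {k : ℝ}
    (hk : 0 < k) (hzero : ∀ ξ, ‖ξ‖ < k → F ξ = 0) : F = 0 := by
  ext ξ
  obtain ⟨r, hr, hKr⟩ := hK.subset_closedBall_lt 0 0
  obtain ⟨j, hj, hjsupp, hjξ⟩ := exists_testFunction_half_le_norm_testFT ‖ξ‖
  obtain ⟨U, hU, hUsupp, -, hFU⟩ := (hFK.mono hKr).exists_mul_testFT_eq_testFT hr.le hFc hj hjsupp
    (hF.integrable_mul_testFT hj)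
  have hnear : ∀ᶠ t : ℝ in 𝓝 0, testFT U (t • (2 * π) • ξ) = 0 := by
    have htendsto : Tendsto (fun t : ℝ => ‖t • ξ‖) (𝓝 0) (𝓝 0) :=
      (by fun_prop : Continuous fun t : ℝ => ‖t • ξ‖).tendsto' 0 0 (by simp)
    filter_upwards [htendsto.eventually (gt_mem_nhds hk)] with t ht
    rw [smul_comm, ← hFU, hzero _ ht, zero_mul]
  have hprod : F ξ * testFT j ξ = 0 :=
    (hFU ξ).trans (testFT_eq_zero_of_eventually_smul hU hUsupp hnear)
  refine (mul_eq_zero.1 hprod).resolve_right fun h => ?_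
  have := hjξ ξ le_rfl
  rw [h, norm_zero] at this
  norm_num at this

/-! ### Multiplication by test functions -/

lemma lintegral_mul_sq_le {α : Type*} [MeasurableSpace α] {μ : Measure α} {f q : α → ENNReal}
    (hf : AEMeasurable f μ) (hq : AEMeasurable q μ) :
    (∫⁻ a, f a * q a ∂μ) ^ 2 ≤ (∫⁻ a, f a ^ 2 * q a ∂μ) * ∫⁻ a, q a ∂μ := by
  have hsqrt (a : α) : (q a ^ (1 / 2 : ℝ)) ^ (2 : ℝ) = q a := by
    rw [← ENNReal.rpow_mul]
    norm_num
  have hholder := ENNReal.lintegral_mul_le_Lp_mul_Lq μ Real.HolderConjugate.two_two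
    (hf.mul (hq.pow_const (1 / 2 : ℝ))) (hq.pow_const (1 / 2 : ℝ))
  have hleft (a : α) : f a * q a ^ (1 / 2 : ℝ) * q a ^ (1 / 2 : ℝ) = f a * q a := by
    rw [mul_assoc, ← sq, ← ENNReal.rpow_two, hsqrt]
  simp only [Pi.mul_apply, hleft, ENNReal.mul_rpow_of_nonneg _ _ zero_le_two, hsqrt,
    ENNReal.rpow_two] at hholder
  calc (∫⁻ a, f a * q a ∂μ) ^ 2
      ≤ ((∫⁻ a, f a ^ 2 * q a ∂μ) ^ (1 / 2 : ℝ) * (∫⁻ a, q a ∂μ) ^ (1 / 2 : ℝ)) ^ 2 := by gcongr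
    _ = _ := by
      rw [mul_pow, ← ENNReal.rpow_two, ← ENNReal.rpow_two, ← ENNReal.rpow_mul, ← ENNReal.rpow_mul]
      norm_num

section Young

variable {G : Type*} [AddCommGroup G] [MeasurableSpace G] [MeasurableAdd₂ G] [MeasurableNeg G]
  {μ : Measure G} [SFinite μ] [μ.IsAddLeftInvariant] [μ.IsNegInvariant]

lemma lintegral_sq_lintegral_mul_sub_le {f q : G → ENNReal} (hf : AEMeasurable f μ)
    (hq : Measurable q) :
    ∫⁻ ξ, (∫⁻ η, f η * q (η - ξ) ∂μ) ^ 2 ∂μ ≤ (∫⁻ ζ, q ζ ∂μ) ^ 2 * ∫⁻ η, f η ^ 2 ∂μ := by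
  have hqsub (ξ : G) : Measurable fun η => q (η - ξ) := hq.comp (measurable_id.sub_const ξ)
  have hkernel : AEMeasurable (Function.uncurry fun ξ η => f η ^ 2 * q (η - ξ)) (μ.prod μ) :=
    (hf.comp_snd.pow_const 2).mul (hq.comp (measurable_snd.sub measurable_fst)).aemeasurable
  calc ∫⁻ ξ, (∫⁻ η, f η * q (η - ξ) ∂μ) ^ 2 ∂μ
      ≤ ∫⁻ ξ, (∫⁻ η, f η ^ 2 * q (η - ξ) ∂μ) * ∫⁻ ζ, q ζ ∂μ ∂μ := by
        refine lintegral_mono fun ξ => (lintegral_mul_sq_le hf (hqsub ξ).aemeasurable).trans_eq ?_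
        rw [lintegral_sub_right_eq_self q ξ]
    _ = (∫⁻ η, ∫⁻ ξ, f η ^ 2 * q (η - ξ) ∂μ ∂μ) * ∫⁻ ζ, q ζ ∂μ := by
        rw [← lintegral_lintegral_swap hkernel]
        exact lintegral_mul_const'' _ hkernel.lintegral_prod_right'
    _ = (∫⁻ η, f η ^ 2 * ∫⁻ ζ, q ζ ∂μ ∂μ) * ∫⁻ ζ, q ζ ∂μ := by
        congr 1
        refine lintegral_congr fun η => ?_
        have hqsub' : Measurable fun ξ => q (η - ξ) := hq.comp (measurable_const.sub measurable_id)
        rw [lintegral_const_mul _ hqsub', lintegral_sub_left_eq_self q η]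
    _ = _ := by
        rw [lintegral_mul_const'' _ (hf.pow_const 2)]
        ring

lemma eLpNorm_two_le_of_enorm_le_lintegral {E F : Type*} [NormedAddCommGroup E]
    [NormedAddCommGroup F] {f : G → E} {h : G → F} {q : G → ENNReal}
    (hf : AEStronglyMeasurable f μ) (hq : Measurable q)
    (hle : ∀ ξ, ‖h ξ‖ₑ ≤ ∫⁻ η, ‖f η‖ₑ * q (η - ξ) ∂μ) :
    eLpNorm h 2 μ ≤ (∫⁻ ζ, q ζ ∂μ) * eLpNorm f 2 μ := by
  rw [eLpNorm_eq_lintegral_rpow_enorm_toReal two_ne_zero ENNReal.ofNat_ne_top,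
    eLpNorm_eq_lintegral_rpow_enorm_toReal two_ne_zero ENNReal.ofNat_ne_top]
  simp only [ENNReal.toReal_ofNat, ENNReal.rpow_two]
  calc (∫⁻ ξ, ‖h ξ‖ₑ ^ 2 ∂μ) ^ (1 / 2 : ℝ)
      ≤ ((∫⁻ ζ, q ζ ∂μ) ^ 2 * ∫⁻ η, ‖f η‖ₑ ^ 2 ∂μ) ^ (1 / 2 : ℝ) := by
        gcongr
        refine (lintegral_mono fun ξ => ?_).trans (lintegral_sq_lintegral_mul_sub_le hf.enorm hq)
        gcongr
        exact hle ξ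
    _ = _ := by
        rw [ENNReal.mul_rpow_of_nonneg _ _ (by norm_num), ← ENNReal.rpow_two, ← ENNReal.rpow_mul]
        norm_num

end Young

lemma wnorm_eq_toReal_eLpNorm {s : ℝ} {F : R2 → ℂ} (hF : AEStronglyMeasurable F) :
    wnorm s F = (eLpNorm (besselPotential s F) 2).toReal := by
  have hm := aestronglyMeasurable_besselPotential hF s
  rw [toReal_eLpNorm hm, lpNorm_eq_integral_norm_rpow_toReal two_ne_zero ENNReal.ofNat_ne_top hm,
    wnorm, wnormSq_eq_integral_besselPotential, Real.sqrt_eq_rpow]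
  norm_num

lemma memHs_sobolevWeight {s r : ℝ} (h : s + 2 * r < -1) :
    MemHs s fun ξ => (sobolevWeight r ξ : ℂ) := by
  refine ⟨(Complex.continuous_ofReal.comp (continuous_sobolevWeight r)).aestronglyMeasurable,
    (integrable_sobolevWeight h).congr (Eventually.of_forall fun ξ => ?_)⟩
  beta_reduce
  rw [Complex.norm_real, Real.norm_eq_abs, sq_abs, two_mul, sobolevWeight_add, sobolevWeight_add,
    ← sq]
  rfl

lemma besselPotential_add (s : ℝ) (F G : R2 → ℂ) :
    besselPotential s (F + G) = besselPotential s F + besselPotential s G :=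
  funext fun _ => mul_add _ _ _

lemma besselPotential_smul (s : ℝ) (c : ℂ) (F : R2 → ℂ) :
    besselPotential s (c • F) = c • besselPotential s F :=
  funext fun _ => mul_left_comm _ _ _

lemma MemHs.add {s : ℝ} {F G : R2 → ℂ} (hF : MemHs s F) (hG : MemHs s G) : MemHs s (F + G) :=
  memHs_of_memLp (hF.1.add hG.1) (by rw [besselPotential_add]; exact hF.memLp.add hG.memLp)

lemma MemHs.const_smul {s : ℝ} {F : R2 → ℂ} (hF : MemHs s F) (c : ℂ) : MemHs s (c • F) :=
  memHs_of_memLp (hF.1.const_smul c) (by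
    rw [besselPotential_smul]; exact hF.memLp.const_smul c)

lemma MemHs.sub {s : ℝ} {F G : R2 → ℂ} (hF : MemHs s F) (hG : MemHs s G) : MemHs s (F - G) := by
  simpa only [neg_one_smul, sub_eq_add_neg] using hF.add (hG.const_smul (-1))

/-- The transform of `χ f` in terms of `F = f̂` and `m = testFT χ`, that is `(2π)⁻² F * m(-·)`. -/
def spectralConv (m F : R2 → ℂ) (ξ : R2) : ℂ :=
  ((((2 * π) ^ 2)⁻¹ : ℝ) : ℂ) * ∫ η, F η * m (η - ξ)

section SpectralConv

variable {s : ℝ} {m F : R2 → ℂ}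

lemma RapidlyDecreasing.exists_norm_sub_le (hm : RapidlyDecreasing m) {r : ℝ} (hr : 0 ≤ r) :
    ∃ C, ∀ ξ η, ‖m (η - ξ)‖ ≤ C * (sobolevWeight r ξ * sobolevWeight (-r) η) := by
  obtain ⟨C, hC⟩ := hm.2 r
  have hC0 : 0 ≤ C := nonneg_of_mul_nonneg_left ((norm_nonneg _).trans (hC 0))
    (sobolevWeight_pos _ _)
  refine ⟨C * 2 ^ r, fun ξ η => (hC (η - ξ)).trans ?_⟩
  rw [mul_assoc C, ← mul_assoc (2 ^ r)]
  gcongr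
  exact sobolevWeight_neg_sub_le hr ξ η

lemma MemHs.exists_integrable_mul_sobolevWeight_neg (hF : MemHs s F) :
    ∃ r, 0 ≤ r ∧ Integrable fun η => ‖F η‖ * sobolevWeight (-r) η := by
  refine ⟨|s| + 1, by positivity, ?_⟩
  have hw := memHs_sobolevWeight (s := -s) (r := -(|s| + 1))
    (by linarith [neg_abs_le s, abs_nonneg s])
  refine (hF.integrable_mul hw).norm.congr (Eventually.of_forall fun η => ?_)
  beta_reduce
  rw [norm_mul, Complex.norm_real, Real.norm_of_nonneg (sobolevWeight_pos _ _).le]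

lemma MemHs.integrable_mul_sub (hF : MemHs s F) (hm : RapidlyDecreasing m) (ξ : R2) :
    Integrable fun η => F η * m (η - ξ) :=
  hF.integrable_mul ((hm.translate ξ).memHs _)

lemma continuous_spectralConv (hF : MemHs s F) (hm : RapidlyDecreasing m) :
    Continuous (spectralConv m F) := by
  have hmc := hm.1
  obtain ⟨r, hr, hint⟩ := hF.exists_integrable_mul_sobolevWeight_neg
  obtain ⟨C, hC⟩ := hm.exists_norm_sub_le hr
  refine continuous_const.mul (continuous_iff_continuousAt.2 fun ξ₀ =>
    continuousAt_of_dominated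
      (bound := fun η => |C| * (sobolevWeight r ξ₀ + 1) * (‖F η‖ * sobolevWeight (-r) η))
      (Eventually.of_forall fun ξ => (hF.integrable_mul_sub hm ξ).1) ?_ (hint.const_mul _)
      (Eventually.of_forall fun η => by fun_prop))
  filter_upwards [(continuous_sobolevWeight r).continuousAt.eventually_lt_const
    (lt_add_one (sobolevWeight r ξ₀))] with ξ hξ
  refine Eventually.of_forall fun η => ?_
  have := (sobolevWeight_pos (-r) η).le
  have := (sobolevWeight_pos r ξ).le
  calc ‖F η * m (η - ξ)‖ ≤ ‖F η‖ * (|C| * ((sobolevWeight r ξ₀ + 1) * sobolevWeight (-r) η)) := by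
        rw [norm_mul]
        gcongr
        refine (hC ξ η).trans ?_
        gcongr
        exact le_abs_self C
    _ = _ := by ring

lemma sobolevWeight_le_mul_abs (s : ℝ) (ξ η : R2) :
    sobolevWeight s ξ ≤ 2 ^ |s| * sobolevWeight |s| (η - ξ) * sobolevWeight s η := by
  rcases le_total 0 s with hs | hs
  · rw [abs_of_nonneg hs, mul_right_comm]
    convert sobolevWeight_le_mul_sobolevWeight_sub hs η ξ using 2
    rw [sobolevWeight, sobolevWeight, norm_sub_rev]
  · have hpeetre := sobolevWeight_le_mul_sobolevWeight_sub (neg_nonneg.2 hs) ξ η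
    rw [sobolevWeight_neg s ξ, sobolevWeight_neg s η,
      inv_le_iff_one_le_mul₀ (sobolevWeight_pos s η)] at hpeetre
    rw [abs_of_nonpos hs]
    calc sobolevWeight s ξ
        ≤ sobolevWeight s ξ * (2 ^ (-s) * (sobolevWeight s ξ)⁻¹ * sobolevWeight (-s) (η - ξ) *
          sobolevWeight s η) := le_mul_of_one_le_right (sobolevWeight_pos s ξ).le hpeetre
      _ = _ := by field_simp [(sobolevWeight_pos s ξ).ne']

lemma enorm_besselPotential_spectralConv_le (s : ℝ) (m F : R2 → ℂ) (ξ : R2) :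
    ‖besselPotential s (spectralConv m F) ξ‖ₑ ≤ ∫⁻ η, ‖besselPotential s F η‖ₑ *
      ENNReal.ofReal (((2 * π) ^ 2)⁻¹ * 2 ^ |s / 2| *
        (sobolevWeight |s / 2| (η - ξ) * ‖m (η - ξ)‖)) := by
  rw [besselPotential, spectralConv, ← integral_const_mul, ← integral_const_mul]
  refine (enorm_integral_le_lintegral_enorm _).trans (lintegral_mono fun η => ?_)
  rw [← ofReal_norm, ← ofReal_norm, ← ENNReal.ofReal_mul (norm_nonneg _)]
  refine ENNReal.ofReal_le_ofReal ?_
  have hw (s : ℝ) (ξ : R2) := (sobolevWeight_pos s ξ).le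
  rw [besselPotential, norm_mul, norm_mul, norm_mul, norm_mul, Complex.norm_real,
    Complex.norm_real, Complex.norm_real, Real.norm_of_nonneg (mul_nonneg (by positivity) (hw _ _)),
    Real.norm_of_nonneg (mul_nonneg (by positivity) (hw _ _)), Real.norm_of_nonneg (by positivity)]
  calc (2 * π)⁻¹ * sobolevWeight (s / 2) ξ * (((2 * π) ^ 2)⁻¹ * (‖F η‖ * ‖m (η - ξ)‖))
      ≤ (2 * π)⁻¹ * (2 ^ |s / 2| * sobolevWeight |s / 2| (η - ξ) * sobolevWeight (s / 2) η) *
        (((2 * π) ^ 2)⁻¹ * (‖F η‖ * ‖m (η - ξ)‖)) := by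
        gcongr
        exact sobolevWeight_le_mul_abs _ _ _
    _ = _ := by ring

lemma exists_wnorm_spectralConv_le (hm : RapidlyDecreasing m) (s : ℝ) :
    ∃ C, 0 ≤ C ∧ ∀ F, MemHs s F →
      MemHs s (spectralConv m F) ∧ wnorm s (spectralConv m F) ≤ C * wnorm s F := by
  set q : R2 → ℝ := fun ζ => ((2 * π) ^ 2)⁻¹ * 2 ^ |s / 2| * (sobolevWeight |s / 2| ζ * ‖m ζ‖)
  have hmc := hm.1
  have hw := continuous_sobolevWeight |s / 2|
  have hq : Continuous q := by fun_prop
  have hqint : ∫⁻ ζ, ENNReal.ofReal (q ζ) ≠ ⊤ :=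
    (((hm.integrable_sobolevWeight_mul_norm |s / 2|).const_mul _).lintegral_lt_top).ne
  refine ⟨(∫⁻ ζ, ENNReal.ofReal (q ζ)).toReal, ENNReal.toReal_nonneg, fun F hF => ?_⟩
  have hcont := continuous_spectralConv hF hm
  have hle := eLpNorm_two_le_of_enorm_le_lintegral (μ := volume) hF.memLp.1
    hq.measurable.ennreal_ofReal (enorm_besselPotential_spectralConv_le s m F)
  have htop := ENNReal.mul_ne_top hqint hF.memLp.2.ne
  refine ⟨memHs_of_memLp hcont.aestronglyMeasurable
    ⟨(continuous_besselPotential hcont s).aestronglyMeasurable, hle.trans_lt htop.lt_top⟩, ?_⟩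
  rw [wnorm_eq_toReal_eLpNorm hcont.aestronglyMeasurable, wnorm_eq_toReal_eLpNorm hF.1,
    ← ENNReal.toReal_mul]
  exact ENNReal.toReal_mono htop hle

/-- The transform of `χ f` in terms of the transform `F` of `f`. -/
def localizeFT (χ F : R2 → ℂ) : R2 → ℂ := spectralConv (testFT χ) F

variable {χ φ : R2 → ℂ}

lemma integral_testFT_sub_mul_testFT (hχ : IsTestFunction χ) (hφ : IsTestFunction φ) (η : R2) :
    ((((2 * π) ^ 2)⁻¹ : ℝ) : ℂ) * ∫ ξ, testFT χ (η - ξ) * testFT φ ξ =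
      testFT (fun x => χ x * φ x) η := by
  have hkernel : Integrable (Function.uncurry fun ξ x =>
      exp (I * (rdot x (η - ξ) : ℂ)) * χ x * testFT φ ξ) (volume.prod volume) := by
    have hcont : Continuous fun p : R2 × R2 => exp (I * (rdot p.2 (η - p.1) : ℂ)) := by
      have : Continuous fun p : R2 × R2 => rdot p.2 (η - p.1) :=
        continuous_rdot.comp (by fun_prop : Continuous fun p : R2 × R2 => (p.2, η - p.1))
      fun_prop
    refine ((hφ.rapidlyDecreasing_testFT.integrable.mul_prod hχ.integrable).bdd_mul (c := 1)
      hcont.aestronglyMeasurable (Eventually.of_forall fun p =>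
        (norm_exp_I_mul_rdot _ _).le)).congr (Eventually.of_forall fun p => ?_)
    simp only [Function.uncurry]
    ring
  have hexp (x ξ : R2) : exp (I * (rdot x (η - ξ) : ℂ)) * χ x * testFT φ ξ =
      exp (I * (rdot x η : ℂ)) * χ x * (exp (-(I * (rdot x ξ : ℂ))) * testFT φ ξ) := by
    rw [rdot_sub, ofReal_sub, mul_sub, sub_eq_add_neg, exp_add]
    ring
  calc ((((2 * π) ^ 2)⁻¹ : ℝ) : ℂ) * ∫ ξ, testFT χ (η - ξ) * testFT φ ξ
      = (((2 * π) ^ 2)⁻¹ : ℝ) *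
        ∫ ξ, ∫ x, exp (I * (rdot x (η - ξ) : ℂ)) * χ x * testFT φ ξ := by
        simp only [testFT, ← integral_mul_const]
    _ = ∫ x, exp (I * (rdot x η : ℂ)) * χ x *
        ((((2 * π) ^ 2)⁻¹ : ℝ) * ∫ ξ, exp (-(I * (rdot x ξ : ℂ))) * testFT φ ξ) := by
        rw [integral_integral_swap hkernel]
        simp only [hexp, integral_const_mul]
        rw [← integral_const_mul]
        exact integral_congr_ae (Eventually.of_forall fun x => mul_left_comm _ _ _)
    _ = testFT (fun x => χ x * φ x) η := by
        simp only [hφ.fourierInversion, mul_assoc]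
        rfl

lemma MemHs.integrable_localizeFT_kernel (hF : MemHs s F) (hχ : IsTestFunction χ)
    (hφ : IsTestFunction φ) :
    Integrable (Function.uncurry fun ξ η => F η * testFT χ (η - ξ) * testFT φ ξ)
      (volume.prod volume) := by
  obtain ⟨r, hr, hint⟩ := hF.exists_integrable_mul_sobolevWeight_neg
  obtain ⟨C, hC⟩ := hχ.rapidlyDecreasing_testFT.exists_norm_sub_le hr
  have hχφ : Continuous fun p : R2 × R2 => testFT χ (p.2 - p.1) * testFT φ p.1 := by
    have := hχ.rapidlyDecreasing_testFT.1
    have := hφ.rapidlyDecreasing_testFT.1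
    fun_prop
  refine ((hφ.rapidlyDecreasing_testFT.integrable_sobolevWeight_mul_norm r).mul_prod hint
    |>.const_mul C).mono' ?_ (Eventually.of_forall fun ⟨ξ, η⟩ => ?_)
  · refine (hF.1.comp_snd.mul hχφ.aestronglyMeasurable).congr (Eventually.of_forall fun p => ?_)
    exact (mul_assoc _ _ _).symm
  · simp only [Function.uncurry, norm_mul]
    calc ‖F η‖ * ‖testFT χ (η - ξ)‖ * ‖testFT φ ξ‖
        ≤ ‖F η‖ * (C * (sobolevWeight r ξ * sobolevWeight (-r) η)) * ‖testFT φ ξ‖ := by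
          gcongr
          exact hC ξ η
      _ = _ := by ring

lemma MemHs.integral_localizeFT_mul_testFT (hF : MemHs s F) (hχ : IsTestFunction χ)
    (hφ : IsTestFunction φ) :
    ∫ ξ, localizeFT χ F ξ * testFT φ ξ = ∫ η, F η * testFT (fun x => χ x * φ x) η := by
  calc ∫ ξ, localizeFT χ F ξ * testFT φ ξ
      = (((2 * π) ^ 2)⁻¹ : ℝ) * ∫ ξ, ∫ η, F η * testFT χ (η - ξ) * testFT φ ξ := by
        simp only [localizeFT, spectralConv, mul_assoc, integral_const_mul, ← integral_mul_const]
    _ = ∫ η, F η * ((((2 * π) ^ 2)⁻¹ : ℝ) * ∫ ξ, testFT χ (η - ξ) * testFT φ ξ) := by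
        rw [integral_integral_swap (hF.integrable_localizeFT_kernel hχ hφ)]
        simp only [mul_assoc, integral_const_mul]
        rw [← integral_const_mul]
        exact integral_congr_ae (Eventually.of_forall fun η => mul_left_comm _ _ _)
    _ = _ := by simp only [integral_testFT_sub_mul_testFT hχ hφ]

lemma FTSupportedIn.localizeFT {K : Set R2} (hFK : FTSupportedIn F K) (hF : MemHs s F)
    (hχ : IsTestFunction χ) : FTSupportedIn (localizeFT χ F) (K ∩ tsupport χ) := by
  intro φ hφ hdisj
  rw [hF.integral_localizeFT_mul_testFT hχ hφ]
  refine hFK _ (hχ.mul hφ) (Set.eq_empty_iff_forall_notMem.2 fun x ⟨hx, hxK⟩ => ?_)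
  exact hdisj.le ⟨tsupport_mul_subset_right hx, hxK, tsupport_mul_subset_left hx⟩

lemma continuous_localizeFT (hF : MemHs s F) (hχ : IsTestFunction χ) :
    Continuous (localizeFT χ F) :=
  continuous_spectralConv hF hχ.rapidlyDecreasing_testFT

lemma MemHs.localizeFT (hF : MemHs s F) (hχ : IsTestFunction χ) : MemHs s (localizeFT χ F) :=
  let ⟨_, _, hC⟩ := exists_wnorm_spectralConv_le hχ.rapidlyDecreasing_testFT s
  (hC F hF).1

lemma localizeFT_finset_sum {ι : Type*} (t : Finset ι) {χ : ι → R2 → ℂ} (hF : MemHs s F)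
    (hχ : ∀ i ∈ t, IsTestFunction (χ i)) (ξ : R2) :
    localizeFT (fun x => ∑ i ∈ t, χ i x) F ξ = ∑ i ∈ t, localizeFT (χ i) F ξ := by
  simp only [localizeFT, spectralConv, testFT_finset_sum t fun i hi => (hχ i hi).integrable]
  rw [← Finset.mul_sum, ← integral_finsetSum t fun i hi =>
    hF.integrable_mul_sub (hχ i hi).rapidlyDecreasing_testFT ξ]
  simp only [Finset.mul_sum]

lemma dotFt_localizeFT {F₁ F₂ : R2 → ℂ} (h₁ : MemHs s F₁) (h₂ : MemHs s F₂)
    (hχ : IsTestFunction χ) (ξ : R2) :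
    dotFt (localizeFT χ F₁) (localizeFT χ F₂) ξ = localizeFT χ (dotFt F₁ F₂) ξ -
      (spectralConv (fun ζ => (ζ 0 : ℂ) * testFT χ ζ) F₁ ξ +
        spectralConv (fun ζ => (ζ 1 : ℂ) * testFT χ ζ) F₂ ξ) := by
  have hm := hχ.rapidlyDecreasing_testFT
  have h₁ξ := (h₁.integrable_mul_sub hm ξ).const_mul (ξ 0 : ℂ)
  have h₂ξ := (h₂.integrable_mul_sub hm ξ).const_mul (ξ 1 : ℂ)
  have h₁ζ := h₁.integrable_mul_sub (hm.coord_mul 0) ξ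
  have h₂ζ := h₂.integrable_mul_sub (hm.coord_mul 1) ξ
  have hsplit : ∫ η, dotFt F₁ F₂ η * testFT χ (η - ξ) =
      (ξ 0 : ℂ) * (∫ η, F₁ η * testFT χ (η - ξ)) + (ξ 1 : ℂ) * (∫ η, F₂ η * testFT χ (η - ξ)) +
        ((∫ η, F₁ η * (((η - ξ) 0 : ℝ) * testFT χ (η - ξ))) +
          ∫ η, F₂ η * (((η - ξ) 1 : ℝ) * testFT χ (η - ξ))) := by
    rw [← integral_const_mul, ← integral_const_mul, ← integral_add h₁ξ h₂ξ,
      ← integral_add h₁ζ h₂ζ, ← integral_add (by exact h₁ξ.add h₂ξ) (by exact h₁ζ.add h₂ζ)]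
    refine integral_congr_ae (Eventually.of_forall fun η => ?_)
    simp only [dotFt, PiLp.sub_apply]
    push_cast
    ring
  rw [dotFt, localizeFT, localizeFT, localizeFT, spectralConv, spectralConv, spectralConv, hsplit,
    spectralConv, spectralConv]
  ring

lemma localizeFT_eq_self {K O : Set R2} (hFc : Continuous F) (hF : MemHs s F)
    (hFK : FTSupportedIn F K) (hχ : IsTestFunction χ) (hO : IsOpen O) (hKO : K ⊆ O)
    (hχO : ∀ x ∈ O, χ x = 1) : localizeFT χ F = F := by
  have hχF := hF.localizeFT hχ
  refine (sub_eq_zero.1 (FTSupportedIn.eq_zero_of_empty (s := s) (fun φ hφ _ => ?_)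
    (hFc.sub (continuous_localizeFT hF hχ)) (hF.sub hχF))).symm
  have hdisj : tsupport (fun x => φ x - χ x * φ x) ∩ K = ∅ := by
    refine Set.eq_empty_iff_forall_notMem.2 fun x ⟨hx, hxK⟩ => absurd hx ?_
    rw [notMem_tsupport_iff_eventuallyEq]
    filter_upwards [hO.mem_nhds (hKO hxK)] with y hy
    simp [hχO y hy]
  calc ∫ ξ, (F - localizeFT χ F) ξ * testFT φ ξ
      = (∫ ξ, F ξ * testFT φ ξ) - ∫ ξ, localizeFT χ F ξ * testFT φ ξ := by
        rw [← integral_sub (hF.integrable_mul_testFT hφ) (hχF.integrable_mul_testFT hφ)]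
        simp only [Pi.sub_apply, sub_mul]
    _ = ∫ ξ, F ξ * testFT (fun x => φ x - χ x * φ x) ξ := by
        rw [hF.integral_localizeFT_mul_testFT hχ hφ, ← integral_sub (hF.integrable_mul_testFT hφ)
          (hF.integrable_mul_testFT (hχ.mul hφ))]
        simp only [testFT_sub hφ.integrable (hχ.mul hφ).integrable, mul_sub]
    _ = 0 := hFK _ (hφ.sub (hχ.mul hφ)) hdisj

end SpectralConv

/-! ### Bogovskii's parametrix of the divergence -/

/-- A Fourier multiplier of order `-1`, mapping `H^s(ℝ²)` to `H^{s+1}(ℝ²)`. -/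
def IsSmoothingMultiplier (m : R2 → ℂ) : Prop :=
  Continuous m ∧ ∃ C, ∀ ξ, ‖m ξ‖ ≤ C * sobolevWeight (-(1 / 2)) ξ

lemma IsSmoothingMultiplier.exists_wnorm_mul_le {m : R2 → ℂ} (hm : IsSmoothingMultiplier m)
    (s : ℝ) : ∃ C, 0 ≤ C ∧ ∀ F, MemHs s F →
      MemHs (s + 1) (fun ξ => m ξ * F ξ) ∧ wnorm (s + 1) (fun ξ => m ξ * F ξ) ≤ C * wnorm s F := by
  obtain ⟨hmc, C, hC⟩ := hm
  have hC0 : 0 ≤ C := nonneg_of_mul_nonneg_left ((norm_nonneg _).trans (hC 0))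
    (sobolevWeight_pos _ _)
  have hpoint (F : R2 → ℂ) (ξ : R2) : ‖besselPotential (s + 1) (fun ξ => m ξ * F ξ) ξ‖ ≤
      C * ‖besselPotential s F ξ‖ := by
    have hweight : sobolevWeight ((s + 1) / 2) ξ * sobolevWeight (-(1 / 2)) ξ =
        sobolevWeight (s / 2) ξ := by
      rw [← sobolevWeight_add]
      ring_nf
    have hw := (sobolevWeight_pos ((s + 1) / 2) ξ).le
    have hw' := (sobolevWeight_pos (s / 2) ξ).le
    rw [besselPotential, besselPotential, norm_mul, norm_mul, norm_mul, Complex.norm_real,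
      Complex.norm_real, Real.norm_of_nonneg (by positivity), Real.norm_of_nonneg (by positivity)]
    calc (2 * π)⁻¹ * sobolevWeight ((s + 1) / 2) ξ * (‖m ξ‖ * ‖F ξ‖)
        ≤ (2 * π)⁻¹ * sobolevWeight ((s + 1) / 2) ξ *
          (C * sobolevWeight (-(1 / 2)) ξ * ‖F ξ‖) := by
          gcongr
          exact hC ξ
      _ = _ := by rw [← hweight]; ring
  refine ⟨C, hC0, fun F hF => ?_⟩
  have hmF : AEStronglyMeasurable (fun ξ => m ξ * F ξ) := hmc.aestronglyMeasurable.mul hF.1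
  have hle := eLpNorm_le_mul_eLpNorm_of_ae_le_mul (c := C) (p := 2)
    (Eventually.of_forall (f := ae (volume : Measure R2)) (hpoint F))
  have htop : ENNReal.ofReal C * eLpNorm (besselPotential s F) 2 volume < ⊤ :=
    ENNReal.mul_lt_top ENNReal.ofReal_lt_top hF.memLp.2
  refine ⟨memHs_of_memLp hmF ⟨aestronglyMeasurable_besselPotential hmF _, hle.trans_lt htop⟩, ?_⟩
  rw [wnorm_eq_toReal_eLpNorm hmF, wnorm_eq_toReal_eLpNorm hF.1, ← ENNReal.toReal_ofReal hC0,
    ← ENNReal.toReal_mul]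
  exact ENNReal.toReal_mono htop.ne hle

lemma FTSupportedIn.mul_testFT_neg_smul {s t : ℝ} {F q : R2 → ℂ} {K K' : Set R2}
    (hFK : FTSupportedIn F K) (hF : MemHs s F) (hq : IsTestFunction q)
    (hK : ∀ y ∈ K, ∀ θ ∈ tsupport q, y + t • θ ∈ K') :
    FTSupportedIn (fun ξ => F ξ * testFT q (-(t • ξ))) K' := by
  intro φ hφ hdisj
  have hphase (θ ξ : R2) : rdot θ (-(t • ξ)) = rdot (-(t • θ)) ξ := by
    simp only [rdot, PiLp.neg_apply, PiLp.smul_apply, smul_eq_mul]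
    ring
  have hinner (θ : R2) :
      ∫ ξ, F ξ * testFT φ ξ * (exp (I * (rdot (-(t • θ)) ξ : ℂ)) * q θ) = 0 := by
    by_cases hθ : θ ∈ tsupport q
    · have hzero := hFK _ (hφ.translate (-(t • θ))) (Set.eq_empty_iff_forall_notMem.2
        fun y ⟨hy, hyK⟩ => hdisj.le
          ⟨by simpa only [sub_neg_eq_add] using sub_mem_tsupport hy, hK y hyK θ hθ⟩)
      simp only [testFT_translate] at hzero
      simp only [← mul_assoc, integral_mul_const]
      simp only [mul_assoc, mul_comm (testFT φ _), hzero, zero_mul]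
    · simp only [image_eq_zero_of_notMem_tsupport hθ, mul_zero, integral_zero]
  have hint : Integrable (Function.uncurry fun ξ θ =>
      F ξ * testFT φ ξ * (exp (I * (rdot (-(t • θ)) ξ : ℂ)) * q θ)) (volume.prod volume) := by
    have hcont : Continuous fun p : R2 × R2 => exp (I * (rdot (-(t • p.2)) p.1 : ℂ)) := by
      have : Continuous fun p : R2 × R2 => rdot (-(t • p.2)) p.1 :=
        continuous_rdot.comp (by fun_prop : Continuous fun p : R2 × R2 => (-(t • p.2), p.1))
      fun_prop
    refine (((hF.integrable_mul_testFT hφ).mul_prod hq.integrable).bdd_mul (c := 1)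
      hcont.aestronglyMeasurable (Eventually.of_forall fun p =>
        (norm_exp_I_mul_rdot _ _).le)).congr (Eventually.of_forall fun p => ?_)
    simp only [Function.uncurry]
    ring
  calc ∫ ξ, F ξ * testFT q (-(t • ξ)) * testFT φ ξ
      = ∫ ξ, ∫ θ, F ξ * testFT φ ξ * (exp (I * (rdot (-(t • θ)) ξ : ℂ)) * q θ) := by
        refine integral_congr_ae (Eventually.of_forall fun ξ => ?_)
        simp only [integral_const_mul, ← hphase]
        exact mul_right_comm _ _ _
    _ = 0 := by
        rw [integral_integral_swap hint]
        simp only [hinner, integral_zero]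

/-- The multiplier of convolution with the measure `∫₀¹ (q scaled to size t) dt`, which smears a
distribution along the segments pointing into `tsupport q`. -/
def rayAverage (q : R2 → ℂ) (ξ : R2) : ℂ := ∫ t in (0 : ℝ)..1, testFT q (-(t • ξ))

section RayAverage

variable {q : R2 → ℂ}

lemma continuous_testFT_neg_smul (hq : Integrable q) :
    Continuous fun p : R2 × ℝ => testFT q (-(p.2 • p.1)) :=
  (continuous_testFT hq).comp (by fun_prop)

lemma continuous_rayAverage (hq : Integrable q) : Continuous (rayAverage q) :=
  intervalIntegral.continuous_parametric_intervalIntegral_of_continuous'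
    (continuous_testFT_neg_smul hq) 0 1

lemma FTSupportedIn.rayAverage_mul {s : ℝ} {F : R2 → ℂ} {K K' : Set R2}
    (hFK : FTSupportedIn F K) (hF : MemHs s F) (hq : IsTestFunction q)
    (hK : ∀ y ∈ K, ∀ θ ∈ tsupport q, ∀ t ∈ Set.Icc (0 : ℝ) 1, y + t • θ ∈ K') :
    FTSupportedIn (fun ξ => rayAverage q ξ * F ξ) K' := by
  intro φ hφ hdisj
  have hint : Integrable (Function.uncurry fun ξ (t : ℝ) =>
      F ξ * testFT q (-(t • ξ)) * testFT φ ξ)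
      (volume.prod (volume.restrict (Set.Ioc (0 : ℝ) 1))) := by
    refine (((hF.integrable_mul_testFT hφ).mul_prod (integrable_const (1 : ℂ))).bdd_mul
      (c := ∫ x, ‖q x‖) (continuous_testFT_neg_smul hq.integrable).aestronglyMeasurable
      (Eventually.of_forall fun p => norm_testFT_le _ _)).congr (Eventually.of_forall fun p => ?_)
    simp only [Function.uncurry]
    ring
  calc ∫ ξ, rayAverage q ξ * F ξ * testFT φ ξ
      = ∫ ξ, ∫ t in Set.Ioc (0 : ℝ) 1, F ξ * testFT q (-(t • ξ)) * testFT φ ξ := by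
        simp only [rayAverage, intervalIntegral.integral_of_le zero_le_one, integral_mul_const,
          mul_comm (F _)]
    _ = ∫ t in Set.Ioc (0 : ℝ) 1, ∫ ξ, F ξ * testFT q (-(t • ξ)) * testFT φ ξ :=
        integral_integral_swap hint
    _ = 0 := setIntegral_eq_zero_of_forall_eq_zero fun t ht =>
        hFK.mul_testFT_neg_smul hF hq
          (fun y hy θ hθ => hK y hy θ hθ t (Set.Ioc_subset_Icc_self ht)) φ hφ hdisj

lemma continuousOn_inv_one_add_mul_sq {r : ℝ} (hr : 0 ≤ r) :
    ContinuousOn (fun t : ℝ => ((1 + t * r) ^ 2)⁻¹) (Set.uIcc 0 1) := by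
  refine ContinuousOn.inv₀ (by fun_prop) fun t ht => ?_
  rw [Set.uIcc_of_le zero_le_one] at ht
  have := mul_nonneg ht.1 hr
  positivity

lemma integral_inv_one_add_mul_sq {r : ℝ} (hr : 0 ≤ r) :
    ∫ t in (0 : ℝ)..1, ((1 + t * r) ^ 2)⁻¹ = (1 + r)⁻¹ := by
  have hderiv (t : ℝ) (ht : t ∈ Set.uIcc (0 : ℝ) 1) :
      HasDerivAt (fun t : ℝ => t / (1 + t * r)) (((1 + t * r) ^ 2)⁻¹) t := by
    rw [Set.uIcc_of_le zero_le_one] at ht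
    have hpos : 0 < 1 + t * r := by linarith [mul_nonneg ht.1 hr]
    refine ((hasDerivAt_id t).div (((hasDerivAt_id t).mul_const r).const_add 1)
      hpos.ne').congr_deriv ?_
    simp only [id]
    field_simp
    ring
  rw [intervalIntegral.integral_eq_sub_of_hasDerivAt hderiv
    (continuousOn_inv_one_add_mul_sq hr).intervalIntegrable]
  simp

lemma IsTestFunction.isSmoothingMultiplier_rayAverage (hq : IsTestFunction q) :
    IsSmoothingMultiplier (rayAverage q) := by
  obtain ⟨C, hC⟩ := hq.rapidlyDecreasing_testFT.2 1
  have hC0 : 0 ≤ C := nonneg_of_mul_nonneg_left ((norm_nonneg _).trans (hC 0))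
    (sobolevWeight_pos _ _)
  have hbound (ξ : R2) (t : ℝ) (ht : t ∈ Set.Ioc (0 : ℝ) 1) :
      ‖testFT q (-(t • ξ))‖ ≤ 2 * C * ((1 + t * ‖ξ‖) ^ 2)⁻¹ := by
    have htξ : 0 ≤ t * ‖ξ‖ := mul_nonneg ht.1.le (norm_nonneg _)
    refine (hC _).trans ?_
    rw [sobolevWeight_neg, sobolevWeight, Real.rpow_one, norm_neg, norm_smul,
      Real.norm_of_nonneg ht.1.le, ← div_eq_mul_inv, ← div_eq_mul_inv,
      div_le_div_iff₀ (by positivity) (by positivity)]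
    nlinarith [mul_nonneg hC0 (sq_nonneg (t * ‖ξ‖ - 1))]
  refine ⟨continuous_rayAverage hq.integrable, 2 * C, fun ξ => ?_⟩
  calc ‖rayAverage q ξ‖ ≤ ∫ t in (0 : ℝ)..1, 2 * C * ((1 + t * ‖ξ‖) ^ 2)⁻¹ :=
        intervalIntegral.norm_integral_le_of_norm_le zero_le_one
          (Eventually.of_forall fun t ht => hbound ξ t ht)
          ((continuousOn_inv_one_add_mul_sq (norm_nonneg ξ)).const_mul _).intervalIntegrable
    _ = 2 * C * (1 + ‖ξ‖)⁻¹ := by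
        rw [intervalIntegral.integral_const_mul, integral_inv_one_add_mul_sq (norm_nonneg ξ)]
    _ ≤ 2 * C * sobolevWeight (-(1 / 2)) ξ := by
        rw [sobolevWeight_neg, sobolevWeight, ← Real.sqrt_eq_rpow]
        gcongr
        exact Real.sqrt_le_iff.2 ⟨by positivity, by nlinarith [norm_nonneg ξ]⟩

end RayAverage

lemma RapidlyDecreasing.isSmoothingMultiplier_neg {m : R2 → ℂ} (hm : RapidlyDecreasing m) :
    IsSmoothingMultiplier fun ξ => m (-ξ) := by
  obtain ⟨C, hC⟩ := hm.2 (1 / 2)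
  refine ⟨hm.1.comp continuous_neg, C, fun ξ => ?_⟩
  simpa only [sobolevWeight, norm_neg] using hC (-ξ)

lemma IsTestFunction.coord_mul {ρ : R2 → ℂ} (hρ : IsTestFunction ρ) (i : Fin 2) :
    IsTestFunction fun x => (x i : ℂ) * ρ x :=
  ⟨(ofRealCLM.comp (EuclideanSpace.proj i : R2 →L[ℝ] ℝ)).contDiff.mul hρ.1, hρ.2.mul_left⟩

lemma hasDerivAt_exp_I_mul_rdot_neg_smul (x ξ : R2) (t : ℝ) :
    HasDerivAt (fun t : ℝ => exp (I * (rdot x (-(t • ξ)) : ℂ)))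
      (-(I * (rdot x ξ : ℂ)) * exp (I * (rdot x (-(t • ξ)) : ℂ))) t := by
  have hphase (t : ℝ) : I * (rdot x (-(t • ξ)) : ℂ) = -(I * (rdot x ξ : ℂ)) * (t : ℂ) := by
    simp only [rdot, PiLp.neg_apply, PiLp.smul_apply, smul_eq_mul]
    push_cast
    ring
  have hlin : HasDerivAt (fun t : ℝ => -(I * (rdot x ξ : ℂ)) * (t : ℂ))
      (-(I * (rdot x ξ : ℂ))) t := by
    simpa using (ofRealCLM.hasDerivAt (x := t)).const_mul (-(I * (rdot x ξ : ℂ)))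
  simp only [hphase]
  exact hlin.cexp.congr_deriv (mul_comm _ _)

lemma IsTestFunction.hasDerivAt_testFT_neg_smul {ρ : R2 → ℂ} (hρ : IsTestFunction ρ) (ξ : R2)
    (t : ℝ) :
    HasDerivAt (fun t : ℝ => testFT ρ (-(t • ξ)))
      (-(I * ((ξ 0 : ℂ) * testFT (fun x => (x 0 : ℂ) * ρ x) (-(t • ξ)) +
        (ξ 1 : ℂ) * testFT (fun x => (x 1 : ℂ) * ρ x) (-(t • ξ))))) t := by
  have hρc := hρ.1.continuous
  have hmeas : AEStronglyMeasurable fun x =>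
      -(I * (rdot x ξ : ℂ)) * exp (I * (rdot x (-(t • ξ)) : ℂ)) * ρ x := by
    have := continuous_rdot_left ξ
    have := continuous_rdot_left (-(t • ξ))
    exact Continuous.aestronglyMeasurable (by fun_prop)
  have hbound (x : R2) (s : ℝ) :
      ‖-(I * (rdot x ξ : ℂ)) * exp (I * (rdot x (-(s • ξ)) : ℂ)) * ρ x‖ ≤
        ‖ξ‖ * (‖x‖ * ‖ρ x‖) := by
    rw [norm_mul, norm_mul, norm_neg, norm_mul, norm_exp_I_mul_rdot, norm_I, one_mul, mul_one,
      norm_real, ← mul_assoc, mul_comm ‖ξ‖]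
    gcongr
    exact abs_rdot_le x ξ
  have hboundint : Integrable fun x => ‖ξ‖ * (‖x‖ * ‖ρ x‖) :=
    Continuous.integrable_of_hasCompactSupport (by fun_prop) hρ.2.norm.mul_left.mul_left
  refine (hasDerivAt_integral_of_dominated_loc_of_deriv_le univ_mem
    (Eventually.of_forall fun s => (integrable_exp_mul hρ.integrable _).1)
    (integrable_exp_mul hρ.integrable _) hmeas (Eventually.of_forall fun x s _ => hbound x s)
    hboundint (Eventually.of_forall fun x s _ =>
      (hasDerivAt_exp_I_mul_rdot_neg_smul x ξ s).mul_const (ρ x))).2.congr_deriv ?_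
  simp only [testFT]
  rw [← integral_const_mul, ← integral_const_mul,
    ← integral_add ((integrable_exp_mul (hρ.coord_mul 0).integrable _).const_mul _)
      ((integrable_exp_mul (hρ.coord_mul 1).integrable _).const_mul _),
    ← integral_const_mul, ← integral_neg]
  refine integral_congr_ae (Eventually.of_forall fun x => ?_)
  simp only [rdot]
  push_cast
  ring

lemma IsTestFunction.coord_mul_rayAverage {ρ : R2 → ℂ} (hρ : IsTestFunction ρ) (ξ : R2) :
    I * ((ξ 0 : ℂ) * rayAverage (fun x => (x 0 : ℂ) * ρ x) ξ +
      (ξ 1 : ℂ) * rayAverage (fun x => (x 1 : ℂ) * ρ x) ξ) = (∫ x, ρ x) - testFT ρ (-ξ) := by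
  have hcont (i : Fin 2) :
      Continuous fun t : ℝ => testFT (fun x => (x i : ℂ) * ρ x) (-(t • ξ)) :=
    (continuous_testFT (hρ.coord_mul i).integrable).comp (by fun_prop)
  have := hcont 0
  have := hcont 1
  have hftc := intervalIntegral.integral_eq_sub_of_hasDerivAt (a := 0) (b := 1)
    (fun t _ => hρ.hasDerivAt_testFT_neg_smul ξ t)
    (Continuous.intervalIntegrable (by fun_prop) _ _)
  rw [intervalIntegral.integral_neg, intervalIntegral.integral_const_mul,
    intervalIntegral.integral_add (Continuous.intervalIntegrable (by fun_prop) _ _)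
      (Continuous.intervalIntegrable (by fun_prop) _ _),
    intervalIntegral.integral_const_mul, intervalIntegral.integral_const_mul] at hftc
  simp only [one_smul, zero_smul, neg_zero, testFT_zero] at hftc
  simp only [rayAverage]
  linear_combination -hftc

/-- `(E₀, E₁)` is a right inverse of the divergence up to the smoothing multiplier `r`, and all
three send distributions supported in `K` to distributions supported in `K'`. -/
structure IsDivParametrix (E₀ E₁ r : R2 → ℂ) (K K' : Set R2) : Prop where
  smoothing_fst : IsSmoothingMultiplier E₀
  smoothing_snd : IsSmoothingMultiplier E₁
  smoothing_rem : IsSmoothingMultiplier r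
  coord_mul_add : ∀ ξ : R2, I * ((ξ 0 : ℂ) * E₀ ξ + (ξ 1 : ℂ) * E₁ ξ) = 1 - r ξ
  supp : ∀ (s : ℝ) (F : R2 → ℂ), MemHs s F → FTSupportedIn F K →
    FTSupportedIn (fun ξ => E₀ ξ * F ξ) K' ∧ FTSupportedIn (fun ξ => E₁ ξ * F ξ) K' ∧
      FTSupportedIn (fun ξ => r ξ * F ξ) K'

-- Integrating `d/dt ρ̌(-tξ)` over `t ∈ [0,1]` gives Bogovskii's solution of the divergence
-- equation.
lemma exists_isDivParametrix (θ₀ : R2) {ε : ℝ} (hε : 0 < ε) {K K' : Set R2}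
    (hK : ∀ y ∈ K, ∀ θ ∈ Metric.closedBall θ₀ ε, ∀ t ∈ Set.Icc (0 : ℝ) 1, y + t • θ ∈ K') :
    ∃ E₀ E₁ r, IsDivParametrix E₀ E₁ r K K' := by
  obtain ⟨ρ, hρ, hρsupp, hρint, -⟩ := exists_testFunction_in_closedBall θ₀ hε
  have hcoord (i : Fin 2) {F : R2 → ℂ} {s : ℝ} (hF : MemHs s F) (hFK : FTSupportedIn F K) :
      FTSupportedIn (fun ξ => rayAverage (fun x => (x i : ℂ) * ρ x) ξ * F ξ) K' :=
    hFK.rayAverage_mul hF (hρ.coord_mul i) fun y hy θ hθ t ht =>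
      hK y hy θ (hρsupp (tsupport_mul_subset_right hθ)) t ht
  refine ⟨_, _, fun ξ => testFT ρ (-ξ), (hρ.coord_mul 0).isSmoothingMultiplier_rayAverage,
    (hρ.coord_mul 1).isSmoothingMultiplier_rayAverage,
    hρ.rapidlyDecreasing_testFT.isSmoothingMultiplier_neg,
    fun ξ => (hρ.coord_mul_rayAverage ξ).trans (by rw [hρint]),
    fun s F hF hFK => ⟨hcoord 0 hF hFK, hcoord 1 hF hFK, ?_⟩⟩
  have htranslate := hFK.mul_testFT_neg_smul (t := 1) hF hρ fun y hy θ hθ =>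
    hK y hy θ (hρsupp hθ) 1 ⟨zero_le_one, le_rfl⟩
  simpa only [one_smul, mul_comm] using htranslate

/-- An interior cone condition, uniform over `S`: the segments issuing from the points of `S` in
the directions of some fixed ball stay in `K`. -/
def HasInwardCone (K S : Set R2) : Prop :=
  ∃ θ₀ : R2, ∃ ε > 0, ∀ y ∈ S, ∀ θ ∈ Metric.closedBall θ₀ ε, ∀ t ∈ Set.Icc (0 : ℝ) 1, y + t • θ ∈ K

lemma HasInwardCone.mono {K S T : Set R2} (hS : HasInwardCone K S) (hTS : T ⊆ S) :
    HasInwardCone K T :=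
  let ⟨θ₀, ε, hε, h⟩ := hS
  ⟨θ₀, ε, hε, fun y hy => h y (hTS hy)⟩

lemma HasInwardCone.closure {K S : Set R2} (hS : HasInwardCone K S) :
    HasInwardCone (closure K) (closure S) := by
  obtain ⟨θ₀, ε, hε, h⟩ := hS
  exact ⟨θ₀, ε, hε, fun y hy θ hθ t ht => map_mem_closure (f := fun y => y + t • θ) (by fun_prop)
    hy fun z hz => h z hz θ hθ t ht⟩

lemma norm_smul_le_of_mem_Icc {t a : ℝ} (ht : t ∈ Set.Icc (0 : ℝ) 1) {θ : R2} (hθ : ‖θ‖ ≤ a) :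
    ‖t • θ‖ ≤ a := by
  rw [norm_smul, Real.norm_of_nonneg ht.1]
  exact (mul_le_of_le_one_left (norm_nonneg θ) ht.2).trans hθ

lemma hasInwardCone_half_ball (x : R2) {ρ : ℝ} (hρ : 0 < ρ) :
    HasInwardCone (Metric.ball x ρ) (Metric.ball x (ρ / 2)) := by
  refine ⟨0, ρ / 2, by positivity, fun y hy θ hθ t ht => ?_⟩
  rw [mem_ball_iff_norm] at hy ⊢
  calc ‖y + t • θ - x‖ = ‖(y - x) + t • θ‖ := by rw [add_sub_right_comm]
    _ ≤ ‖y - x‖ + ‖t • θ‖ := norm_add_le _ _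
    _ < ρ / 2 + ρ / 2 := add_lt_add_of_lt_of_le hy
        (norm_smul_le_of_mem_Icc ht (mem_closedBall_zero_iff.1 hθ))
    _ = ρ := add_halves ρ

lemma lt_apply_add_smul_of_lipschitzWith {L : ℝ≥0} {f : ℝ → ℝ} (hf : LipschitzWith L f)
    (e : R2 ≃ₗᵢ[ℝ] R2) {h ε t : ℝ} (hεh : ε * (L + 1) ≤ h) (ht : 0 ≤ t) {y θ : R2}
    (hy : f (e y 0) < e y 1)
    (hθ : ‖θ - h • e.symm (EuclideanSpace.single 1 1)‖ ≤ ε) :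
    f (e (y + t • θ) 0) < e (y + t • θ) 1 := by
  set δ : R2 := e (θ - h • e.symm (EuclideanSpace.single 1 1)) with hδ
  have hδε : ‖δ‖ ≤ ε := (e.norm_map _).trans_le hθ
  have hδ0 : |δ 0| ≤ ε := (PiLp.norm_apply_le δ 0).trans hδε
  have hδ1 : |δ 1| ≤ ε := (PiLp.norm_apply_le δ 1).trans hδε
  have hcoord0 : e (y + t • θ) 0 = e y 0 + t * δ 0 := by simp [hδ]
  have hcoord1 : e (y + t • θ) 1 = e y 1 + t * (δ 1 + h) := by simp [hδ]
  have hlip : f (e y 0 + t * δ 0) - f (e y 0) ≤ L * (t * ε) := by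
    calc f (e y 0 + t * δ 0) - f (e y 0) ≤ L * |t * δ 0| := by
          simpa [Real.dist_eq] using
            (le_abs_self _).trans (hf.dist_le_mul (e y 0 + t * δ 0) (e y 0))
      _ ≤ L * (t * ε) := by
          rw [abs_mul, abs_of_nonneg ht]
          gcongr
  have hrise : L * (t * ε) ≤ t * (δ 1 + h) := by
    rw [mul_left_comm]
    exact mul_le_mul_of_nonneg_left (by linarith [(abs_le.1 hδ1).1]) ht
  rw [hcoord0, hcoord1]
  linarith

namespace IsLipschitzDomain

variable {Γ : Set R2}

lemma exists_hasInwardCone_of_mem_frontier (hΓ : IsLipschitzDomain Γ) {x : R2}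
    (hx : x ∈ frontier Γ) : ∃ r > 0, HasInwardCone Γ (Γ ∩ Metric.ball x r) := by
  obtain ⟨e, L, f, U, hf, hU, hxU, hgraph⟩ := hΓ.2.2.2 x hx
  obtain ⟨ρ, hρ, hρU⟩ := Metric.isOpen_iff.1 hU x hxU
  set h : ℝ := ρ / 4 with hh
  set ε : ℝ := h / (L + 1)
  have hεh : ε * (L + 1) ≤ h := (div_mul_cancel₀ h (by positivity)).le
  have hε_le : ε ≤ h := div_le_self (by positivity) (by linarith [L.2])
  refine ⟨ρ / 2, by positivity, h • e.symm (EuclideanSpace.single 1 1), ε, by positivity,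
    fun y ⟨hyΓ, hy⟩ θ hθ t ht => ?_⟩
  rw [mem_ball_iff_norm] at hy
  rw [mem_closedBall_iff_norm] at hθ
  have hθ_le : ‖θ‖ ≤ ρ / 2 := by
    have haxis : ‖h • e.symm (EuclideanSpace.single 1 (1 : ℝ))‖ = h := by
      rw [norm_smul, e.symm.norm_map, Real.norm_of_nonneg (by positivity)]
      simp
    linarith [norm_le_norm_add_norm_sub' θ (h • e.symm (EuclideanSpace.single 1 (1 : ℝ)))]
  have hyU : y ∈ U := hρU (by rw [mem_ball_iff_norm]; linarith)
  have hθU : y + t • θ ∈ U := hρU (by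
    rw [mem_ball_iff_norm, add_sub_right_comm]
    linarith [norm_add_le (y - x) (t • θ), norm_smul_le_of_mem_Icc ht hθ_le])
  exact (hgraph _ hθU).2
    (lt_apply_add_smul_of_lipschitzWith hf e hεh ht.1 ((hgraph y hyU).1 hyΓ) hθ)

lemma exists_hasInwardCone (hΓ : IsLipschitzDomain Γ) {x : R2} (hx : x ∈ closure Γ) :
    ∃ r > 0, HasInwardCone (closure Γ) (closure Γ ∩ Metric.ball x r) := by
  by_cases hxΓ : x ∈ Γ
  · obtain ⟨ρ, hρ, hρΓ⟩ := Metric.isOpen_iff.1 hΓ.1 x hxΓ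
    obtain ⟨θ₀, ε, hε, h⟩ := hasInwardCone_half_ball x hρ
    exact ⟨ρ / 2, by positivity, θ₀, ε, hε, fun y hy θ hθ t ht =>
      subset_closure (hρΓ (h y hy.2 θ hθ t ht))⟩
  · obtain ⟨r, hr, h⟩ := hΓ.exists_hasInwardCone_of_mem_frontier
      (by rw [hΓ.1.frontier_eq]; exact ⟨hx, hxΓ⟩)
    exact ⟨r, hr, h.closure.mono Metric.isOpen_ball.closure_inter⟩

end IsLipschitzDomain

open scoped Manifold in
lemma exists_testFunction_partition {K : Set R2} (hK : IsCompact K) {ι : Type*}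
    [Finite ι] {U : ι → Set R2} (hU : ∀ i, IsOpen (U i)) (hUb : ∀ i, Bornology.IsBounded (U i))
    (hKU : K ⊆ ⋃ i, U i) :
    ∃ χ : ι → R2 → ℂ, (∀ i, IsTestFunction (χ i) ∧ tsupport (χ i) ⊆ U i) ∧
      ∃ O, IsOpen O ∧ K ⊆ O ∧ ∀ x ∈ O, ∑ᶠ i, χ i x = 1 := by
  obtain ⟨δ, hδ, hδU⟩ := hK.exists_cthickening_subset_open (isOpen_iUnion hU) hKU
  obtain ⟨f, hf⟩ := SmoothPartitionOfUnity.exists_isSubordinate 𝓘(ℝ, R2)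
    (Metric.isClosed_cthickening (E := K) (δ := δ)) U hU hδU
  have hsupp (i : ι) : tsupport (fun x => (f i x : ℂ)) ⊆ tsupport (f i) :=
    closure_mono fun x hx hx0 => hx (by simp only [hx0, ofReal_zero])
  refine ⟨fun i x => f i x, fun i => ⟨⟨ofRealCLM.contDiff.comp (f i).contMDiff.contDiff, ?_⟩,
    (hsupp i).trans (hf i)⟩, Metric.thickening δ K, Metric.isOpen_thickening,
    Metric.self_subset_thickening hδ K, fun x hx => ?_⟩
  · exact Metric.isCompact_of_isClosed_isBounded (isClosed_tsupport _)
      ((hUb i).subset ((hsupp i).trans (hf i)))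
  · have hsum := f.sum_eq_one (Metric.thickening_subset_cthickening δ K hx)
    rw [← ofReal_one, ← hsum]
    exact (ofRealCLM.toLinearMap.toAddMonoidHom.map_finsum (Set.toFinite _)).symm

lemma IsLipschitzDomain.exists_partition_isDivParametrix {Γ : Set R2} (hΓ : IsLipschitzDomain Γ) :
    ∃ (ι : Type) (_ : Fintype ι) (χ E₀ E₁ r : ι → R2 → ℂ),
      (∀ i, IsTestFunction (χ i) ∧
        IsDivParametrix (E₀ i) (E₁ i) (r i) (closure Γ ∩ tsupport (χ i)) (closure Γ)) ∧
      ∃ O, IsOpen O ∧ closure Γ ⊆ O ∧ ∀ x ∈ O, ∑ i, χ i x = 1 := by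
  choose r hr hcone using fun x : closure Γ => hΓ.exists_hasInwardCone x.2
  obtain ⟨t, ht⟩ := hΓ.2.1.isCompact_closure.elim_finite_subcover
    (fun x : closure Γ => Metric.ball x.1 (r x)) (fun _ => Metric.isOpen_ball)
    fun x hx => Set.mem_iUnion.2 ⟨⟨x, hx⟩, Metric.mem_ball_self (hr _)⟩
  obtain ⟨χ, hχ, O, hO, hKO, hsum⟩ := exists_testFunction_partition hΓ.2.1.isCompact_closure
    (U := fun x : t => Metric.ball x.1.1 (r x.1)) (fun _ => Metric.isOpen_ball)
    (fun _ => Metric.isBounded_ball) (by rw [Set.iUnion_subtype]; exact ht)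
  have hparametrix (i : t) : ∃ E₀ E₁ m,
      IsDivParametrix E₀ E₁ m (closure Γ ∩ tsupport (χ i)) (closure Γ) :=
    let ⟨θ₀, _, hε, h⟩ := (hcone i.1).mono (Set.inter_subset_inter_right _ (hχ i).2)
    exists_isDivParametrix θ₀ hε h
  choose E₀ E₁ m hE using hparametrix
  exact ⟨t, inferInstance, χ, E₀, E₁, m, fun i => ⟨(hχ i).1, hE i⟩, O, hO, hKO, fun x hx => by
    rw [← finsum_eq_sum_of_fintype, hsum x hx]⟩

section CoordMul

lemma hasFDerivAt_exp_I_mul_rdot (x ξ : R2) :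
    HasFDerivAt (fun x : R2 => exp (I * (rdot x ξ : ℂ)))
      (exp (I * (rdot x ξ : ℂ)) • I • ofRealCLM.comp (innerSL ℝ ξ)) x := by
  have hlin : (fun x : R2 => I * (rdot x ξ : ℂ)) = ⇑(I • ofRealCLM.comp (innerSL ℝ ξ)) := by
    ext x
    simp [rdot_eq_inner, real_inner_comm]
  refine HasFDerivAt.cexp ?_
  rw [hlin]
  exact ContinuousLinearMap.hasFDerivAt _

variable {φ : R2 → ℂ}

lemma IsTestFunction.fderiv_apply (hφ : IsTestFunction φ) (v : R2) :
    IsTestFunction fun x => fderiv ℝ φ x v :=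
  ⟨(hφ.1.fderiv_right (m := ∞) (by simp)).clm_apply contDiff_const, hφ.2.fderiv_apply (𝕜 := ℝ) v⟩

lemma IsTestFunction.testFT_fderiv_single (hφ : IsTestFunction φ) (i : Fin 2) (ξ : R2) :
    testFT (fun x => fderiv ℝ φ x (EuclideanSpace.single i 1)) ξ = -(I * (ξ i * testFT φ ξ)) := by
  have hderiv (x : R2) : fderiv ℝ (fun x : R2 => exp (I * (rdot x ξ : ℂ))) x
      (EuclideanSpace.single i 1) = I * ξ i * exp (I * (rdot x ξ : ℂ)) := by
    rw [(hasFDerivAt_exp_I_mul_rdot x ξ).fderiv]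
    simp [EuclideanSpace.inner_single_right, mul_comm]
  have hparts := integral_mul_fderiv_eq_neg_fderiv_mul_of_integrable (𝕜 := ℂ)
    (μ := (volume : Measure R2)) (f := fun x : R2 => exp (I * (rdot x ξ : ℂ))) (g := φ)
    (v := EuclideanSpace.single i 1)
    (by simpa only [hderiv, mul_assoc] using
      (integrable_exp_mul hφ.integrable ξ).const_mul (I * ξ i))
    (integrable_exp_mul (hφ.fderiv_apply _).integrable ξ) (integrable_exp_mul hφ.integrable ξ)
    (fun x _ => (hasFDerivAt_exp_I_mul_rdot x ξ).differentiableAt)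
    (fun x _ => hφ.1.differentiable (by simp) x)
  rw [testFT, hparts]
  simp only [hderiv, mul_assoc, integral_const_mul, testFT]

variable {s : ℝ} {F G : R2 → ℂ} {K : Set R2}

lemma IsTestFunction.mul_coord_mul_testFT (hφ : IsTestFunction φ) (i : Fin 2) (F : R2 → ℂ)
    (ξ : R2) :
    (ξ i : ℂ) * F ξ * testFT φ ξ =
      I * (F ξ * testFT (fun x => fderiv ℝ φ x (EuclideanSpace.single i 1)) ξ) := by
  rw [hφ.testFT_fderiv_single]
  linear_combination ((ξ i : ℂ) * F ξ * testFT φ ξ) * I_sq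

lemma FTSupportedIn.coord_mul (hFK : FTSupportedIn F K) (i : Fin 2) :
    FTSupportedIn (fun ξ => (ξ i : ℂ) * F ξ) K := by
  intro φ hφ hdisj
  simp only [hφ.mul_coord_mul_testFT, integral_const_mul]
  rw [hFK _ (hφ.fderiv_apply _) (Set.subset_empty_iff.1
    ((Set.inter_subset_inter_left _ (tsupport_fderiv_apply_subset ℝ _)).trans hdisj.subset)),
    mul_zero]

lemma MemHs.integrable_coord_mul_testFT (hF : MemHs s F) (hφ : IsTestFunction φ) (i : Fin 2) :
    Integrable fun ξ : R2 => (ξ i : ℂ) * F ξ * testFT φ ξ := by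
  simp only [hφ.mul_coord_mul_testFT]
  exact (hF.integrable_mul_testFT (hφ.fderiv_apply _)).const_mul I

lemma FTSupportedIn.dotFt (hFK : FTSupportedIn F K) (hGK : FTSupportedIn G K) (hF : MemHs s F)
    (hG : MemHs s G) : FTSupportedIn (dotFt F G) K := by
  intro φ hφ hdisj
  simp only [_root_.dotFt, add_mul]
  rw [integral_add (hF.integrable_coord_mul_testFT hφ 0) (hG.integrable_coord_mul_testFT hφ 1),
    hFK.coord_mul 0 φ hφ hdisj, hGK.coord_mul 1 φ hφ hdisj, add_zero]

lemma FTSupportedIn.add (hFK : FTSupportedIn F K) (hGK : FTSupportedIn G K) (hF : MemHs s F)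
    (hG : MemHs s G) : FTSupportedIn (F + G) K := by
  intro φ hφ hdisj
  simp only [Pi.add_apply, add_mul]
  rw [integral_add (hF.integrable_mul_testFT hφ) (hG.integrable_mul_testFT hφ), hFK φ hφ hdisj,
    hGK φ hφ hdisj, add_zero]

lemma FTSupportedIn.const_smul (hFK : FTSupportedIn F K) (c : ℂ) : FTSupportedIn (c • F) K := by
  intro φ hφ hdisj
  simp only [Pi.smul_apply, smul_eq_mul, mul_assoc]
  rw [integral_const_mul, hFK φ hφ hdisj, mul_zero]

end CoordMul

/-! ### The Hilbert spaces `H̃^s(Γ)` and `X` -/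

namespace HTildeElt

variable {s : ℝ} {Γ : Set R2}

lemma ft_injective : Function.Injective (ft : HTildeElt s Γ → R2 → ℂ) := fun f g h => by
  cases f
  cases g
  congr

lemma memHs (f : HTildeElt s Γ) : MemHs s f.ft := ⟨f.cont.aestronglyMeasurable, f.mem⟩

lemma ftSupportedIn (f : HTildeElt s Γ) : FTSupportedIn f.ft (closure Γ) :=
  fun φ hφ hdisj => f.supp φ hφ.1 hφ.2 hdisj

/-- The space of Fourier transforms of elements of `H̃^s(Γ)`, from which `HTildeElt s Γ` inherits
its vector space structure. -/
def ftSubmodule (s : ℝ) (Γ : Set R2) : Submodule ℂ (R2 → ℂ) where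
  carrier := {F | Continuous F ∧ MemHs s F ∧ FTSupportedIn F (closure Γ)}
  zero_mem' := ⟨continuous_zero, ⟨aestronglyMeasurable_zero, by simp⟩, fun φ _ _ => by simp⟩
  add_mem' hF hG := ⟨hF.1.add hG.1, hF.2.1.add hG.2.1, hF.2.2.add hG.2.2 hF.2.1 hG.2.1⟩
  smul_mem' c _ hF := ⟨hF.1.const_smul c, hF.2.1.const_smul c, hF.2.2.const_smul c⟩

/-- The identification of `HTildeElt s Γ` with `HTildeElt.ftSubmodule s Γ`. -/
def equivFtSubmodule : HTildeElt s Γ ≃ ftSubmodule s Γ where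
  toFun f := ⟨f.ft, f.cont, f.memHs, f.ftSupportedIn⟩
  invFun F := ⟨F.1, F.2.1, F.2.2.1.2, fun φ h₁ h₂ => F.2.2.2 φ ⟨h₁, h₂⟩⟩
  left_inv _ := rfl
  right_inv _ := rfl

instance : AddCommGroup (HTildeElt s Γ) := equivFtSubmodule.addCommGroup

instance : Module ℂ (HTildeElt s Γ) := equivFtSubmodule.module ℂ

lemma ft_add (f g : HTildeElt s Γ) : (f + g).ft = f.ft + g.ft := rfl

lemma ft_smul (c : ℂ) (f : HTildeElt s Γ) : (c • f).ft = c • f.ft := rfl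

/-- The Bessel potential as a linear embedding of `H̃^s(Γ)` into `L²(ℝ²)`, from which
`HTildeElt s Γ` inherits its Hilbert space structure. -/
def toLp : HTildeElt s Γ →ₗ[ℂ] Lp ℂ 2 (volume : Measure R2) where
  toFun f := f.memHs.memLp.toLp (besselPotential s f.ft)
  map_add' f g := by
    simp only [ft_add, besselPotential_add]
    rfl
  map_smul' c f := by
    simp only [ft_smul, besselPotential_smul]
    rfl

lemma coeFn_toLp (f : HTildeElt s Γ) : toLp f =ᵐ[volume] besselPotential s f.ft :=
  f.memHs.memLp.coeFn_toLp

lemma toLp_injective : Function.Injective (toLp : HTildeElt s Γ →ₗ[ℂ] _) := by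
  intro f g hfg
  have hae : besselPotential s f.ft =ᵐ[volume] besselPotential s g.ft :=
    f.coeFn_toLp.symm.trans (hfg ▸ g.coeFn_toLp)
  have heq := Continuous.ae_eq_iff_eq volume (continuous_besselPotential f.cont s)
    (continuous_besselPotential g.cont s) |>.1 hae
  refine ft_injective (funext fun ξ => mul_left_cancel₀ ?_ (congrFun heq ξ))
  have := sobolevWeight_pos (s / 2) ξ
  exact_mod_cast (by positivity : (2 * π)⁻¹ * sobolevWeight (s / 2) ξ ≠ 0)

instance : NormedAddCommGroup (HTildeElt s Γ) :=
  NormedAddCommGroup.induced _ _ toLp toLp_injective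

instance : InnerProductSpace ℂ (HTildeElt s Γ) := InnerProductSpace.induced toLp

lemma norm_eq_wnorm (f : HTildeElt s Γ) : ‖f‖ = wnorm s f.ft := by
  rw [wnorm_eq_toReal_eLpNorm f.memHs.1]
  exact Lp.norm_toLp _ f.memHs.memLp

lemma norm_sq_eq_wnormSq (f : HTildeElt s Γ) : ‖f‖ ^ 2 = wnormSq s f.ft := by
  rw [norm_eq_wnorm, wnorm_sq]

lemma inner_eq_integral (f g : HTildeElt s Γ) : inner ℂ f g =
    ((((2 * π) ^ 2)⁻¹ : ℝ) : ℂ) * ∫ ξ, (sobolevWeight s ξ : ℂ) *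
      (g.ft ξ * starRingEnd ℂ (f.ft ξ)) := by
  rw [← integral_const_mul]
  simp only [← besselPotential_mul_conj]
  refine (L2.inner_def (𝕜 := ℂ) (toLp f) (toLp g)).trans (integral_congr_ae ?_)
  filter_upwards [f.coeFn_toLp, g.coeFn_toLp] with ξ hf hg
  rw [hf, hg]
  rfl

lemma integrable_mul_conj (f g : HTildeElt s Γ) :
    Integrable fun ξ => (sobolevWeight s ξ : ℂ) * (g.ft ξ * starRingEnd ℂ (f.ft ξ)) := by
  have h := g.memHs.memLp.integrable_mul f.memHs.memLp.star
  have hc : ((((2 * π) ^ 2)⁻¹ : ℝ) : ℂ) ≠ 0 := by exact_mod_cast by positivity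
  refine (integrable_const_mul_iff (IsUnit.mk0 _ hc) _).1 (h.congr (ae_of_all _ fun ξ => ?_))
  exact besselPotential_mul_conj s g.ft f.ft ξ

lemma exists_norm_ft_le (hΓ : Bornology.IsBounded Γ) (s R : ℝ) :
    ∃ C, 0 ≤ C ∧ ∀ f : HTildeElt s Γ, (∀ ξ, ‖ξ‖ ≤ R → ‖f.ft ξ‖ ≤ C * ‖f‖) ∧
      ∀ ξ η, ‖ξ‖ ≤ R → ‖η‖ ≤ R → ‖f.ft ξ - f.ft η‖ ≤ C * ‖f‖ * ‖ξ - η‖ := by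
  obtain ⟨C, hC, h⟩ := exists_norm_le_mul_wnorm hΓ.closure s R
  exact ⟨C, hC, fun f => by simpa only [norm_eq_wnorm] using h f.ft f.cont f.memHs f.ftSupportedIn⟩

/-- The restriction of `f̂` to a closed ball, as an operator on `H̃^s(Γ)`. -/
def restrictBall (hΓ : Bornology.IsBounded Γ) (s R : ℝ) :
    HTildeElt s Γ →L[ℂ] (Metric.closedBall (0 : R2) R →ᵇ ℂ) :=
  let hbound (f : HTildeElt s Γ) (ξ : Metric.closedBall (0 : R2) R) :=
    ((exists_norm_ft_le hΓ s R).choose_spec.2 f).1 ξ (mem_closedBall_zero_iff.1 ξ.2)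
  LinearMap.mkContinuous
    { toFun := fun f => BoundedContinuousFunction.ofNormedAddCommGroup
        (fun ξ : Metric.closedBall (0 : R2) R => f.ft ξ) (f.cont.comp continuous_subtype_val) _
        (hbound f)
      map_add' := fun _ _ => rfl
      map_smul' := fun _ _ => rfl }
    (exists_norm_ft_le hΓ s R).choose
    fun f => BoundedContinuousFunction.norm_ofNormedAddCommGroup_le _
      (mul_nonneg (exists_norm_ft_le hΓ s R).choose_spec.1 (norm_nonneg f)) (hbound f)

lemma norm_ft_le_norm_restrictBall (hΓ : Bornology.IsBounded Γ) {R : ℝ} (f : HTildeElt s Γ)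
    {ξ : R2} (hξ : ‖ξ‖ ≤ R) : ‖f.ft ξ‖ ≤ ‖restrictBall hΓ s R f‖ :=
  (restrictBall hΓ s R f).norm_coe_le_norm ⟨ξ, mem_closedBall_zero_iff.2 hξ⟩

lemma isCompactOperator_restrictBall (hΓ : Bornology.IsBounded Γ) (s R : ℝ) :
    IsCompactOperator (restrictBall hΓ s R) := by
  obtain ⟨C, hC, hbound⟩ := exists_norm_ft_le hΓ s R
  have : CompactSpace (Metric.closedBall (0 : R2) R) :=
    isCompact_iff_compactSpace.1 (isCompact_closedBall 0 R)
  have hnorm (ξ : Metric.closedBall (0 : R2) R) := mem_closedBall_zero_iff.1 ξ.2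
  refine (isCompactOperator_iff_isCompact_closure_image_ball
    (restrictBall hΓ s R).toLinearMap one_pos).2
    (BoundedContinuousFunction.arzela_ascoli _ (isCompact_closedBall (0 : ℂ) C) _ ?_ ?_)
  · rintro _ ξ ⟨f, hf, rfl⟩
    exact mem_closedBall_zero_iff.2 (((hbound f).1 ξ (hnorm ξ)).trans
      (mul_le_of_le_one_right hC (mem_ball_zero_iff.1 hf).le))
  · refine (LipschitzWith.uniformEquicontinuous _ ⟨C, hC⟩ ?_).equicontinuous
    rintro ⟨_, f, hf, rfl⟩
    refine LipschitzWith.of_dist_le_mul fun ξ η => ?_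
    rw [Subtype.dist_eq, dist_eq_norm, dist_eq_norm]
    refine ((hbound f).2 ξ η (hnorm ξ) (hnorm η)).trans ?_
    have hf1 : ‖f‖ ≤ 1 := (mem_ball_zero_iff.1 hf).le
    exact mul_le_mul_of_nonneg_right (mul_le_of_le_one_right hC hf1) (norm_nonneg _)

section Complete

variable {u : ℕ → HTildeElt s Γ} {F : R2 → ℂ} {g : Lp ℂ 2 (volume : Measure R2)}

lemma exists_continuous_forall_tendsto (hΓ : Bornology.IsBounded Γ) (hu : CauchySeq u) :
    ∃ F : R2 → ℂ, Continuous F ∧ ∀ ξ, Tendsto (fun n => (u n).ft ξ) atTop (𝓝 (F ξ)) := by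
  have hlim (R : ℝ) : ∃ G : Metric.closedBall (0 : R2) R →ᵇ ℂ,
      ∀ ξ : Metric.closedBall (0 : R2) R, Tendsto (fun n => (u n).ft ξ) atTop (𝓝 (G ξ)) := by
    obtain ⟨G, hG⟩ := cauchySeq_tendsto_of_complete
      ((restrictBall hΓ s R).uniformContinuous.comp_cauchySeq hu)
    exact ⟨G, fun ξ => ((continuous_eval_const ξ).tendsto G).comp hG⟩
  choose G hG using hlim
  let F (ξ : R2) : ℂ := G ‖ξ‖ ⟨ξ, mem_closedBall_zero_iff.2 le_rfl⟩
  have hF (ξ : R2) : Tendsto (fun n => (u n).ft ξ) atTop (𝓝 (F ξ)) := hG ‖ξ‖ ⟨ξ, _⟩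
  refine ⟨F, continuous_iff_continuousAt.2 fun ξ => ?_, hF⟩
  have hrestrict : (Metric.closedBall 0 (‖ξ‖ + 1)).domRestrict F = G (‖ξ‖ + 1) :=
    funext fun η => tendsto_nhds_unique (hF η) (hG _ η)
  have hcont : ContinuousOn F (Metric.closedBall 0 (‖ξ‖ + 1)) :=
    continuousOn_iff_continuous_domRestrict.2 (hrestrict ▸ (G (‖ξ‖ + 1)).continuous)
  refine hcont.continuousAt (Filter.mem_of_superset (Metric.isOpen_ball.mem_nhds ?_)
    Metric.ball_subset_closedBall)
  simp

lemma besselPotential_ae_eq_of_tendsto (hg : Tendsto (fun n => toLp (u n)) atTop (𝓝 g))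
    (hF : ∀ ξ, Tendsto (fun n => (u n).ft ξ) atTop (𝓝 (F ξ))) :
    besselPotential s F =ᵐ[volume] g := by
  obtain ⟨ns, hns, hae⟩ := (tendstoInMeasure_of_tendsto_Lp hg).exists_seq_tendsto_ae
  filter_upwards [hae, ae_all_iff.2 fun n => (u n).coeFn_toLp] with ξ hξ hu
  simp only [hu] at hξ
  exact tendsto_nhds_unique (((hF ξ).comp hns.tendsto_atTop).const_mul _) hξ

lemma wnorm_sub_ft_eq_norm (hF : AEStronglyMeasurable F) (hFg : besselPotential s F =ᵐ[volume] g)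
    (f : HTildeElt s Γ) : wnorm s (F - f.ft) = ‖g - toLp f‖ := by
  rw [wnorm_eq_toReal_eLpNorm (hF.sub f.memHs.1), Lp.norm_def]
  refine congrArg _ (eLpNorm_congr_ae ?_)
  filter_upwards [hFg, f.coeFn_toLp, Lp.coeFn_sub g (toLp f)] with ξ h₁ h₂ h₃
  rw [h₃, Pi.sub_apply, h₂, ← h₁]
  exact mul_sub _ _ _

lemma ftSupportedIn_of_tendsto_wnorm (hF : MemHs s F)
    (hlim : Tendsto (fun n => wnorm s (F - (u n).ft)) atTop (𝓝 0)) :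
    FTSupportedIn F (closure Γ) := by
  intro φ hφ hdisj
  have hle (n : ℕ) : ‖∫ ξ, F ξ * testFT φ ξ‖ ≤
      (2 * π) ^ 2 * (wnorm s (F - (u n).ft) * wnorm (-s) (testFT φ)) := by
    have hsub : ∫ ξ, (F - (u n).ft) ξ * testFT φ ξ = ∫ ξ, F ξ * testFT φ ξ := by
      simp only [Pi.sub_apply, sub_mul]
      rw [integral_sub (hF.integrable_mul_testFT hφ) ((u n).memHs.integrable_mul_testFT hφ),
        (u n).ftSupportedIn φ hφ hdisj, sub_zero]
    rw [← hsub]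
    exact (norm_integral_le_integral_norm _).trans
      ((hF.sub (u n).memHs).integral_norm_mul_le (hφ.rapidlyDecreasing_testFT.memHs _))
  have hzero := (hlim.mul_const (wnorm (-s) (testFT φ))).const_mul ((2 * π) ^ 2)
  rw [zero_mul, mul_zero] at hzero
  exact norm_le_zero_iff.1 (ge_of_tendsto' hzero hle)

end Complete

lemma completeSpace (hΓ : Bornology.IsBounded Γ) (s : ℝ) : CompleteSpace (HTildeElt s Γ) := by
  have hiso : Isometry (toLp : HTildeElt s Γ →ₗ[ℂ] _) :=
    AddMonoidHomClass.isometry_of_norm _ fun _ => rfl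
  refine Metric.complete_of_cauchySeq_tendsto fun u hu => ?_
  obtain ⟨g, hg⟩ := cauchySeq_tendsto_of_complete (hiso.uniformContinuous.comp_cauchySeq hu)
  obtain ⟨F, hFc, hF⟩ := exists_continuous_forall_tendsto hΓ hu
  have hFg : besselPotential s F =ᵐ[volume] g := besselPotential_ae_eq_of_tendsto hg hF
  have hFs : MemHs s F :=
    memHs_of_memLp hFc.aestronglyMeasurable ((memLp_congr_ae hFg).2 (Lp.memLp g))
  have hlim : Tendsto (fun n => wnorm s (F - (u n).ft)) atTop (𝓝 0) := by
    simp only [wnorm_sub_ft_eq_norm hFs.1 hFg]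
    simpa using (hg.const_sub g).norm
  have hFK := ftSupportedIn_of_tendsto_wnorm hFs hlim
  refine ⟨⟨F, hFc, hFs.2, fun φ h₁ h₂ => hFK φ ⟨h₁, h₂⟩⟩, tendsto_iff_norm_sub_tendsto_zero.2 ?_⟩
  refine hlim.congr fun n => ?_
  rw [← norm_neg, neg_sub, norm_eq_wnorm]
  rfl

end HTildeElt

lemma HTildeElt.continuous_ft_apply {s : ℝ} {Γ : Set R2} (hΓ : Bornology.IsBounded Γ) (ξ : R2) :
    Continuous fun f : HTildeElt s Γ => f.ft ξ :=
  (continuous_eval_const (⟨ξ, mem_closedBall_zero_iff.2 le_rfl⟩ :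
    Metric.closedBall (0 : R2) ‖ξ‖)).comp (restrictBall hΓ s ‖ξ‖).continuous

lemma dotFt_add (F₁ F₂ G₁ G₂ : R2 → ℂ) : dotFt (F₁ + G₁) (F₂ + G₂) = dotFt F₁ F₂ + dotFt G₁ G₂ := by
  funext ξ
  simp only [dotFt, Pi.add_apply]
  ring

lemma dotFt_smul (c : ℂ) (F₁ F₂ : R2 → ℂ) : dotFt (c • F₁) (c • F₂) = c • dotFt F₁ F₂ := by
  funext ξ
  simp only [dotFt, Pi.smul_apply, smul_eq_mul]
  ring

lemma continuous_dotFt {F₁ F₂ : R2 → ℂ} (h₁ : Continuous F₁) (h₂ : Continuous F₂) :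
    Continuous (dotFt F₁ F₂) := by
  unfold dotFt
  fun_prop

namespace Xelt

variable {Γ : Set R2}

lemma memHs_dotFt (V : Xelt Γ) : MemHs (-(1 / 2)) (dotFt V.c1.ft V.c2.ft) :=
  ⟨(continuous_dotFt V.c1.cont V.c2.cont).aestronglyMeasurable, V.divMem⟩

/-- The divergence of a vector field in `X`. -/
def div (V : Xelt Γ) : HTildeElt (-(1 / 2)) Γ where
  ft := divFt V
  cont := continuous_const.mul (continuous_dotFt V.c1.cont V.c2.cont)
  mem := (V.memHs_dotFt.const_smul I).2
  supp φ h₁ h₂ := (V.c1.ftSupportedIn.dotFt V.c2.ftSupportedIn V.c1.memHs V.c2.memHs).const_smul I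
    φ ⟨h₁, h₂⟩

lemma div_ft (V : Xelt Γ) : V.div.ft = I • dotFt V.c1.ft V.c2.ft := rfl

/-- The pairs of elements of `H̃^{-1/2}(Γ)` with divergence in `H̃^{-1/2}(Γ)`, from which `Xelt Γ`
inherits its vector space structure. -/
def divSubmodule (Γ : Set R2) :
    Submodule ℂ (HTildeElt (-(1 / 2)) Γ × HTildeElt (-(1 / 2)) Γ) where
  carrier := {p | MemHs (-(1 / 2)) (dotFt p.1.ft p.2.ft)}
  zero_mem' := by
    have h : dotFt (0 : R2 → ℂ) 0 = 0 := by simpa using dotFt_smul 0 0 0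
    change MemHs _ (dotFt (0 : R2 → ℂ) 0)
    rw [h]
    exact (0 : HTildeElt (-(1 / 2)) Γ).memHs
  add_mem' {p q} hp hq := by
    change MemHs _ (dotFt (p.1.ft + q.1.ft) (p.2.ft + q.2.ft))
    rw [dotFt_add]
    exact MemHs.add hp hq
  smul_mem' c p hp := by
    change MemHs _ (dotFt (c • p.1.ft) (c • p.2.ft))
    rw [dotFt_smul]
    exact MemHs.const_smul hp c

/-- The identification of `Xelt Γ` with `Xelt.divSubmodule Γ`. -/
def equivDivSubmodule : Xelt Γ ≃ divSubmodule Γ where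
  toFun V := ⟨(V.c1, V.c2), V.memHs_dotFt⟩
  invFun p := ⟨p.1.1, p.1.2, p.2.2⟩
  left_inv _ := rfl
  right_inv _ := rfl

instance : AddCommGroup (Xelt Γ) := equivDivSubmodule.addCommGroup

instance : Module ℂ (Xelt Γ) := equivDivSubmodule.module ℂ

lemma c1_add (V W : Xelt Γ) : (V + W).c1 = V.c1 + W.c1 := rfl

lemma c2_add (V W : Xelt Γ) : (V + W).c2 = V.c2 + W.c2 := rfl

lemma c1_smul (c : ℂ) (V : Xelt Γ) : (c • V).c1 = c • V.c1 := rfl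

lemma c2_smul (c : ℂ) (V : Xelt Γ) : (c • V).c2 = c • V.c2 := rfl

lemma div_add (V W : Xelt Γ) : (V + W).div = V.div + W.div := HTildeElt.ft_injective <| by
  rw [HTildeElt.ft_add, div_ft, div_ft, div_ft, ← smul_add, ← dotFt_add]
  rfl

lemma div_smul (c : ℂ) (V : Xelt Γ) : (c • V).div = c • V.div := HTildeElt.ft_injective <| by
  rw [HTildeElt.ft_smul, div_ft, div_ft, smul_comm c, ← dotFt_smul c]
  rfl

/-- The embedding `V ↦ (V₁, V₂, div V)`, from which `Xelt Γ` inherits its Hilbert space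
structure. -/
def toPi : Xelt Γ →ₗ[ℂ] PiLp 2 fun _ : Fin 3 => HTildeElt (-(1 / 2)) Γ where
  toFun V := WithLp.toLp 2 ![V.c1, V.c2, V.div]
  map_add' V W := by
    rw [div_add]
    ext i : 1
    fin_cases i <;> rfl
  map_smul' c V := by
    rw [div_smul]
    ext i : 1
    fin_cases i <;> rfl

lemma ext {V W : Xelt Γ} (h₁ : V.c1 = W.c1) (h₂ : V.c2 = W.c2) : V = W := by
  cases V
  cases W
  congr

lemma toPi_injective : Function.Injective (toPi : Xelt Γ →ₗ[ℂ] _) := fun _ _ hVW =>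
  ext (congrArg (fun p => p 0) hVW) (congrArg (fun p => p 1) hVW)

instance : NormedAddCommGroup (Xelt Γ) := NormedAddCommGroup.induced _ _ toPi toPi_injective

instance : InnerProductSpace ℂ (Xelt Γ) := InnerProductSpace.induced toPi

lemma norm_sq_eq (V : Xelt Γ) : ‖V‖ ^ 2 = ‖V.c1‖ ^ 2 + ‖V.c2‖ ^ 2 + ‖V.div‖ ^ 2 := by
  refine (PiLp.norm_sq_eq_of_L2 _ (toPi V)).trans ?_
  rw [Fin.sum_univ_three]
  rfl

lemma Xnorm_eq_norm (V : Xelt Γ) : Xnorm V = ‖V‖ := by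
  rw [Xnorm, ← Real.sqrt_sq (norm_nonneg V), norm_sq_eq]
  simp only [HTildeElt.norm_sq_eq_wnormSq]
  rfl

lemma Xinner_eq_inner (Y V : Xelt Γ) : Xinner Y V = inner ℂ V Y := by
  have hinner : inner ℂ V Y =
      inner ℂ V.c1 Y.c1 + inner ℂ V.c2 Y.c2 + inner ℂ V.div Y.div := by
    refine (PiLp.inner_apply (toPi V) (toPi Y)).trans ?_
    rw [Fin.sum_univ_three]
    rfl
  have h₁ := HTildeElt.integrable_mul_conj V.c1 Y.c1
  have h₂ := HTildeElt.integrable_mul_conj V.c2 Y.c2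
  have h₃ := HTildeElt.integrable_mul_conj V.div Y.div
  rw [hinner]
  simp only [HTildeElt.inner_eq_integral]
  rw [← mul_add, ← mul_add, ← integral_add h₁ h₂, ← integral_add (by exact h₁.add h₂) h₃]
  simp only [← mul_add]
  rfl

lemma norm_c1_le (V : Xelt Γ) : ‖V.c1‖ ≤ ‖V‖ := PiLp.norm_apply_le (toPi V) 0

lemma norm_c2_le (V : Xelt Γ) : ‖V.c2‖ ≤ ‖V‖ := PiLp.norm_apply_le (toPi V) 1

lemma norm_le (V : Xelt Γ) : ‖V‖ ≤ ‖V.c1‖ + ‖V.c2‖ + ‖V.div‖ := by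
  refine abs_le_of_sq_le_sq' ?_ (by positivity) |>.2
  rw [norm_sq_eq]
  have := norm_nonneg V.c1
  have := norm_nonneg V.c2
  have := norm_nonneg V.div
  nlinarith

lemma range_toPi : Set.range (toPi : Xelt Γ →ₗ[ℂ] _) =
    {p | ∀ ξ, (p 2).ft ξ = I * dotFt (p 0).ft (p 1).ft ξ} := by
  refine Set.Subset.antisymm (Set.range_subset_iff.2 fun V ξ => rfl) fun p hp => ?_
  have hdot : dotFt (p 0).ft (p 1).ft = (-I) • (p 2).ft := by
    funext ξ
    rw [Pi.smul_apply, hp ξ, smul_eq_mul, ← mul_assoc, neg_mul, I_mul_I, neg_neg, one_mul]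
  refine ⟨⟨p 0, p 1, (hdot ▸ (p 2).memHs.const_smul (-I) : MemHs _ _).2⟩, ?_⟩
  ext i : 1
  fin_cases i
  exacts [rfl, rfl, HTildeElt.ft_injective (funext fun ξ => (hp ξ).symm)]

lemma completeSpace (hΓ : Bornology.IsBounded Γ) : CompleteSpace (Xelt Γ) := by
  have hiso : Isometry (toPi : Xelt Γ →ₗ[ℂ] _) := AddMonoidHomClass.isometry_of_norm _ fun _ => rfl
  have := HTildeElt.completeSpace hΓ (-(1 / 2))
  rw [completeSpace_iff_isComplete_range hiso.isUniformInducing, range_toPi]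
  have hcont (i : Fin 3) (ξ : R2) : Continuous
      fun p : PiLp 2 fun _ : Fin 3 => HTildeElt (-(1 / 2)) Γ => (p i).ft ξ :=
    (HTildeElt.continuous_ft_apply hΓ ξ).comp (PiLp.continuous_apply 2 _ i)
  simp only [Set.ofPred_forall]
  refine (isClosed_iInter fun ξ => isClosed_eq (hcont 2 ξ) ?_).isComplete
  have := hcont 0 ξ
  have := hcont 1 ξ
  simp only [dotFt]
  fun_prop

end Xelt

/-! ### The sesquilinear form -/

lemma norm_dotFt_sq_add_norm_curlFt_sq (F₁ F₂ : R2 → ℂ) (ξ : R2) :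
    ‖dotFt F₁ F₂ ξ‖ ^ 2 + ‖curlFt F₁ F₂ ξ‖ ^ 2 = ‖ξ‖ ^ 2 * (‖F₁ ξ‖ ^ 2 + ‖F₂ ξ‖ ^ 2) := by
  rw [EuclideanSpace.norm_sq_eq ξ, Fin.sum_univ_two]
  simp only [← normSq_eq_norm_sq, dotFt, curlFt, normSq_apply, Real.norm_eq_abs, sq_abs, add_re,
    add_im, sub_re, sub_im, mul_re, mul_im, ofReal_re, ofReal_im]
  ring

section Multiplier

variable {k : ℝ} {ξ : R2}

lemma norm_g0hat (hk : 0 ≤ k) (ξ : R2) : ‖g0hat k ξ‖ = (√|k ^ 2 - ‖ξ‖ ^ 2|)⁻¹ := by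
  have hξ := norm_nonneg ξ
  unfold g0hat
  split_ifs with h
  · rw [norm_div, norm_I, norm_real, Real.norm_of_nonneg (Real.sqrt_nonneg _), one_div,
      abs_of_nonneg (by nlinarith)]
  · rw [norm_div, norm_one, norm_real, Real.norm_of_nonneg (Real.sqrt_nonneg _), one_div,
      abs_of_nonpos (by nlinarith), neg_sub]

lemma measurable_g0hat (k : ℝ) : Measurable (g0hat k) :=
  Measurable.ite (measurableSet_lt (by fun_prop) (by fun_prop)) (by fun_prop) (by fun_prop)

lemma integrableOn_inv_sqrt_abs_sub (c r : ℝ) :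
    IntegrableOn (fun y : ℝ => (√|y - c|)⁻¹) (Metric.ball c r) := by
  have hcentered : IntegrableOn (fun y : ℝ => (√‖y‖)⁻¹) (Metric.ball 0 r) := by
    rw [integrableOn_fun_norm_addHaar (volume : Measure ℝ) (f := fun y => (√y)⁻¹)]
    have hrpow := (intervalIntegral.intervalIntegrable_rpow' (a := 0) (b := r)
      (r := -(1 / 2)) (by norm_num)).1.mono_set Set.Ioo_subset_Ioc_self
    refine hrpow.congr_fun (fun y hy => ?_) measurableSet_Ioo
    simp only [Real.rpow_neg hy.1.le, Real.sqrt_eq_rpow, Module.finrank_self, Nat.sub_self,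
      pow_zero, one_smul]
  have hpre : (fun y : ℝ => y - c) ⁻¹' Metric.ball 0 r = Metric.ball c r := by
    ext y
    simp only [Set.mem_preimage, Metric.mem_ball, Real.dist_eq, sub_zero]
  rw [← hpre]
  exact ((measurePreserving_sub_right volume c).integrableOn_comp_preimage
    (MeasurableEquiv.subRight c).measurableEmbedding).2 hcentered

lemma integrableOn_norm_g0hat (hk : 0 < k) (R : ℝ) :
    IntegrableOn (fun ξ => ‖g0hat k ξ‖) (Metric.ball (0 : R2) R) := by
  simp only [norm_g0hat hk.le]
  rw [integrableOn_fun_norm_addHaar (volume : Measure R2) (f := fun y => (√|k ^ 2 - y ^ 2|)⁻¹)]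
  have hball : Set.Ioo 0 R ⊆ Metric.ball k (R + k) := fun y hy => by
    rw [Metric.mem_ball, Real.dist_eq, abs_lt]
    exact ⟨by linarith [hy.1, hy.2], by linarith [hy.1, hy.2]⟩
  refine Integrable.mono' (((integrableOn_inv_sqrt_abs_sub k (R + k)).mono_set hball).const_mul
    (R * (√k)⁻¹)) (Measurable.aestronglyMeasurable (by fun_prop))
    ((ae_restrict_iff' measurableSet_Ioo).2 (.of_forall fun y hy => ?_))
  simp only [finrank_euclideanSpace, Fintype.card_fin, Nat.add_one_sub_one, pow_one, smul_eq_mul]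
  have hle : k * |y - k| ≤ |k ^ 2 - y ^ 2| := by
    rw [abs_sub_comm, sq_sub_sq, abs_mul, abs_of_pos (add_pos hk hy.1)]
    exact mul_le_mul_of_nonneg_right (le_add_of_nonneg_right hy.1.le) (abs_nonneg _)
  rw [Real.norm_of_nonneg (mul_nonneg hy.1.le (by positivity)), mul_assoc]
  refine mul_le_mul hy.2.le ?_ (by positivity) (hy.1.trans hy.2).le
  rcases eq_or_ne y k with rfl | hyk
  · simp only [sub_self, abs_zero, Real.sqrt_zero, inv_zero, mul_zero, le_refl]
  · have : 0 < |y - k| := abs_pos.2 (sub_ne_zero.2 hyk)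
    rw [← mul_inv, ← Real.sqrt_mul hk.le]
    gcongr

lemma sobolevWeight_neg_half (ξ : R2) : sobolevWeight (-(1 / 2)) ξ = (√(1 + ‖ξ‖ ^ 2))⁻¹ := by
  rw [sobolevWeight_neg, sobolevWeight, Real.sqrt_eq_rpow]

lemma sobolevWeight_neg_half_le_norm_g0hat (hk : 0 ≤ k) (hξ : k < ‖ξ‖) :
    sobolevWeight (-(1 / 2)) ξ ≤ ‖g0hat k ξ‖ := by
  have hpos : k ^ 2 - ‖ξ‖ ^ 2 < 0 := by nlinarith
  rw [sobolevWeight_neg_half, norm_g0hat hk, abs_of_neg hpos]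
  have : 0 < √(-(k ^ 2 - ‖ξ‖ ^ 2)) := Real.sqrt_pos.2 (neg_pos.2 hpos)
  gcongr
  nlinarith

lemma norm_g0hat_le (hk : 0 ≤ k) (hξ : 2 * k + 1 ≤ ‖ξ‖) :
    ‖g0hat k ξ‖ ≤ 2 * sobolevWeight (-(1 / 2)) ξ := by
  have hle : 1 + ‖ξ‖ ^ 2 ≤ 2 ^ 2 * |k ^ 2 - ‖ξ‖ ^ 2| := by
    rw [abs_of_nonpos (by nlinarith)]
    nlinarith
  have hsqrt : √(1 + ‖ξ‖ ^ 2) ≤ 2 * √|k ^ 2 - ‖ξ‖ ^ 2| := by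
    simpa using Real.sqrt_le_sqrt hle
  have hpos : 0 < √(1 + ‖ξ‖ ^ 2) := by positivity
  rw [sobolevWeight_neg_half, norm_g0hat hk, ← div_eq_mul_inv, inv_eq_one_div,
    div_le_div_iff₀ (by linarith) hpos]
  linarith

end Multiplier

/-- The pointwise energy `|ĝ₀| (| |ξ|² - k² | |a₁|² + k² |a₂|²)` of the field with Fourier transform
`(F₁, F₂)`, which dominates the integrand of `B`. -/
def energyDensity (k : ℝ) (F₁ F₂ : R2 → ℂ) (ξ : R2) : ℝ :=
  ‖g0hat k ξ‖ *
    (|‖ξ‖ ^ 2 - k ^ 2| * ‖dotFt F₁ F₂ ξ‖ ^ 2 + k ^ 2 * ‖curlFt F₁ F₂ ξ‖ ^ 2) / ‖ξ‖ ^ 2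

section EnergyDensity

variable {k R : ℝ} {F₁ F₂ G₁ G₂ : R2 → ℂ} {ξ : R2}

lemma energyDensity_nonneg (k : ℝ) (F₁ F₂ : R2 → ℂ) (ξ : R2) : 0 ≤ energyDensity k F₁ F₂ ξ := by
  unfold energyDensity
  positivity

lemma measurable_energyDensity (h₁ : Measurable F₁) (h₂ : Measurable F₂) :
    Measurable (energyDensity k F₁ F₂) := by
  have := measurable_g0hat k
  unfold energyDensity dotFt curlFt
  fun_prop

lemma measurable_Bintegrand (hF₁ : Measurable F₁) (hF₂ : Measurable F₂) (hG₁ : Measurable G₁)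
    (hG₂ : Measurable G₂) : Measurable (Bintegrand k F₁ F₂ G₁ G₂) := by
  have := measurable_g0hat k
  unfold Bintegrand dotFt curlFt
  fun_prop

lemma norm_Bintegrand_le (k : ℝ) (F₁ F₂ G₁ G₂ : R2 → ℂ) (ξ : R2) :
    ‖Bintegrand k F₁ F₂ G₁ G₂ ξ‖ ≤ (energyDensity k F₁ F₂ ξ + energyDensity k G₁ G₂ ξ) / 2 := by
  have hamgm (a b : ℝ) : a * b ≤ (a ^ 2 + b ^ 2) / 2 := by linarith [two_mul_le_add_sq a b]
  calc ‖Bintegrand k F₁ F₂ G₁ G₂ ξ‖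
      ≤ ‖g0hat k ξ‖ * (|‖ξ‖ ^ 2 - k ^ 2| * (‖dotFt F₁ F₂ ξ‖ * ‖dotFt G₁ G₂ ξ‖) +
        k ^ 2 * (‖curlFt F₁ F₂ ξ‖ * ‖curlFt G₁ G₂ ξ‖)) / ‖ξ‖ ^ 2 := by
        rw [Bintegrand, norm_div, norm_mul, norm_real, Real.norm_of_nonneg (sq_nonneg ‖ξ‖)]
        gcongr
        refine (norm_sub_le _ _).trans_eq ?_
        simp only [norm_mul, RCLike.norm_conj, norm_real, Real.norm_of_nonneg (sq_nonneg k),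
          Real.norm_eq_abs]
    _ ≤ ‖g0hat k ξ‖ * (|‖ξ‖ ^ 2 - k ^ 2| * ((‖dotFt F₁ F₂ ξ‖ ^ 2 + ‖dotFt G₁ G₂ ξ‖ ^ 2) / 2) +
        k ^ 2 * ((‖curlFt F₁ F₂ ξ‖ ^ 2 + ‖curlFt G₁ G₂ ξ‖ ^ 2) / 2)) / ‖ξ‖ ^ 2 := by
        gcongr <;> exact hamgm _ _
    _ = (energyDensity k F₁ F₂ ξ + energyDensity k G₁ G₂ ξ) / 2 := by
        unfold energyDensity
        ring

lemma energyDensity_le_of_norm_le (hk : 0 ≤ k) (hkR : k ≤ R) (hξ : ‖ξ‖ ≤ R) :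
    energyDensity k F₁ F₂ ξ ≤ R ^ 2 * (‖g0hat k ξ‖ * (‖F₁ ξ‖ ^ 2 + ‖F₂ ξ‖ ^ 2)) := by
  have hξ0 := norm_nonneg ξ
  have hsymbol : |‖ξ‖ ^ 2 - k ^ 2| ≤ R ^ 2 := by
    rw [abs_le]
    constructor <;> nlinarith
  refine div_le_of_le_mul₀ (by positivity) (by positivity) ?_
  calc ‖g0hat k ξ‖ * (|‖ξ‖ ^ 2 - k ^ 2| * ‖dotFt F₁ F₂ ξ‖ ^ 2 + k ^ 2 * ‖curlFt F₁ F₂ ξ‖ ^ 2)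
      ≤ ‖g0hat k ξ‖ * (R ^ 2 * ‖dotFt F₁ F₂ ξ‖ ^ 2 + R ^ 2 * ‖curlFt F₁ F₂ ξ‖ ^ 2) := by gcongr
    _ = R ^ 2 * (‖g0hat k ξ‖ * (‖F₁ ξ‖ ^ 2 + ‖F₂ ξ‖ ^ 2)) * ‖ξ‖ ^ 2 := by
        rw [← mul_add, norm_dotFt_sq_add_norm_curlFt_sq]
        ring

lemma energyDensity_le_of_le_norm (hk : 0 ≤ k) (hξ : 2 * k + 1 ≤ ‖ξ‖) :
    energyDensity k F₁ F₂ ξ ≤ 2 * (sobolevWeight (-(1 / 2)) ξ * ‖dotFt F₁ F₂ ξ‖ ^ 2) +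
      2 * k ^ 2 * (sobolevWeight (-(1 / 2)) ξ * (‖F₁ ξ‖ ^ 2 + ‖F₂ ξ‖ ^ 2)) := by
  have hsymbol : |‖ξ‖ ^ 2 - k ^ 2| ≤ ‖ξ‖ ^ 2 := by
    rw [abs_le]
    constructor <;> nlinarith
  have hcurl : ‖curlFt F₁ F₂ ξ‖ ^ 2 ≤ ‖ξ‖ ^ 2 * (‖F₁ ξ‖ ^ 2 + ‖F₂ ξ‖ ^ 2) := by
    rw [← norm_dotFt_sq_add_norm_curlFt_sq]
    exact le_add_of_nonneg_left (sq_nonneg _)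
  have hw := sobolevWeight_pos (-(1 / 2)) ξ
  refine div_le_of_le_mul₀ (by positivity) (by positivity) ?_
  calc ‖g0hat k ξ‖ * (|‖ξ‖ ^ 2 - k ^ 2| * ‖dotFt F₁ F₂ ξ‖ ^ 2 + k ^ 2 * ‖curlFt F₁ F₂ ξ‖ ^ 2)
      ≤ 2 * sobolevWeight (-(1 / 2)) ξ * (‖ξ‖ ^ 2 * ‖dotFt F₁ F₂ ξ‖ ^ 2 +
        k ^ 2 * (‖ξ‖ ^ 2 * (‖F₁ ξ‖ ^ 2 + ‖F₂ ξ‖ ^ 2))) := by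
        gcongr
        exact norm_g0hat_le hk hξ
    _ = _ := by ring

end EnergyDensity

lemma isCompactOperator_prodMk {E F G : Type*} [TopologicalSpace E] [Zero E] [TopologicalSpace F]
    [TopologicalSpace G] {f : E → F} {g : E → G} (hf : IsCompactOperator f)
    (hg : IsCompactOperator g) : IsCompactOperator fun x => (f x, g x) := by
  obtain ⟨K, hK, hfK⟩ := hf
  obtain ⟨L, hL, hgL⟩ := hg
  exact ⟨K ×ˢ L, hK.prod hL, inter_mem hfK hgL⟩

namespace Xelt

variable {Γ : Set R2}

/-- The first component, as a bounded operator. -/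
def c1L (Γ : Set R2) : Xelt Γ →L[ℂ] HTildeElt (-(1 / 2)) Γ :=
  LinearMap.mkContinuous ⟨⟨c1, c1_add⟩, c1_smul⟩ 1 fun V => (one_mul ‖V‖).symm ▸ V.norm_c1_le

/-- The second component, as a bounded operator. -/
def c2L (Γ : Set R2) : Xelt Γ →L[ℂ] HTildeElt (-(1 / 2)) Γ :=
  LinearMap.mkContinuous ⟨⟨c2, c2_add⟩, c2_smul⟩ 1 fun V => (one_mul ‖V‖).symm ▸ V.norm_c2_le

/-- The restriction of the Fourier transform of a vector field to a ball. -/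
def restrictBall (hΓ : Bornology.IsBounded Γ) (R : ℝ) : Xelt Γ →L[ℂ]
    (Metric.closedBall (0 : R2) R →ᵇ ℂ) × (Metric.closedBall (0 : R2) R →ᵇ ℂ) :=
  ((HTildeElt.restrictBall hΓ _ R).comp (c1L Γ)).prod ((HTildeElt.restrictBall hΓ _ R).comp (c2L Γ))

lemma isCompactOperator_restrictBall (hΓ : Bornology.IsBounded Γ) (R : ℝ) :
    IsCompactOperator (restrictBall hΓ R) :=
  isCompactOperator_prodMk
    ((HTildeElt.isCompactOperator_restrictBall hΓ (-(1 / 2)) R).comp_clm (c1L Γ))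
    ((HTildeElt.isCompactOperator_restrictBall hΓ (-(1 / 2)) R).comp_clm (c2L Γ))

lemma norm_sq_ft_le (hΓ : Bornology.IsBounded Γ) {R : ℝ} {ξ : R2} (hξ : ‖ξ‖ ≤ R) (V : Xelt Γ) :
    ‖V.c1.ft ξ‖ ^ 2 + ‖V.c2.ft ξ‖ ^ 2 ≤ 2 * ‖restrictBall hΓ R V‖ ^ 2 := by
  have h₁ : ‖V.c1.ft ξ‖ ≤ ‖restrictBall hΓ R V‖ :=
    (HTildeElt.norm_ft_le_norm_restrictBall hΓ V.c1 hξ).trans (norm_fst_le (restrictBall hΓ R V))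
  have h₂ : ‖V.c2.ft ξ‖ ≤ ‖restrictBall hΓ R V‖ :=
    (HTildeElt.norm_ft_le_norm_restrictBall hΓ V.c2 hξ).trans (norm_snd_le (restrictBall hΓ R V))
  have h₁' := pow_le_pow_left₀ (norm_nonneg _) h₁ 2
  have h₂' := pow_le_pow_left₀ (norm_nonneg _) h₂ 2
  linarith

lemma integrable_sobolevWeight_mul_norm_sq (V : Xelt Γ) :
    Integrable fun ξ => sobolevWeight (-(1 / 2)) ξ * (‖V.c1.ft ξ‖ ^ 2 + ‖V.c2.ft ξ‖ ^ 2) := by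
  simp only [mul_add]
  exact V.c1.mem.add V.c2.mem

lemma integral_sobolevWeight_mul (V : Xelt Γ) :
    (∫ ξ, sobolevWeight (-(1 / 2)) ξ * ‖dotFt V.c1.ft V.c2.ft ξ‖ ^ 2) +
      ∫ ξ, sobolevWeight (-(1 / 2)) ξ * (‖V.c1.ft ξ‖ ^ 2 + ‖V.c2.ft ξ‖ ^ 2) =
      (2 * π) ^ 2 * ‖V‖ ^ 2 := by
  have h₁ := V.c1.mem
  have h₂ := V.c2.mem
  have hsum := integral_add h₁ h₂
  have hdiv : V.div.ft = fun ξ => I * dotFt V.c1.ft V.c2.ft ξ := rfl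
  rw [norm_sq_eq, HTildeElt.norm_sq_eq_wnormSq, HTildeElt.norm_sq_eq_wnormSq,
    HTildeElt.norm_sq_eq_wnormSq, hdiv]
  simp only [wnormSq, norm_mul, norm_I, one_mul, sobolevWeight, mul_add] at hsum ⊢
  rw [hsum]
  field_simp
  ring

end Xelt

/-- The weight `1 + |ĝ₀|`, cut off to the ball of radius `R`. -/
def lowFreqWeight (k R : ℝ) : R2 → ℝ :=
  (Metric.ball 0 R).indicator fun ξ => 1 + ‖g0hat k ξ‖

section LowFreqWeight

variable {k R : ℝ} {ξ : R2}

lemma lowFreqWeight_nonneg (k R : ℝ) (ξ : R2) : 0 ≤ lowFreqWeight k R ξ :=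
  Set.indicator_nonneg (fun _ _ => by positivity) _

lemma lowFreqWeight_of_lt (h : ‖ξ‖ < R) : lowFreqWeight k R ξ = 1 + ‖g0hat k ξ‖ :=
  Set.indicator_of_mem (mem_ball_zero_iff.2 h) _

lemma integrable_lowFreqWeight (hk : 0 < k) (R : ℝ) : Integrable (lowFreqWeight k R) :=
  (integrable_indicator_iff measurableSet_ball).2
    ((integrableOn_const Metric.isBounded_ball.measure_lt_top.ne).add
      (integrableOn_norm_g0hat hk R))

variable {Γ : Set R2}

lemma lowFreqWeight_mul_norm_sq_le (hΓ : Bornology.IsBounded Γ) (k R : ℝ) (ξ : R2) (V : Xelt Γ) :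
    lowFreqWeight k R ξ * (‖V.c1.ft ξ‖ ^ 2 + ‖V.c2.ft ξ‖ ^ 2) ≤
      lowFreqWeight k R ξ * (2 * ‖V.restrictBall hΓ R‖ ^ 2) := by
  by_cases h : ξ ∈ Metric.ball 0 R
  · exact mul_le_mul_of_nonneg_left (V.norm_sq_ft_le hΓ (mem_ball_zero_iff.1 h).le)
      (lowFreqWeight_nonneg k R ξ)
  · simp only [lowFreqWeight, Set.indicator_of_notMem h, zero_mul, le_refl]

lemma integrable_lowFreqWeight_mul_norm_sq (hΓ : Bornology.IsBounded Γ) (hk : 0 < k) (R : ℝ)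
    (V : Xelt Γ) :
    Integrable fun ξ => lowFreqWeight k R ξ * (‖V.c1.ft ξ‖ ^ 2 + ‖V.c2.ft ξ‖ ^ 2) := by
  have hw := integrable_lowFreqWeight hk R
  have h₁ := V.c1.cont
  have h₂ := V.c2.cont
  refine (hw.mul_const (2 * ‖V.restrictBall hΓ R‖ ^ 2)).mono'
    (hw.1.mul (by fun_prop : Continuous _).aestronglyMeasurable) (.of_forall fun ξ => ?_)
  rw [Real.norm_of_nonneg (mul_nonneg (lowFreqWeight_nonneg k R ξ) (by positivity))]
  exact lowFreqWeight_mul_norm_sq_le hΓ k R ξ V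

lemma integral_lowFreqWeight_mul_norm_sq_le (hΓ : Bornology.IsBounded Γ) (hk : 0 < k) (R : ℝ)
    (V : Xelt Γ) :
    ∫ ξ, lowFreqWeight k R ξ * (‖V.c1.ft ξ‖ ^ 2 + ‖V.c2.ft ξ‖ ^ 2) ≤
      (∫ ξ, lowFreqWeight k R ξ) * (2 * ‖V.restrictBall hΓ R‖ ^ 2) := by
  rw [← integral_mul_const]
  exact integral_mono (integrable_lowFreqWeight_mul_norm_sq hΓ hk R V)
    ((integrable_lowFreqWeight hk R).mul_const _)
    fun ξ => lowFreqWeight_mul_norm_sq_le hΓ k R ξ V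

end LowFreqWeight

section Sesquilinear

variable {E : Type*} [NormedAddCommGroup E] [NormedSpace ℂ E]

lemma norm_le_mul_norm_mul_norm_of_le_add_sq (f : E →ₗ⋆[ℂ] E →ₗ[ℂ] ℂ) {C : ℝ}
    (hf : ∀ x y, ‖f x y‖ ≤ C * (‖x‖ ^ 2 + ‖y‖ ^ 2)) (x y : E) :
    ‖f x y‖ ≤ 2 * C * ‖x‖ * ‖y‖ := by
  rcases eq_or_ne x 0 with rfl | hx
  · simp only [map_zero, LinearMap.zero_apply, norm_zero, mul_zero, zero_mul, le_refl]
  rcases eq_or_ne y 0 with rfl | hy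
  · simp only [map_zero, norm_zero, mul_zero, le_refl]
  have hx' : (0 : ℝ) < ‖x‖ := norm_pos_iff.2 hx
  have hy' : (0 : ℝ) < ‖y‖ := norm_pos_iff.2 hy
  have hunit := hf ((‖x‖⁻¹ : ℂ) • x) ((‖y‖⁻¹ : ℂ) • y)
  simp only [map_smul, map_smulₛₗ, LinearMap.smul_apply, norm_smul, norm_inv, norm_real, norm_norm,
    RCLike.norm_conj, inv_mul_cancel₀ hx'.ne', inv_mul_cancel₀ hy'.ne', one_pow] at hunit
  calc ‖f x y‖ = ‖x‖ * ‖y‖ * (‖y‖⁻¹ * (‖x‖⁻¹ * ‖f x y‖)) := by field_simp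
    _ ≤ ‖x‖ * ‖y‖ * (C * (1 + 1)) := by gcongr
    _ = 2 * C * ‖x‖ * ‖y‖ := by ring

end Sesquilinear

section Form

variable {k : ℝ} {Γ : Set R2}

lemma energyDensity_le (hk : 0 ≤ k) (F₁ F₂ : R2 → ℂ) (ξ : R2) :
    energyDensity k F₁ F₂ ξ ≤ 2 * (sobolevWeight (-(1 / 2)) ξ * ‖dotFt F₁ F₂ ξ‖ ^ 2) +
      2 * k ^ 2 * (sobolevWeight (-(1 / 2)) ξ * (‖F₁ ξ‖ ^ 2 + ‖F₂ ξ‖ ^ 2)) +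
      (2 * k + 1) ^ 2 * (lowFreqWeight k (2 * k + 1) ξ * (‖F₁ ξ‖ ^ 2 + ‖F₂ ξ‖ ^ 2)) := by
  have hw := sobolevWeight_pos (-(1 / 2)) ξ
  rcases lt_or_ge ‖ξ‖ (2 * k + 1) with h | h
  · refine (energyDensity_le_of_norm_le hk (by linarith) h.le).trans
      (le_add_of_nonneg_of_le (by positivity) ?_)
    rw [lowFreqWeight_of_lt h]
    gcongr
    exact le_add_of_nonneg_left zero_le_one
  · have hlow := lowFreqWeight_nonneg k (2 * k + 1) ξ
    exact (energyDensity_le_of_le_norm hk h).trans (le_add_of_nonneg_right (by positivity))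

lemma exists_integral_energyDensity_le (hΓ : Bornology.IsBounded Γ) (hk : 0 < k) :
    ∃ C, ∀ V : Xelt Γ, Integrable (energyDensity k V.c1.ft V.c2.ft) ∧
      ∫ ξ, energyDensity k V.c1.ft V.c2.ft ξ ≤ C * ‖V‖ ^ 2 := by
  set J := ∫ ξ, lowFreqWeight k (2 * k + 1) ξ
  have hJ : 0 ≤ J := integral_nonneg (lowFreqWeight_nonneg k (2 * k + 1))
  set T := Xelt.restrictBall hΓ (2 * k + 1)
  refine ⟨(2 + 2 * k ^ 2) * (2 * π) ^ 2 + (2 * k + 1) ^ 2 * (J * (2 * ‖T‖ ^ 2)), fun V => ?_⟩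
  have hdot : Integrable fun ξ =>
      2 * (sobolevWeight (-(1 / 2)) ξ * ‖dotFt V.c1.ft V.c2.ft ξ‖ ^ 2) := V.divMem.const_mul 2
  have hfield := V.integrable_sobolevWeight_mul_norm_sq.const_mul (2 * k ^ 2)
  have hlow := (integrable_lowFreqWeight_mul_norm_sq hΓ hk (2 * k + 1) V).const_mul
    ((2 * k + 1) ^ 2)
  have hle := energyDensity_le hk.le V.c1.ft V.c2.ft
  have hint : Integrable (energyDensity k V.c1.ft V.c2.ft) :=
    ((hdot.add hfield).add hlow).mono' (measurable_energyDensity V.c1.cont.measurable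
      V.c2.cont.measurable).aestronglyMeasurable (.of_forall fun ξ => by
        rw [Real.norm_of_nonneg (energyDensity_nonneg _ _ _ _)]
        exact hle ξ)
  have hnorm := V.integral_sobolevWeight_mul
  have hdot0 : 0 ≤ ∫ ξ, sobolevWeight (-(1 / 2)) ξ * ‖dotFt V.c1.ft V.c2.ft ξ‖ ^ 2 :=
    integral_nonneg fun ξ => mul_nonneg (sobolevWeight_pos _ ξ).le (sq_nonneg _)
  have hfield0 : 0 ≤ ∫ ξ, sobolevWeight (-(1 / 2)) ξ * (‖V.c1.ft ξ‖ ^ 2 + ‖V.c2.ft ξ‖ ^ 2) :=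
    integral_nonneg fun ξ => mul_nonneg (sobolevWeight_pos _ ξ).le (by positivity)
  have hT : ‖T V‖ ^ 2 ≤ ‖T‖ ^ 2 * ‖V‖ ^ 2 := by
    rw [← mul_pow]
    exact pow_le_pow_left₀ (norm_nonneg _) (T.le_opNorm V) 2
  have hball := (integral_lowFreqWeight_mul_norm_sq_le hΓ hk (2 * k + 1) V).trans
    (mul_le_mul_of_nonneg_left (mul_le_mul_of_nonneg_left hT zero_le_two) hJ)
  have htotal := integral_mono hint (by exact (hdot.add hfield).add hlow) hle
  rw [integral_add (by exact hdot.add hfield) hlow, integral_add (by exact hdot) hfield,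
    integral_const_mul, integral_const_mul, integral_const_mul] at htotal
  refine ⟨hint, htotal.trans ?_⟩
  have hlow_le := mul_le_mul_of_nonneg_left hball (sq_nonneg (2 * k + 1))
  have hdot_nonneg := mul_nonneg (sq_nonneg k) hdot0
  linear_combination hlow_le + 2 * hdot_nonneg + 2 * hfield0 + (2 + 2 * k ^ 2) * hnorm

lemma exists_norm_Bform_le_add_sq (hΓ : Bornology.IsBounded Γ) (hk : 0 < k) :
    ∃ C, ∀ W V : Xelt Γ, Integrable (Bintegrand k W.c1.ft W.c2.ft V.c1.ft V.c2.ft) ∧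
      ‖Bform k W V‖ ≤ C * (‖V‖ ^ 2 + ‖W‖ ^ 2) := by
  obtain ⟨C, hC⟩ := exists_integral_energyDensity_le hΓ hk
  refine ⟨C / 2, fun W V => ?_⟩
  obtain ⟨hW, hCW⟩ := hC W
  obtain ⟨hV, hCV⟩ := hC V
  have hdom := (hW.add hV).div_const 2
  have hle : ∀ᵐ ξ, ‖Bintegrand k W.c1.ft W.c2.ft V.c1.ft V.c2.ft ξ‖ ≤
      (energyDensity k W.c1.ft W.c2.ft ξ + energyDensity k V.c1.ft V.c2.ft ξ) / 2 :=
    .of_forall fun ξ => norm_Bintegrand_le k _ _ _ _ ξ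
  refine ⟨hdom.mono' (measurable_Bintegrand W.c1.cont.measurable W.c2.cont.measurable
    V.c1.cont.measurable V.c2.cont.measurable).aestronglyMeasurable hle, ?_⟩
  have hnorm := norm_integral_le_of_norm_le (by exact hdom) hle
  rw [integral_div, integral_add hW hV] at hnorm
  refine hnorm.trans ?_
  linarith

lemma Xelt.integrable_Bintegrand (hΓ : Bornology.IsBounded Γ) (hk : 0 < k) (W V : Xelt Γ) :
    Integrable (Bintegrand k W.c1.ft W.c2.ft V.c1.ft V.c2.ft) := by
  obtain ⟨C, hC⟩ := exists_norm_Bform_le_add_sq hΓ hk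
  exact (hC W V).1

lemma Bintegrand_add_left (k : ℝ) (F₁ F₂ F₁' F₂' G₁ G₂ : R2 → ℂ) :
    Bintegrand k (F₁ + F₁') (F₂ + F₂') G₁ G₂ =
      Bintegrand k F₁ F₂ G₁ G₂ + Bintegrand k F₁' F₂' G₁ G₂ := by
  ext ξ
  simp only [Bintegrand, dotFt, curlFt, Pi.add_apply]
  ring

lemma Bintegrand_smul_left (k : ℝ) (a : ℂ) (F₁ F₂ G₁ G₂ : R2 → ℂ) :
    Bintegrand k (a • F₁) (a • F₂) G₁ G₂ = a • Bintegrand k F₁ F₂ G₁ G₂ := by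
  ext ξ
  simp only [Bintegrand, dotFt, curlFt, Pi.smul_apply, smul_eq_mul]
  ring

lemma Bintegrand_add_right (k : ℝ) (F₁ F₂ G₁ G₂ G₁' G₂' : R2 → ℂ) :
    Bintegrand k F₁ F₂ (G₁ + G₁') (G₂ + G₂') =
      Bintegrand k F₁ F₂ G₁ G₂ + Bintegrand k F₁ F₂ G₁' G₂' := by
  ext ξ
  simp only [Bintegrand, dotFt, curlFt, Pi.add_apply, map_add, map_sub, map_mul]
  ring

lemma Bintegrand_smul_right (k : ℝ) (a : ℂ) (F₁ F₂ G₁ G₂ : R2 → ℂ) :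
    Bintegrand k F₁ F₂ (a • G₁) (a • G₂) = starRingEnd ℂ a • Bintegrand k F₁ F₂ G₁ G₂ := by
  ext ξ
  simp only [Bintegrand, dotFt, curlFt, Pi.smul_apply, smul_eq_mul, map_add, map_sub, map_mul]
  ring

/-- The form `B` as the sesquilinear map `V ↦ W ↦ B(W, V)`, conjugate-linear in `V`. -/
def BformL (hΓ : Bornology.IsBounded Γ) (hk : 0 < k) : Xelt Γ →ₗ⋆[ℂ] Xelt Γ →ₗ[ℂ] ℂ :=
  have hint := Xelt.integrable_Bintegrand hΓ hk
  LinearMap.mk₂'ₛₗ (starRingEnd ℂ) (RingHom.id ℂ) (fun V W => Bform k W V)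
    (fun V V' W => (congrArg _ (Bintegrand_add_right k _ _ _ _ _ _)).trans
      (integral_add (hint W V) (hint W V')))
    (fun a V W => (congrArg _ (Bintegrand_smul_right k a W.c1.ft W.c2.ft V.c1.ft V.c2.ft)).trans
      (integral_smul (starRingEnd ℂ a) (Bintegrand k W.c1.ft W.c2.ft V.c1.ft V.c2.ft)))
    (fun V W W' => (congrArg _ (Bintegrand_add_left k _ _ _ _ _ _)).trans
      (integral_add (hint W V) (hint W' V)))
    (fun a V W => (congrArg _ (Bintegrand_smul_left k a W.c1.ft W.c2.ft V.c1.ft V.c2.ft)).trans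
      (integral_smul a (Bintegrand k W.c1.ft W.c2.ft V.c1.ft V.c2.ft)))

lemma exists_inner_eq_Bform (hΓ : Bornology.IsBounded Γ) (hk : 0 < k) :
    ∃ A : Xelt Γ →L[ℂ] Xelt Γ, ∀ W V : Xelt Γ, inner ℂ V (A W) = Bform k W V := by
  obtain ⟨C, hC⟩ := exists_norm_Bform_le_add_sq hΓ hk
  have := Xelt.completeSpace hΓ
  let B := LinearMap.mkContinuous₂ (BformL hΓ hk) (2 * C)
    (norm_le_mul_norm_mul_norm_of_le_add_sq _ fun V W => (hC W V).2)
  refine ⟨ContinuousLinearMap.adjoint (InnerProductSpace.continuousLinearMapOfBilin B),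
    fun W V => ?_⟩
  rw [ContinuousLinearMap.adjoint_inner_right, InnerProductSpace.continuousLinearMapOfBilin_apply]
  rfl

end Form

/-! ### The smoothing operator and Gårding's inequality -/

section

variable {s t : ℝ} {F : R2 → ℂ}

lemma MemHs.mono (hF : MemHs t F) (hst : s ≤ t) : MemHs s F := by
  refine ⟨hF.1, hF.2.mono' ?_ (.of_forall fun ξ => ?_)⟩
  · exact (continuous_sobolevWeight s).aestronglyMeasurable.mul (hF.1.norm.pow 2)
  · rw [Real.norm_of_nonneg (by positivity)]
    exact mul_le_mul_of_nonneg_right (sobolevWeight_mono hst ξ) (by positivity)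

lemma wnorm_mono (hst : s ≤ t) (hF : MemHs t F) : wnorm s F ≤ wnorm t F :=
  Real.sqrt_le_sqrt <| mul_le_mul_of_nonneg_left
    (integral_mono (hF.mono hst).2 hF.2 fun ξ =>
      mul_le_mul_of_nonneg_right (sobolevWeight_mono hst ξ) (by positivity)) (by positivity)

end

section

variable {s : ℝ} {F G χ : R2 → ℂ}

lemma localizeFT_add (hF : MemHs s F) (hG : MemHs s G) (hχ : IsTestFunction χ) :
    localizeFT χ (F + G) = localizeFT χ F + localizeFT χ G := by
  funext ξ
  have hχ' := hχ.rapidlyDecreasing_testFT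
  simp only [localizeFT, spectralConv, Pi.add_apply, add_mul,
    integral_add (hF.integrable_mul_sub hχ' ξ) (hG.integrable_mul_sub hχ' ξ), mul_add]

lemma localizeFT_smul (χ : R2 → ℂ) (c : ℂ) (F : R2 → ℂ) :
    localizeFT χ (c • F) = c • localizeFT χ F := by
  funext ξ
  simp only [localizeFT, spectralConv, Pi.smul_apply, smul_eq_mul, mul_assoc, integral_const_mul]
  exact mul_left_comm _ c _

lemma localizeFT_fderiv_single (hχ : IsTestFunction χ) (i : Fin 2) (F : R2 → ℂ) (ξ : R2) :
    localizeFT (fun x => fderiv ℝ χ x (EuclideanSpace.single i 1)) F ξ =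
      -(I * spectralConv (fun ζ => (ζ i : ℂ) * testFT χ ζ) F ξ) := by
  simp only [localizeFT, spectralConv, hχ.testFT_fderiv_single, mul_neg, integral_neg,
    mul_left_comm _ I, integral_const_mul]

end

lemma IsTestFunction.finset_sum {ι : Type*} (u : Finset ι) {χ : ι → R2 → ℂ}
    (hχ : ∀ i ∈ u, IsTestFunction (χ i)) : IsTestFunction fun x => ∑ i ∈ u, χ i x := by
  rw [← Finset.sum_fn]
  exact Finset.sum_induction χ IsTestFunction (fun _ _ h₁ h₂ => ⟨h₁.1.add h₂.1, h₁.2.add h₂.2⟩)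
    ⟨contDiff_const, HasCompactSupport.zero⟩ hχ

namespace HTildeElt

variable {s t : ℝ} {Γ Γ' : Set R2}

/-- The bounded operator from `H̃^s(Γ)` to `H̃^t(Γ')` induced by an operator `T` on Fourier
transforms. -/
def mkL (T : (R2 → ℂ) → R2 → ℂ)
    (hadd : ∀ f g : HTildeElt s Γ, T (f.ft + g.ft) = T f.ft + T g.ft)
    (hsmul : ∀ (c : ℂ) (f : HTildeElt s Γ), T (c • f.ft) = c • T f.ft)
    (hcont : ∀ f : HTildeElt s Γ, Continuous (T f.ft))
    (hsupp : ∀ f : HTildeElt s Γ, FTSupportedIn (T f.ft) (closure Γ'))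
    (hbound : ∃ C, ∀ F, MemHs s F → MemHs t (T F) ∧ wnorm t (T F) ≤ C * wnorm s F) :
    HTildeElt s Γ →L[ℂ] HTildeElt t Γ' :=
  LinearMap.mkContinuousOfExistsBound
    { toFun f :=
        { ft := T f.ft
          cont := hcont f
          mem := let ⟨_, hC⟩ := hbound; (hC f.ft f.memHs).1.2
          supp φ h₁ h₂ := hsupp f φ ⟨h₁, h₂⟩ }
      map_add' f g := ft_injective (hadd f g)
      map_smul' c f := ft_injective (hsmul c f) }
    (let ⟨C, hC⟩ := hbound
    ⟨C, fun f => by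
      rw [norm_eq_wnorm, norm_eq_wnorm]
      exact (hC f.ft f.memHs).2⟩)

/-- The inclusion of `H̃^t(Γ)` into `H̃^s(Γ)` for `s ≤ t`. -/
def inclL (Γ : Set R2) (hst : s ≤ t) : HTildeElt t Γ →L[ℂ] HTildeElt s Γ :=
  mkL id (fun _ _ => rfl) (fun _ _ => rfl) (fun f => f.cont) (fun f => f.ftSupportedIn)
    ⟨1, fun _ hF => ⟨hF.mono hst, (one_mul (wnorm t _)).symm ▸ wnorm_mono hst hF⟩⟩

/-- Multiplication by a test function `χ`, from `H̃^s(Γ)` to `H̃^s(Γ ∩ supp χ)`. -/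
def localizeL (s : ℝ) (Γ : Set R2) {χ : R2 → ℂ} (hχ : IsTestFunction χ) {K : Set R2}
    (hK : closure Γ ∩ tsupport χ ⊆ closure K) : HTildeElt s Γ →L[ℂ] HTildeElt s K :=
  mkL (localizeFT χ) (fun f g => localizeFT_add f.memHs g.memHs hχ)
    (fun c f => localizeFT_smul χ c f.ft) (fun f => continuous_localizeFT f.memHs hχ)
    (fun f => (f.ftSupportedIn.localizeFT f.memHs hχ).mono hK)
    ((exists_wnorm_spectralConv_le hχ.rapidlyDecreasing_testFT s).imp fun _ h => h.2)

/-- The smoothing operator from `H̃^s(Γ)` to `H̃^{s+1}(Γ')` given by a Fourier multiplier. -/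
def smoothL {m : R2 → ℂ} (hm : IsSmoothingMultiplier m) (hst : s + 1 = t)
    (hsupp : ∀ f : HTildeElt s Γ, FTSupportedIn (fun ξ => m ξ * f.ft ξ) (closure Γ')) :
    HTildeElt s Γ →L[ℂ] HTildeElt t Γ' :=
  mkL (fun F ξ => m ξ * F ξ) (fun f g => funext fun ξ => mul_add (m ξ) (f.ft ξ) (g.ft ξ))
    (fun c f => funext fun ξ => mul_left_comm (m ξ) c (f.ft ξ)) (fun f => hm.1.mul f.cont) hsupp
    (hst ▸ (hm.exists_wnorm_mul_le s).imp fun _ h => h.2)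

lemma ft_finset_sum {ι : Type*} (u : Finset ι) (f : ι → HTildeElt s Γ) :
    (∑ i ∈ u, f i).ft = ∑ i ∈ u, (f i).ft :=
  map_sum (AddMonoidHom.mk' ft ft_add) f u

end HTildeElt

namespace Xelt

variable {Γ : Set R2}

/-- The divergence, as a bounded operator. -/
def divL (Γ : Set R2) : Xelt Γ →L[ℂ] HTildeElt (-(1 / 2)) Γ :=
  LinearMap.mkContinuous ⟨⟨div, div_add⟩, div_smul⟩ 1 fun V =>
    (one_mul ‖V‖).symm ▸ PiLp.norm_apply_le (toPi V) 2

/-- The bounded operator into `Xelt Γ` with components `A`, `B` and divergence `D`. -/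
def mkL {E : Type*} [NormedAddCommGroup E] [NormedSpace ℂ E]
    (A B D : E →L[ℂ] HTildeElt (-(1 / 2)) Γ)
    (h : ∀ x, (D x).ft = I • dotFt (A x).ft (B x).ft) : E →L[ℂ] Xelt Γ :=
  have hdot (x : E) : dotFt (A x).ft (B x).ft = (-I) • (D x).ft := by
    rw [h, smul_smul, neg_mul, I_mul_I, neg_neg, one_smul]
  LinearMap.mkContinuous
    { toFun x := ⟨A x, B x, (hdot x ▸ (D x).memHs.const_smul (-I) : MemHs _ _).2⟩
      map_add' x y := ext (map_add A x y) (map_add B x y)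
      map_smul' c x := ext (map_smul A c x) (map_smul B c x) }
    (‖A‖ + ‖B‖ + ‖D‖) fun x => by
      refine (norm_le _).trans ?_
      rw [add_mul, add_mul]
      refine add_le_add (add_le_add (A.le_opNorm x) (B.le_opNorm x)) ?_
      exact (congrArg norm (HTildeElt.ft_injective (h x).symm)).trans_le (D.le_opNorm x)

/-- The divergence of `χ V`, as a bounded operator of `V`. -/
def divLocalizeL (Γ : Set R2) {χ : R2 → ℂ} (hχ : IsTestFunction χ) {K : Set R2}
    (hK : closure Γ ∩ tsupport χ ⊆ closure K) : Xelt Γ →L[ℂ] HTildeElt (-(1 / 2)) K :=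
  have hK' (i : Fin 2) : closure Γ ∩ tsupport (fun x => fderiv ℝ χ x (EuclideanSpace.single i 1)) ⊆
      closure K := (Set.inter_subset_inter_right _ (tsupport_fderiv_apply_subset ℝ _)).trans hK
  HTildeElt.localizeL _ Γ hχ hK ∘L divL Γ +
    HTildeElt.localizeL _ Γ (hχ.fderiv_apply (EuclideanSpace.single 0 1)) (hK' 0) ∘L c1L Γ +
    HTildeElt.localizeL _ Γ (hχ.fderiv_apply (EuclideanSpace.single 1 1)) (hK' 1) ∘L c2L Γ

lemma divLocalizeL_ft {χ : R2 → ℂ} (hχ : IsTestFunction χ) {K : Set R2}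
    (hK : closure Γ ∩ tsupport χ ⊆ closure K) (V : Xelt Γ) (ξ : R2) :
    (divLocalizeL Γ hχ hK V).ft ξ =
      I * dotFt (localizeFT χ V.c1.ft) (localizeFT χ V.c2.ft) ξ := by
  have hft : (divLocalizeL Γ hχ hK V).ft ξ = localizeFT χ V.div.ft ξ +
      localizeFT (fun x => fderiv ℝ χ x (EuclideanSpace.single 0 1)) V.c1.ft ξ +
      localizeFT (fun x => fderiv ℝ χ x (EuclideanSpace.single 1 1)) V.c2.ft ξ := rfl
  rw [hft, dotFt_localizeFT V.c1.memHs V.c2.memHs hχ, div_ft, localizeFT_smul, Pi.smul_apply,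
    localizeFT_fderiv_single hχ, localizeFT_fderiv_single hχ, smul_eq_mul]
  ring

end Xelt

/-- The operator is `V ↦ E ∗ div(χV) + r ∗ χV`. -/
lemma IsDivParametrix.exists_dotFt_eq {Γ : Set R2} {χ E₀ E₁ r : R2 → ℂ} (hχ : IsTestFunction χ)
    (h : IsDivParametrix E₀ E₁ r (closure Γ ∩ tsupport χ) (closure Γ)) :
    ∃ T₁ T₂ : Xelt Γ →L[ℂ] HTildeElt (1 / 2) Γ, ∀ V,
      dotFt (T₁ V).ft (T₂ V).ft = dotFt (localizeFT χ V.c1.ft) (localizeFT χ V.c2.ft) := by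
  set K := closure Γ ∩ tsupport χ
  have hK : K ⊆ closure K := subset_closure
  have hsupp (f : HTildeElt (-(1 / 2)) K) : FTSupportedIn f.ft K :=
    f.ftSupportedIn.mono (isClosed_closure.inter (isClosed_tsupport χ)).closure_eq.le
  have hs : -(1 / 2 : ℝ) + 1 = 1 / 2 := by norm_num
  let M := HTildeElt.localizeL (-(1 / 2)) Γ hχ hK
  let D := Xelt.divLocalizeL Γ hχ hK
  let L₀ := HTildeElt.smoothL h.smoothing_fst hs fun f => (h.supp _ f.ft f.memHs (hsupp f)).1
  let L₁ := HTildeElt.smoothL h.smoothing_snd hs fun f => (h.supp _ f.ft f.memHs (hsupp f)).2.1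
  let Lr := HTildeElt.smoothL h.smoothing_rem hs fun f => (h.supp _ f.ft f.memHs (hsupp f)).2.2
  refine ⟨L₀ ∘L D + Lr ∘L M ∘L Xelt.c1L Γ, L₁ ∘L D + Lr ∘L M ∘L Xelt.c2L Γ,
    fun V => funext fun ξ => ?_⟩
  have hD := Xelt.divLocalizeL_ft hχ hK V ξ
  change (ξ 0 : ℂ) * (E₀ ξ * (D V).ft ξ + r ξ * localizeFT χ V.c1.ft ξ) +
    (ξ 1 : ℂ) * (E₁ ξ * (D V).ft ξ + r ξ * localizeFT χ V.c2.ft ξ) = _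
  rw [hD, dotFt]
  linear_combination
    ((ξ 0 : ℂ) * localizeFT χ V.c1.ft ξ + ξ 1 * localizeFT χ V.c2.ft ξ) * h.coord_mul_add ξ

lemma IsLipschitzDomain.exists_dotFt_eq {Γ : Set R2} (hΓ : IsLipschitzDomain Γ) :
    ∃ (S : Xelt Γ →L[ℂ] Xelt Γ) (T₁ T₂ : Xelt Γ →L[ℂ] HTildeElt (1 / 2) Γ), ∀ V,
      (S V).c1.ft = (T₁ V).ft ∧ (S V).c2.ft = (T₂ V).ft ∧
        dotFt (S V).c1.ft (S V).c2.ft = dotFt V.c1.ft V.c2.ft := by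
  obtain ⟨ι, _, χ, E₀, E₁, r, hχ, O, hO, hΓO, hsum⟩ := hΓ.exists_partition_isDivParametrix
  choose T₁ T₂ hT using fun i => (hχ i).2.exists_dotFt_eq (hχ i).1
  have hdot (V : Xelt Γ) :
      dotFt ((∑ i, T₁ i) V).ft ((∑ i, T₂ i) V).ft = dotFt V.c1.ft V.c2.ft := by
    have hone (f : HTildeElt (-(1 / 2)) Γ) (ξ : R2) : ∑ i, localizeFT (χ i) f.ft ξ = f.ft ξ := by
      rw [← localizeFT_finset_sum _ f.memHs fun i _ => (hχ i).1]
      exact congrFun (localizeFT_eq_self f.cont f.memHs f.ftSupportedIn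
        (.finset_sum _ fun i _ => (hχ i).1) hO hΓO hsum) ξ
    funext ξ
    calc dotFt ((∑ i, T₁ i) V).ft ((∑ i, T₂ i) V).ft ξ = ∑ i, dotFt (T₁ i V).ft (T₂ i V).ft ξ := by
          simp only [dotFt, sum_apply, HTildeElt.ft_finset_sum,
            Finset.sum_apply, Finset.mul_sum, Finset.sum_add_distrib]
      _ = dotFt V.c1.ft V.c2.ft ξ := by
          simp only [hT]
          simp only [dotFt, Finset.sum_add_distrib, ← Finset.mul_sum, hone]
  have hs : -(1 / 2 : ℝ) ≤ 1 / 2 := by norm_num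
  refine ⟨Xelt.mkL (HTildeElt.inclL Γ hs ∘L ∑ i, T₁ i) (HTildeElt.inclL Γ hs ∘L ∑ i, T₂ i)
    (Xelt.divL Γ) fun V => congrArg (I • ·) (hdot V).symm, ∑ i, T₁ i, ∑ i, T₂ i, fun V =>
    ⟨rfl, rfl, hdot V⟩⟩

section Pointwise

variable {k : ℝ} {ξ : R2}

lemma g0hat_of_le (h : k ≤ ‖ξ‖) : g0hat k ξ = (‖g0hat k ξ‖ : ℂ) := by
  rw [g0hat, if_neg h.not_gt, norm_div, norm_one, norm_real,
    Real.norm_of_nonneg (Real.sqrt_nonneg _)]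
  push_cast
  rfl

lemma re_mul_conj_two_mul_sub_le (a q : ℂ) :
    (a * starRingEnd ℂ (2 * q - a)).re ≤ 2 * ‖q‖ ^ 2 - ‖a‖ ^ 2 / 2 := by
  simp only [← normSq_eq_norm_sq, normSq_apply, mul_re, conj_re, conj_im, sub_re, sub_im, mul_im,
    re_ofNat, im_ofNat]
  nlinarith [sq_nonneg (a.re - 2 * q.re), sq_nonneg (a.im - 2 * q.im)]

variable {F₁ F₂ P₁ P₂ : R2 → ℂ}

lemma re_Bintegrand_reflect_ge (hξ : k ≤ ‖ξ‖) (hP : dotFt P₁ P₂ ξ = dotFt F₁ F₂ ξ) :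
    ‖g0hat k ξ‖ * ((‖ξ‖ ^ 2 - k ^ 2) * ‖dotFt F₁ F₂ ξ‖ ^ 2 -
      k ^ 2 * (2 * ‖curlFt P₁ P₂ ξ‖ ^ 2 - ‖curlFt F₁ F₂ ξ‖ ^ 2 / 2)) / ‖ξ‖ ^ 2 ≤
      (Bintegrand k F₁ F₂ ((2 : ℂ) • P₁ - F₁) ((2 : ℂ) • P₂ - F₂) ξ).re := by
  have hdot : dotFt ((2 : ℂ) • P₁ - F₁) ((2 : ℂ) • P₂ - F₂) ξ = dotFt F₁ F₂ ξ := by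
    have : dotFt ((2 : ℂ) • P₁ - F₁) ((2 : ℂ) • P₂ - F₂) ξ =
        2 * dotFt P₁ P₂ ξ - dotFt F₁ F₂ ξ := by
      simp only [dotFt, Pi.sub_apply, Pi.smul_apply, smul_eq_mul]
      ring
    rw [this, hP]
    ring
  have hcurl : curlFt ((2 : ℂ) • P₁ - F₁) ((2 : ℂ) • P₂ - F₂) ξ =
      2 * curlFt P₁ P₂ ξ - curlFt F₁ F₂ ξ := by
    simp only [curlFt, Pi.sub_apply, Pi.smul_apply, smul_eq_mul]
    ring
  rw [Bintegrand, g0hat_of_le hξ, hdot, hcurl, div_ofReal_re, re_ofReal_mul, sub_re,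
    re_ofReal_mul, re_ofReal_mul, mul_conj, ofReal_re, normSq_eq_norm_sq, norm_real, norm_norm]
  gcongr
  exact re_mul_conj_two_mul_sub_le _ _

lemma le_re_Bintegrand_reflect_of_le_norm (hk : 0 ≤ k) (hξ : 2 * k + 1 ≤ ‖ξ‖)
    (hP : dotFt P₁ P₂ ξ = dotFt F₁ F₂ ξ) :
    sobolevWeight (-(1 / 2)) ξ *
        (‖dotFt F₁ F₂ ξ‖ ^ 2 / 2 + k ^ 2 / 2 * (‖F₁ ξ‖ ^ 2 + ‖F₂ ξ‖ ^ 2)) ≤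
      (Bintegrand k F₁ F₂ ((2 : ℂ) • P₁ - F₁) ((2 : ℂ) • P₂ - F₂) ξ).re +
        4 * k ^ 2 * (sobolevWeight (-(1 / 2)) ξ * (‖P₁ ξ‖ ^ 2 + ‖P₂ ξ‖ ^ 2)) := by
  have hr : 0 < ‖ξ‖ ^ 2 := by nlinarith
  have hF := norm_dotFt_sq_add_norm_curlFt_sq F₁ F₂ ξ
  have hPsq := norm_dotFt_sq_add_norm_curlFt_sq P₁ P₂ ξ
  set d := ‖dotFt F₁ F₂ ξ‖ ^ 2
  set f := ‖F₁ ξ‖ ^ 2 + ‖F₂ ξ‖ ^ 2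
  set p := ‖P₁ ξ‖ ^ 2 + ‖P₂ ξ‖ ^ 2
  set g := ‖g0hat k ξ‖
  have hcurl : ‖curlFt P₁ P₂ ξ‖ ^ 2 ≤ ‖ξ‖ ^ 2 * p := by
    rw [← hPsq]
    exact le_add_of_nonneg_left (sq_nonneg _)
  have hsymbol : ‖ξ‖ ^ 2 * (d / 2 + k ^ 2 / 2 * f - 2 * k ^ 2 * p) ≤
      (‖ξ‖ ^ 2 - k ^ 2) * d - k ^ 2 * (2 * ‖curlFt P₁ P₂ ξ‖ ^ 2 - ‖curlFt F₁ F₂ ξ‖ ^ 2 / 2) := by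
    have hsq : 0 ≤ ‖ξ‖ ^ 2 - 3 * k ^ 2 := by nlinarith
    have hd := mul_nonneg hsq (sq_nonneg ‖dotFt F₁ F₂ ξ‖)
    have hc := mul_le_mul_of_nonneg_left hcurl (sq_nonneg k)
    linear_combination (1 / 2 : ℝ) * hd + 2 * hc - k ^ 2 / 2 * hF
  have hre : g * (d / 2 + k ^ 2 / 2 * f - 2 * k ^ 2 * p) ≤
      (Bintegrand k F₁ F₂ ((2 : ℂ) • P₁ - F₁) ((2 : ℂ) • P₂ - F₂) ξ).re := by
    refine le_trans ?_ (re_Bintegrand_reflect_ge (by linarith) hP)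
    rw [le_div_iff₀ hr, mul_assoc, mul_comm _ (‖ξ‖ ^ 2)]
    gcongr
  have hlow : sobolevWeight (-(1 / 2)) ξ * (d / 2 + k ^ 2 / 2 * f) ≤
      g * (d / 2 + k ^ 2 / 2 * f) := by
    gcongr
    exact sobolevWeight_neg_half_le_norm_g0hat hk (by linarith)
  have hup : g * (2 * k ^ 2 * p) ≤ 2 * sobolevWeight (-(1 / 2)) ξ * (2 * k ^ 2 * p) := by
    gcongr
    exact norm_g0hat_le hk hξ
  linarith

lemma norm_two_smul_sub_apply_sq_le (P F : R2 → ℂ) (ξ : R2) :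
    ‖((2 : ℂ) • P - F) ξ‖ ^ 2 ≤ 8 * ‖P ξ‖ ^ 2 + 2 * ‖F ξ‖ ^ 2 := by
  have hle : ‖((2 : ℂ) • P - F) ξ‖ ≤ 2 * ‖P ξ‖ + ‖F ξ‖ :=
    (norm_sub_le _ _).trans_eq (by rw [Pi.smul_apply, norm_smul, Complex.norm_ofNat])
  nlinarith [pow_le_pow_left₀ (norm_nonneg _) hle 2, sq_nonneg (2 * ‖P ξ‖ - ‖F ξ‖)]

lemma neg_le_re_Bintegrand_reflect {R : ℝ} (hk : 0 ≤ k) (hkR : k ≤ R) (hξ : ‖ξ‖ ≤ R) :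
    -(4 * R ^ 2 * (‖g0hat k ξ‖ * (‖F₁ ξ‖ ^ 2 + ‖F₂ ξ‖ ^ 2 + (‖P₁ ξ‖ ^ 2 + ‖P₂ ξ‖ ^ 2)))) ≤
      (Bintegrand k F₁ F₂ ((2 : ℂ) • P₁ - F₁) ((2 : ℂ) • P₂ - F₂) ξ).re := by
  have hB := norm_Bintegrand_le k F₁ F₂ ((2 : ℂ) • P₁ - F₁) ((2 : ℂ) • P₂ - F₂) ξ
  have hre := (abs_le.1 (abs_re_le_norm
    (Bintegrand k F₁ F₂ ((2 : ℂ) • P₁ - F₁) ((2 : ℂ) • P₂ - F₂) ξ))).1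
  have heF : energyDensity k F₁ F₂ ξ ≤ _ := energyDensity_le_of_norm_le hk hkR hξ
  have heP : energyDensity k ((2 : ℂ) • P₁ - F₁) ((2 : ℂ) • P₂ - F₂) ξ ≤ _ :=
    energyDensity_le_of_norm_le hk hkR hξ
  have h₁ := norm_two_smul_sub_apply_sq_le P₁ F₁ ξ
  have h₂ := norm_two_smul_sub_apply_sq_le P₂ F₂ ξ
  have hreflect : R ^ 2 * (‖g0hat k ξ‖ * (‖((2 : ℂ) • P₁ - F₁) ξ‖ ^ 2 +
      ‖((2 : ℂ) • P₂ - F₂) ξ‖ ^ 2)) ≤ R ^ 2 * (‖g0hat k ξ‖ *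
        (8 * (‖P₁ ξ‖ ^ 2 + ‖P₂ ξ‖ ^ 2) + 2 * (‖F₁ ξ‖ ^ 2 + ‖F₂ ξ‖ ^ 2))) :=
    mul_le_mul_of_nonneg_left
      (mul_le_mul_of_nonneg_left (by linarith) (norm_nonneg _)) (sq_nonneg R)
  have hnonneg : 0 ≤ R ^ 2 * (‖g0hat k ξ‖ * (‖F₁ ξ‖ ^ 2 + ‖F₂ ξ‖ ^ 2)) := by positivity
  linarith

lemma le_re_Bintegrand_reflect_of_norm_lt {R : ℝ} (hk : 0 ≤ k) (hkR : k ≤ R) (hξ : ‖ξ‖ < R) :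
    sobolevWeight (-(1 / 2)) ξ *
        (‖dotFt F₁ F₂ ξ‖ ^ 2 / 2 + k ^ 2 / 2 * (‖F₁ ξ‖ ^ 2 + ‖F₂ ξ‖ ^ 2)) ≤
      (Bintegrand k F₁ F₂ ((2 : ℂ) • P₁ - F₁) ((2 : ℂ) • P₂ - F₂) ξ).re +
        4 * R ^ 2 * (lowFreqWeight k R ξ * (‖F₁ ξ‖ ^ 2 + ‖F₂ ξ‖ ^ 2) +
          lowFreqWeight k R ξ * (‖P₁ ξ‖ ^ 2 + ‖P₂ ξ‖ ^ 2)) := by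
  have hre := neg_le_re_Bintegrand_reflect (F₁ := F₁) (F₂ := F₂) (P₁ := P₁) (P₂ := P₂) hk hkR hξ.le
  have hF := norm_dotFt_sq_add_norm_curlFt_sq F₁ F₂ ξ
  have hw : sobolevWeight (-(1 / 2)) ξ ≤ 1 :=
    (sobolevWeight_mono (by norm_num) ξ).trans_eq (sobolevWeight_zero ξ)
  rw [lowFreqWeight_of_lt hξ]
  set f := ‖F₁ ξ‖ ^ 2 + ‖F₂ ξ‖ ^ 2
  set p := ‖P₁ ξ‖ ^ 2 + ‖P₂ ξ‖ ^ 2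
  have hRp : 0 ≤ R ^ 2 * p := by positivity
  have hRf : 0 ≤ R ^ 2 * f := by positivity
  have hξf : ‖ξ‖ ^ 2 * f ≤ R ^ 2 * f := by gcongr
  have hkf : k ^ 2 * f ≤ R ^ 2 * f := by gcongr
  have hleft : ‖dotFt F₁ F₂ ξ‖ ^ 2 / 2 + k ^ 2 / 2 * f ≤ R ^ 2 * f := by
    linarith [sq_nonneg ‖curlFt F₁ F₂ ξ‖]
  have hweight := (mul_le_of_le_one_left (by positivity) hw).trans hleft
  linarith

variable (F₁ F₂ P₁ P₂) in
lemma le_re_Bintegrand_reflect {R : ℝ} (hk : 0 ≤ k) (hkR : 2 * k + 1 ≤ R) (ξ : R2)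
    (hP : dotFt P₁ P₂ ξ = dotFt F₁ F₂ ξ) :
    sobolevWeight (-(1 / 2)) ξ *
        (‖dotFt F₁ F₂ ξ‖ ^ 2 / 2 + k ^ 2 / 2 * (‖F₁ ξ‖ ^ 2 + ‖F₂ ξ‖ ^ 2)) ≤
      (Bintegrand k F₁ F₂ ((2 : ℂ) • P₁ - F₁) ((2 : ℂ) • P₂ - F₂) ξ).re +
        4 * k ^ 2 * (sobolevWeight (-(1 / 2)) ξ * (‖P₁ ξ‖ ^ 2 + ‖P₂ ξ‖ ^ 2)) +
        4 * R ^ 2 * (lowFreqWeight k R ξ * (‖F₁ ξ‖ ^ 2 + ‖F₂ ξ‖ ^ 2) +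
          lowFreqWeight k R ξ * (‖P₁ ξ‖ ^ 2 + ‖P₂ ξ‖ ^ 2)) := by
  have hlow := lowFreqWeight_nonneg k R ξ
  have hw := (sobolevWeight_pos (-(1 / 2)) ξ).le
  rcases lt_or_ge ‖ξ‖ R with hξ | hξ
  · have hkR' : k ≤ R := by linarith
    refine (le_re_Bintegrand_reflect_of_norm_lt (P₁ := P₁) (P₂ := P₂) hk hkR' hξ).trans ?_
    rw [add_right_comm]
    exact le_add_of_nonneg_right (by positivity)
  · exact (le_re_Bintegrand_reflect_of_le_norm hk (hkR.trans hξ) hP).trans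
      (le_add_of_nonneg_right (by positivity))

end Pointwise

lemma exists_sobolevWeight_neg_half_le (k : ℝ) {ε : ℝ} (hε : 0 < ε) (R₀ : ℝ) :
    ∃ R ≥ R₀, ∀ ξ : R2, sobolevWeight (-(1 / 2)) ξ ≤
      ε * sobolevWeight (1 / 2) ξ + lowFreqWeight k R ξ := by
  refine ⟨max R₀ (ε⁻¹ + 1), le_max_left _ _, fun ξ => ?_⟩
  have hhalf := sobolevWeight_pos (1 / 2) ξ
  rcases lt_or_ge ‖ξ‖ (max R₀ (ε⁻¹ + 1)) with hξ | hξ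
  · rw [lowFreqWeight_of_lt hξ]
    have hw : sobolevWeight (-(1 / 2)) ξ ≤ 1 :=
      (sobolevWeight_mono (by norm_num) ξ).trans_eq (sobolevWeight_zero ξ)
    have hε' : 0 ≤ ε * sobolevWeight (1 / 2) ξ := by positivity
    linarith [norm_nonneg (g0hat k ξ)]
  · refine le_add_of_le_of_nonneg ?_ (lowFreqWeight_nonneg _ _ _)
    rw [show (-(1 / 2) : ℝ) = -1 + 1 / 2 by norm_num, sobolevWeight_add]
    have hlarge : ε⁻¹ ≤ 1 + ‖ξ‖ ^ 2 := by
      nlinarith [(le_max_right R₀ _).trans hξ, inv_pos.2 hε]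
    gcongr
    rw [sobolevWeight, Real.rpow_neg_one]
    exact inv_le_of_inv_le₀ hε hlarge

namespace Xelt

variable {Γ : Set R2} {k R ε : ℝ}

lemma le_re_Bform_reflect (hΓ : Bornology.IsBounded Γ) (hk : 0 < k) (hR : 2 * k + 1 ≤ R)
    (V P : Xelt Γ) (hP : dotFt P.c1.ft P.c2.ft = dotFt V.c1.ft V.c2.ft) :
    min (1 / 2) (k ^ 2 / 2) * ((2 * π) ^ 2 * ‖V‖ ^ 2) ≤
      (Bform k V ((2 : ℂ) • P - V)).re +
        4 * k ^ 2 * (∫ ξ, sobolevWeight (-(1 / 2)) ξ * (‖P.c1.ft ξ‖ ^ 2 + ‖P.c2.ft ξ‖ ^ 2)) +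
        4 * R ^ 2 * ((∫ ξ, lowFreqWeight k R ξ * (‖V.c1.ft ξ‖ ^ 2 + ‖V.c2.ft ξ‖ ^ 2)) +
          ∫ ξ, lowFreqWeight k R ξ * (‖P.c1.ft ξ‖ ^ 2 + ‖P.c2.ft ξ‖ ^ 2)) := by
  have hdiv : Integrable fun ξ =>
      sobolevWeight (-(1 / 2)) ξ * ‖dotFt V.c1.ft V.c2.ft ξ‖ ^ 2 := V.divMem
  have hV := V.integrable_sobolevWeight_mul_norm_sq
  have hB : Integrable fun ξ => (Bintegrand k V.c1.ft V.c2.ft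
      ((2 : ℂ) • P.c1.ft - V.c1.ft) ((2 : ℂ) • P.c2.ft - V.c2.ft) ξ).re :=
    (integrable_Bintegrand hΓ hk V ((2 : ℂ) • P - V)).re
  have hre : (Bform k V ((2 : ℂ) • P - V)).re = ∫ ξ, (Bintegrand k V.c1.ft V.c2.ft
      ((2 : ℂ) • P.c1.ft - V.c1.ft) ((2 : ℂ) • P.c2.ft - V.c2.ft) ξ).re :=
    (integral_re (integrable_Bintegrand hΓ hk V ((2 : ℂ) • P - V))).symm
  have hPw := P.integrable_sobolevWeight_mul_norm_sq.const_mul (4 * k ^ 2)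
  have hVl := integrable_lowFreqWeight_mul_norm_sq hΓ hk R V
  have hPl := integrable_lowFreqWeight_mul_norm_sq hΓ hk R P
  rw [← integral_sobolevWeight_mul, hre, ← integral_const_mul, ← integral_add hVl hPl,
    ← integral_const_mul, ← integral_add hdiv hV, ← integral_const_mul, ← integral_add hB hPw,
    ← integral_add (by exact hB.add hPw) (by exact (hVl.add hPl).const_mul _)]
  refine integral_mono ((hdiv.add hV).const_mul _)
    ((hB.add hPw).add ((hVl.add hPl).const_mul _)) fun ξ => le_trans ?_
      (le_re_Bintegrand_reflect _ _ _ _ hk.le hR ξ (congrFun hP ξ))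
  have hw := sobolevWeight_pos (-(1 / 2)) ξ
  rw [← mul_add, mul_left_comm, mul_add, div_eq_inv_mul (‖dotFt _ _ _‖ ^ 2), ← one_div]
  gcongr
  exacts [min_le_left _ _, min_le_right _ _]

lemma integral_sobolevWeight_mul_norm_sq_le (hΓ : Bornology.IsBounded Γ) (hk : 0 < k)
    (hε : ∀ ξ : R2, sobolevWeight (-(1 / 2)) ξ ≤
      ε * sobolevWeight (1 / 2) ξ + lowFreqWeight k R ξ)
    (P : Xelt Γ) (f₁ f₂ : HTildeElt (1 / 2) Γ) (h₁ : P.c1.ft = f₁.ft) (h₂ : P.c2.ft = f₂.ft) :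
    ∫ ξ, sobolevWeight (-(1 / 2)) ξ * (‖P.c1.ft ξ‖ ^ 2 + ‖P.c2.ft ξ‖ ^ 2) ≤
      ε * ((2 * π) ^ 2 * (‖f₁‖ ^ 2 + ‖f₂‖ ^ 2)) +
        ∫ ξ, lowFreqWeight k R ξ * (‖P.c1.ft ξ‖ ^ 2 + ‖P.c2.ft ξ‖ ^ 2) := by
  have hf₁ : Integrable fun ξ => sobolevWeight (1 / 2) ξ * ‖P.c1.ft ξ‖ ^ 2 := h₁ ▸ f₁.mem
  have hf₂ : Integrable fun ξ => sobolevWeight (1 / 2) ξ * ‖P.c2.ft ξ‖ ^ 2 := h₂ ▸ f₂.mem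
  have hPl := integrable_lowFreqWeight_mul_norm_sq hΓ hk R P
  have hnorm : (2 * π) ^ 2 * (‖f₁‖ ^ 2 + ‖f₂‖ ^ 2) = ∫ ξ,
      (sobolevWeight (1 / 2) ξ * ‖P.c1.ft ξ‖ ^ 2 + sobolevWeight (1 / 2) ξ * ‖P.c2.ft ξ‖ ^ 2) := by
    rw [integral_add hf₁ hf₂, HTildeElt.norm_sq_eq_wnormSq, HTildeElt.norm_sq_eq_wnormSq, ← h₁,
      ← h₂]
    simp only [wnormSq, sobolevWeight]
    field_simp
  rw [hnorm, ← integral_const_mul, ← integral_add (by exact (hf₁.add hf₂).const_mul ε) hPl]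
  refine integral_mono P.integrable_sobolevWeight_mul_norm_sq
    (((hf₁.add hf₂).const_mul ε).add hPl) fun ξ => ?_
  beta_reduce
  rw [← mul_add (sobolevWeight (1 / 2) ξ), ← mul_assoc, ← add_mul]
  exact mul_le_mul_of_nonneg_right (hε ξ) (by positivity)

lemma exists_integral_sobolevWeight_mul_norm_sq_le (hΓ : Bornology.IsBounded Γ) (hk : 0 < k)
    {S : Xelt Γ →L[ℂ] Xelt Γ} {T₁ T₂ : Xelt Γ →L[ℂ] HTildeElt (1 / 2) Γ}
    (h₁ : ∀ V, (S V).c1.ft = (T₁ V).ft) (h₂ : ∀ V, (S V).c2.ft = (T₂ V).ft)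
    {δ : ℝ} (hδ : 0 < δ) (R₀ : ℝ) :
    ∃ R ≥ R₀, ∀ V : Xelt Γ,
      ∫ ξ, sobolevWeight (-(1 / 2)) ξ * (‖(S V).c1.ft ξ‖ ^ 2 + ‖(S V).c2.ft ξ‖ ^ 2) ≤
        δ * ‖V‖ ^ 2 +
          ∫ ξ, lowFreqWeight k R ξ * (‖(S V).c1.ft ξ‖ ^ 2 + ‖(S V).c2.ft ξ‖ ^ 2) := by
  set τ := ‖T₁‖ ^ 2 + ‖T₂‖ ^ 2
  have hτ : 0 ≤ τ := by positivity
  obtain ⟨R, hR, hε⟩ := exists_sobolevWeight_neg_half_le k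
    (ε := δ / ((2 * π) ^ 2 * (τ + 1))) (by positivity) R₀
  refine ⟨R, hR, fun V => (integral_sobolevWeight_mul_norm_sq_le hΓ hk hε (S V) (T₁ V) (T₂ V)
    (h₁ V) (h₂ V)).trans (add_le_add_left ?_ _)⟩
  have hsmooth : ‖T₁ V‖ ^ 2 + ‖T₂ V‖ ^ 2 ≤ (τ + 1) * ‖V‖ ^ 2 := by
    have hle : ‖T₁ V‖ ^ 2 + ‖T₂ V‖ ^ 2 ≤ τ * ‖V‖ ^ 2 := by
      rw [add_mul, ← mul_pow, ← mul_pow]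
      gcongr <;> exact ContinuousLinearMap.le_opNorm _ V
    linarith [sq_nonneg ‖V‖]
  calc _ ≤ δ / ((2 * π) ^ 2 * (τ + 1)) * ((2 * π) ^ 2 * ((τ + 1) * ‖V‖ ^ 2)) := by gcongr
    _ = δ * ‖V‖ ^ 2 := by field_simp

lemma exists_garding (hΓ : IsLipschitzDomain Γ) (hk : 0 < k) :
    ∃ (S : Xelt Γ →L[ℂ] Xelt Γ) (R c C : ℝ), 0 < c ∧ ∀ V : Xelt Γ,
      c * ‖V‖ ^ 2 ≤ (Bform k V ((2 : ℂ) • S V - V)).re + C *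
        (‖restrictBall hΓ.2.1 R V‖ ^ 2 + ‖restrictBall hΓ.2.1 R (S V)‖ ^ 2) := by
  obtain ⟨S, T₁, T₂, hS⟩ := hΓ.exists_dotFt_eq
  set κ := min (1 / 2) (k ^ 2 / 2) * (2 * π) ^ 2
  have hκ : 0 < κ := by positivity
  obtain ⟨R, hR, hehrling⟩ := exists_integral_sobolevWeight_mul_norm_sq_le hΓ.2.1 hk
    (fun V => (hS V).1) (fun V => (hS V).2.1) (δ := κ / (8 * k ^ 2)) (by positivity) (2 * k + 1)
  set J := ∫ ξ, lowFreqWeight k R ξ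
  refine ⟨S, R, κ / 2, (4 * k ^ 2 + 4 * R ^ 2) * (2 * J), by positivity, fun V => ?_⟩
  have hcoercive := le_re_Bform_reflect hΓ.2.1 hk hR V (S V) (hS V).2.2
  have hSV := mul_le_mul_of_nonneg_left (hehrling V) (by positivity : 0 ≤ 4 * k ^ 2)
  have habsorb : 4 * k ^ 2 * (κ / (8 * k ^ 2) * ‖V‖ ^ 2) = κ / 2 * ‖V‖ ^ 2 := by
    field_simp
    ring
  have hlowV := mul_le_mul_of_nonneg_left (integral_lowFreqWeight_mul_norm_sq_le hΓ.2.1 hk R V)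
    (by positivity : 0 ≤ 4 * R ^ 2)
  have hlowS := mul_le_mul_of_nonneg_left
    (integral_lowFreqWeight_mul_norm_sq_le hΓ.2.1 hk R (S V))
    (by positivity : 0 ≤ 4 * k ^ 2 + 4 * R ^ 2)
  have hJ : 0 ≤ J := integral_nonneg (lowFreqWeight_nonneg k R)
  have hslack : 0 ≤ 4 * k ^ 2 * (J * (2 * ‖restrictBall hΓ.2.1 R V‖ ^ 2)) := by positivity
  linarith

end Xelt

/-! ### Uniqueness and Peetre's lemma -/

section Absorption

variable {k : ℝ} {ξ : R2}

lemma g0hat_of_lt (h : ‖ξ‖ < k) : g0hat k ξ = I * (‖g0hat k ξ‖ : ℂ) := by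
  rw [g0hat, if_pos h, norm_div, norm_I, norm_real, Real.norm_of_nonneg (Real.sqrt_nonneg _)]
  push_cast
  ring

variable {F₁ F₂ : R2 → ℂ}

lemma im_Bintegrand_self_of_lt (h : ‖ξ‖ < k) :
    (Bintegrand k F₁ F₂ F₁ F₂ ξ).im = -energyDensity k F₁ F₂ ξ := by
  have hsq : ‖ξ‖ ^ 2 ≤ k ^ 2 := by gcongr
  rw [Bintegrand, g0hat_of_lt h, energyDensity, abs_of_nonpos (sub_nonpos.2 hsq), mul_conj,
    mul_conj, normSq_eq_norm_sq, normSq_eq_norm_sq, div_ofReal_im, mul_assoc, I_mul_im,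
    re_ofReal_mul, sub_re, re_ofReal_mul, re_ofReal_mul, ofReal_re, ofReal_re]
  ring

lemma im_Bintegrand_self_of_le (h : k ≤ ‖ξ‖) : (Bintegrand k F₁ F₂ F₁ F₂ ξ).im = 0 := by
  rw [Bintegrand, g0hat_of_le h, mul_conj, mul_conj]
  norm_cast

lemma eq_zero_of_energyDensity_eq_zero (hξ : 0 < ‖ξ‖) (hξk : ‖ξ‖ < k)
    (h : energyDensity k F₁ F₂ ξ = 0) : F₁ ξ = 0 ∧ F₂ ξ = 0 := by
  have hsub : 0 < |‖ξ‖ ^ 2 - k ^ 2| := abs_pos.2 (by nlinarith)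
  have hk : 0 < k := hξ.trans hξk
  have hg : g0hat k ξ ≠ 0 := by
    have hsqrt : (√(k ^ 2 - ‖ξ‖ ^ 2) : ℂ) ≠ 0 :=
      ofReal_ne_zero.2 (Real.sqrt_ne_zero'.2 (by nlinarith))
    rw [g0hat, if_pos hξk]
    exact div_ne_zero I_ne_zero hsqrt
  have hsum : |‖ξ‖ ^ 2 - k ^ 2| * ‖dotFt F₁ F₂ ξ‖ ^ 2 + k ^ 2 * ‖curlFt F₁ F₂ ξ‖ ^ 2 = 0 := by
    simpa [energyDensity, hg, hξ.ne'] using h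
  obtain ⟨hdot, hcurl⟩ := (add_eq_zero_iff_of_nonneg (by positivity) (by positivity)).1 hsum
  have hF := norm_dotFt_sq_add_norm_curlFt_sq F₁ F₂ ξ
  rw [(mul_eq_zero.1 hdot).resolve_left hsub.ne',
    (mul_eq_zero.1 hcurl).resolve_left (by positivity), add_zero, eq_comm, mul_eq_zero] at hF
  obtain ⟨h₁, h₂⟩ := (add_eq_zero_iff_of_nonneg (sq_nonneg _) (sq_nonneg _)).1
    (hF.resolve_left (by positivity))
  exact ⟨norm_eq_zero.1 (pow_eq_zero_iff two_ne_zero |>.1 h₁),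
    norm_eq_zero.1 (pow_eq_zero_iff two_ne_zero |>.1 h₂)⟩

lemma ae_eq_zero_of_integral_Bintegrand_self_eq_zero
    (hint : Integrable (Bintegrand k F₁ F₂ F₁ F₂)) (h : ∫ ξ, Bintegrand k F₁ F₂ F₁ F₂ ξ = 0) :
    ∀ᵐ ξ : R2, ξ ∈ Metric.ball 0 k → F₁ ξ = 0 ∧ F₂ ξ = 0 := by
  have hnonneg : ∀ ξ, 0 ≤ -(Bintegrand k F₁ F₂ F₁ F₂ ξ).im := fun ξ => by
    rcases lt_or_ge ‖ξ‖ k with hξ | hξ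
    · rw [im_Bintegrand_self_of_lt hξ, neg_neg]
      exact energyDensity_nonneg k F₁ F₂ ξ
    · rw [im_Bintegrand_self_of_le hξ, neg_zero]
  have him : ∫ ξ, -(Bintegrand k F₁ F₂ F₁ F₂ ξ).im = 0 := by
    rw [integral_neg, neg_eq_zero]
    exact (integral_im hint).trans (by rw [h]; rfl)
  filter_upwards [(integral_eq_zero_iff_of_nonneg hnonneg hint.im.neg).1 him,
    compl_mem_ae_iff.2 (measure_singleton (0 : R2))] with ξ hzero hξ hball
  have hξk := mem_ball_zero_iff.1 hball
  rw [im_Bintegrand_self_of_lt hξk, neg_neg] at hzero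
  exact eq_zero_of_energyDensity_eq_zero (norm_pos_iff.2 hξ) hξk hzero

lemma HTildeElt.eq_zero_of_ae_eq_zero_on_ball {s : ℝ} {Γ : Set R2} (hΓ : Bornology.IsBounded Γ)
    (hk : 0 < k) (f : HTildeElt s Γ) (hf : ∀ᵐ ξ, ξ ∈ Metric.ball 0 k → f.ft ξ = 0) : f = 0 := by
  have hball : Set.EqOn f.ft 0 (Metric.ball 0 k) :=
    Measure.eqOn_open_of_ae_eq ((ae_restrict_iff' measurableSet_ball).2 hf) Metric.isOpen_ball
      f.cont.continuousOn continuousOn_const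
  exact ft_injective (f.ftSupportedIn.eq_zero_of_eq_zero_on_ball hΓ.closure f.cont f.memHs hk
    fun ξ hξ => hball (mem_ball_zero_iff.2 hξ))

lemma Xelt.eq_zero_of_Bform_self_eq_zero {Γ : Set R2} (hΓ : Bornology.IsBounded Γ) (hk : 0 < k)
    {W : Xelt Γ} (h : Bform k W W = 0) : W = 0 := by
  have hae := ae_eq_zero_of_integral_Bintegrand_self_eq_zero (integrable_Bintegrand hΓ hk W W) h
  exact Xelt.ext
    (W.c1.eq_zero_of_ae_eq_zero_on_ball hΓ hk (hae.mono fun ξ hξ hball => (hξ hball).1))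
    (W.c2.eq_zero_of_ae_eq_zero_on_ball hΓ hk (hae.mono fun ξ hξ hball => (hξ hball).2))

end Absorption

section Peetre

variable {𝕜 E F G : Type*} [RCLike 𝕜] [NormedAddCommGroup E] [NormedSpace 𝕜 E]
  [NormedAddCommGroup F] [NormedSpace 𝕜 F] [NormedAddCommGroup G] [NormedSpace 𝕜 G]

lemma exists_antilipschitzWith_prod (A : E →L[𝕜] F) (K : E →L[𝕜] G) {a b c : ℝ} (hc : 0 < c)
    (h : ∀ x, c * ‖x‖ ^ 2 ≤ a * (‖x‖ * ‖A x‖) + b * ‖K x‖ ^ 2) :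
    ∃ C, AntilipschitzWith C (A.prod K) := by
  let C : ℝ≥0 := ((|a| + |b|) / c + 1).toNNReal
  have hC : (C : ℝ) = (|a| + |b|) / c + 1 := Real.coe_toNNReal _ (by positivity)
  refine ⟨C, (A.prod K).antilipschitz_of_bound fun x => ?_⟩
  have hA : ‖A x‖ ≤ ‖A.prod K x‖ := norm_fst_le (A.prod K x)
  have hK : ‖K x‖ ≤ ‖A.prod K x‖ := norm_snd_le (A.prod K x)
  set m := ‖A.prod K x‖
  have hm : 0 ≤ m := norm_nonneg _
  by_contra! hlt
  have hab : 0 ≤ |a| + |b| := by positivity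
  rw [hC, add_mul, one_mul] at hlt
  have hfrac : 0 ≤ (|a| + |b|) / c * m := by positivity
  have hx : 0 < ‖x‖ := by linarith
  have hquad : c * ‖x‖ * ‖x‖ ≤ (|a| + |b|) * m * ‖x‖ :=
    calc c * ‖x‖ * ‖x‖ ≤ a * (‖x‖ * ‖A x‖) + b * ‖K x‖ ^ 2 := by linarith [h x]
      _ ≤ |a| * (‖x‖ * m) + |b| * (m * ‖x‖) := by
        rw [sq]
        gcongr
        · exact le_abs_self a
        · exact le_abs_self b
        · linarith
      _ = (|a| + |b|) * m * ‖x‖ := by ring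
  have hlin := le_of_mul_le_mul_right hquad hx
  rw [mul_comm c, ← le_div_iff₀ hc, mul_div_right_comm] at hlin
  linarith

lemma exists_norm_eq_one_of_not_antilipschitzWith {A : E →L[𝕜] F} {C : ℝ≥0}
    (hA : ¬AntilipschitzWith C A) : ∃ x, ‖x‖ = 1 ∧ C * ‖A x‖ < 1 := by
  obtain ⟨x, hx⟩ : ∃ x, C * ‖A x‖ < ‖x‖ := by
    by_contra! hbound
    exact hA (A.antilipschitz_of_bound hbound)
  have hx0 : 0 < ‖x‖ := (by positivity : 0 ≤ C * ‖A x‖).trans_lt hx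
  refine ⟨(‖x‖⁻¹ : 𝕜) • x, norm_smul_inv_norm (norm_pos_iff.1 hx0), ?_⟩
  rw [map_smul, norm_smul, norm_inv, RCLike.norm_ofReal, abs_norm, mul_left_comm,
    inv_mul_lt_one₀ hx0]
  exact hx

lemma exists_antilipschitzWith_of_isCompactOperator [CompleteSpace E] {A : E →L[𝕜] F}
    {K : E →L[𝕜] G} {c : ℝ≥0} (hA : Function.Injective A) (hK : IsCompactOperator K)
    (hAK : AntilipschitzWith c (A.prod K)) : ∃ C, AntilipschitzWith C A := by
  by_contra! hnot
  have hunit (n : ℕ) : ∃ x : E, ‖x‖ = 1 ∧ ‖A x‖ ≤ 1 / ((n : ℝ) + 1) := by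
    obtain ⟨x, hx, hlt⟩ := exists_norm_eq_one_of_not_antilipschitzWith (hnot (n + 1))
    refine ⟨x, hx, (le_div_iff₀' (by positivity)).2 ?_⟩
    exact_mod_cast hlt.le
  choose x hx hAx using hunit
  have hAlim : Tendsto (fun n => A (x n)) atTop (𝓝 0) :=
    squeeze_zero_norm hAx tendsto_one_div_add_atTop_nhds_zero_nat
  obtain ⟨L, hL, hKL⟩ := hK.image_subset_compact_of_bounded (S := Metric.sphere 0 1)
    Metric.isBounded_sphere
  obtain ⟨y, -, φ, hφ, hKlim⟩ := hL.tendsto_subseq fun n =>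
    hKL (Set.mem_image_of_mem K (mem_sphere_zero_iff_norm.2 (hx n)))
  have hclosed := hAK.isClosedEmbedding (A.prod K).uniformContinuous
  have hlim : Tendsto (A.prod K ∘ x ∘ φ) atTop (𝓝 (0, y)) :=
    (hAlim.comp hφ.tendsto_atTop).prodMk_nhds hKlim
  obtain ⟨z, hz⟩ := hclosed.isClosed_range.mem_of_tendsto hlim (.of_forall fun n => ⟨x (φ n), rfl⟩)
  have hxz : Tendsto (x ∘ φ) atTop (𝓝 z) := hclosed.tendsto_nhds_iff.2 (hz ▸ hlim)
  have hz0 : z = 0 := hA ((congrArg Prod.fst hz).trans (map_zero A).symm)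
  have hz1 : ‖z‖ = 1 := tendsto_nhds_unique hxz.norm (by simp [hx])
  rw [hz0, norm_zero] at hz1
  exact zero_ne_one hz1

end Peetre

lemma bijective_of_antilipschitzWith_of_inner_self_eq_zero {H : Type*} [NormedAddCommGroup H]
    [InnerProductSpace ℂ H] [CompleteSpace H] {A : H →L[ℂ] H} {c : ℝ≥0} (hA : AntilipschitzWith c A)
    (hinner : ∀ x, inner ℂ x (A x) = 0 → x = 0) : Function.Bijective A := by
  refine A.bijective_iff_dense_range_and_antilipschitz.2 ⟨?_, c, hA⟩
  rw [Submodule.topologicalClosure_eq_top_iff, Submodule.eq_bot_iff]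
  exact fun y hy =>
    hinner y (Submodule.inner_left_of_mem_orthogonal (LinearMap.mem_range_self _ y) hy)

namespace Xelt

variable {Γ : Set R2} {k : ℝ}

lemma exists_antilipschitzWith (hΓ : IsLipschitzDomain Γ) (hk : 0 < k) {A : Xelt Γ →L[ℂ] Xelt Γ}
    (hA : ∀ W V : Xelt Γ, inner ℂ V (A W) = Bform k W V) (hinj : Function.Injective A) :
    ∃ C, AntilipschitzWith C A := by
  have := completeSpace hΓ.2.1
  obtain ⟨S, R, c, C, hc, hgarding⟩ := exists_garding hΓ hk
  have hcompact := isCompactOperator_restrictBall hΓ.2.1 R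
  let T : Xelt Γ →L[ℂ] Xelt Γ := (2 : ℂ) • S - .id ℂ _
  let K := (restrictBall hΓ.2.1 R).prod ((restrictBall hΓ.2.1 R).comp S)
  obtain ⟨M, hM⟩ := exists_antilipschitzWith_prod A K (a := ‖T‖) (b := 2 * |C|) hc fun V => by
    have hre : (Bform k V (T V)).re ≤ ‖T‖ * (‖V‖ * ‖A V‖) := by
      rw [← hA, ← mul_assoc]
      exact (re_le_norm _).trans ((norm_inner_le_norm _ _).trans
        (mul_le_mul_of_nonneg_right (T.le_opNorm V) (norm_nonneg _)))
    have hK₁ : ‖restrictBall hΓ.2.1 R V‖ ^ 2 ≤ ‖K V‖ ^ 2 := by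
      gcongr
      exact norm_fst_le (K V)
    have hK₂ : ‖restrictBall hΓ.2.1 R (S V)‖ ^ 2 ≤ ‖K V‖ ^ 2 := by
      gcongr
      exact norm_snd_le (K V)
    calc c * ‖V‖ ^ 2 ≤ _ := hgarding V
      _ ≤ ‖T‖ * (‖V‖ * ‖A V‖) + |C| * (‖K V‖ ^ 2 + ‖K V‖ ^ 2) := by
        gcongr
        · exact hre
        · exact le_abs_self C
      _ = ‖T‖ * (‖V‖ * ‖A V‖) + 2 * |C| * ‖K V‖ ^ 2 := by ring
  exact exists_antilipschitzWith_of_isCompactOperator hinj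
    (isCompactOperator_prodMk hcompact (hcompact.comp_clm S)) hM

end Xelt

/-- Theorem 3.7, well-posedness: for every bounded conjugate-linear
functional `Y` on `X` (represented via Riesz as `V ↦ Xinner Y V`, `Y ∈ X`, with
`‖Y‖_{X*} = ‖Y‖_X`) there is a unique `W ∈ X` with `B(W,V) = ⟨Y,V⟩` for all `V ∈ X`,
and `‖W‖_X ≤ C ‖Y‖_{X*}` with `C` independent of `Y`. -/
theorem statement11 (Γ : Set R2) (hΓ : IsLipschitzDomain Γ) (k : ℝ) (hk : 0 < k) :
    ∃ C > 0, ∀ Y : Xelt Γ,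
      (∃! W : Xelt Γ, ∀ V : Xelt Γ, Bform k W V = Xinner Y V) ∧
      (∀ W : Xelt Γ, (∀ V : Xelt Γ, Bform k W V = Xinner Y V) →
        Xnorm W ≤ C * Xnorm Y) := by
  have := Xelt.completeSpace hΓ.2.1
  obtain ⟨A, hA⟩ := exists_inner_eq_Bform hΓ.2.1 hk
  have hself : ∀ W : Xelt Γ, inner ℂ W (A W) = 0 → W = 0 := fun W hW =>
    Xelt.eq_zero_of_Bform_self_eq_zero hΓ.2.1 hk ((hA W W).symm.trans hW)
  have hinj : Function.Injective A := (injective_iff_map_eq_zero A).2 fun W hW =>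
    hself W (by rw [hW, inner_zero_right])
  obtain ⟨C, hC⟩ := Xelt.exists_antilipschitzWith hΓ hk hA hinj
  have hsurj := (bijective_of_antilipschitzWith_of_inner_self_eq_zero hC hself).surjective
  have hiff (Y W : Xelt Γ) : (∀ V : Xelt Γ, Bform k W V = Xinner Y V) ↔ A W = Y := by
    simp only [← hA, Xelt.Xinner_eq_inner]
    exact ⟨ext_inner_left ℂ, fun h V => by rw [h]⟩
  refine ⟨C + 1, by positivity, fun Y => ⟨?_, fun W hW => ?_⟩⟩
  · simp only [hiff]
    exact (Function.bijective_iff_existsUnique A).1 ⟨hinj, hsurj⟩ Y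
  · rw [Xelt.Xnorm_eq_norm, Xelt.Xnorm_eq_norm, ← (hiff Y W).1 hW]
    have hbound := hC.le_mul_norm (map_zero A) W
    linarith [norm_nonneg (A W)]

end
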